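/- For every integer j with 0 ≤ j < 12, the space S_{j,2}(Γ₂[2]) of Siegel cusp forms of degree 2 and weight (j,2) on the principal congruence subgroup Γ₂[2] of level 2 is zero; in particular every S₆-isotypic component of S_{j,2}(Γ₂[2]) vanishes for j < 12. -/

import Mathlib

noncomputable section

open Matrix Complex Filter Topology

/-- The standard symplectic form matrix of size 4. -/
def J4 : Matrix (Fin 4) (Fin 4) ℤ := !![0,0,1,0; 0,0,0,1; -1,0,0,0; 0,-1,0,0]

/-- The Siegel modular group `Γ₂ = Sp(4,ℤ)`, as a set of 4×4 integer matrices. -/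
def Sp4Z : Set (Matrix (Fin 4) (Fin 4) ℤ) := {γ | γᵀ * J4 * γ = J4}

/-- The principal congruence subgroup `Γ₂[2]` of level 2. -/
def Sp4Z2 : Set (Matrix (Fin 4) (Fin 4) ℤ) :=
  {γ | γ ∈ Sp4Z ∧ ∀ i j, ((γ i j : ZMod 2) = if i = j then 1 else 0)}

/-- The Siegel upper half space of degree 2: symmetric 2×2 complex matrices with
positive definite imaginary part (encoded as functions `Fin 2 → Fin 2 → ℂ`). -/
def H2 : Set (Fin 2 → Fin 2 → ℂ) :=
  {τ | (Matrix.of τ).IsSymm ∧ (Matrix.of fun i j => (τ i j).im).PosDef}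

/-- The four 2×2 blocks of a 4×4 integer matrix, as complex matrices. -/
def blk (γ : Matrix (Fin 4) (Fin 4) ℤ) (r s : Fin 2) : Matrix (Fin 2) (Fin 2) ℂ :=
  Matrix.of fun i j =>
    ((γ ⟨2 * (r : ℕ) + (i : ℕ), by have h1 := r.isLt; have h2 := i.isLt; omega⟩
        ⟨2 * (s : ℕ) + (j : ℕ), by have h1 := s.isLt; have h2 := j.isLt; omega⟩ : ℤ) : ℂ)

/-- The factor `cτ + d`. -/
def den (γ : Matrix (Fin 4) (Fin 4) ℤ) (τ : Fin 2 → Fin 2 → ℂ) : Matrix (Fin 2) (Fin 2) ℂ :=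
  blk γ 1 0 * Matrix.of τ + blk γ 1 1

/-- The action `γ·τ = (aτ+b)(cτ+d)⁻¹` of `Sp(4)` on the Siegel upper half space. -/
def moeb (γ : Matrix (Fin 4) (Fin 4) ℤ) (τ : Fin 2 → Fin 2 → ℂ) : Fin 2 → Fin 2 → ℂ :=
  fun i j => ((blk γ 0 0 * Matrix.of τ + blk γ 0 1) * (den γ τ)⁻¹) i j

/-- Matrix coefficients of the `j`-th symmetric power of the standard representation of
`GL(2,ℂ)`, in the basis `x₁^(j-i) x₂^i`. -/
def symCoeff (j : ℕ) (m : Matrix (Fin 2) (Fin 2) ℂ) (l i : Fin (j + 1)) : ℂ :=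
  (((Polynomial.C (m 0 0) + Polynomial.C (m 1 0) * Polynomial.X) ^ (j - (l : ℕ)) *
    (Polynomial.C (m 0 1) + Polynomial.C (m 1 1) * Polynomial.X) ^ (l : ℕ)).coeff i)

/-- The `j`-th symmetric power `Sym^j(m)` acting on coordinate vectors. -/
def symAct (j : ℕ) (m : Matrix (Fin 2) (Fin 2) ℂ) (v : Fin (j + 1) → ℂ) : Fin (j + 1) → ℂ :=
  fun i => ∑ l, symCoeff j m l i * v l

lemma symAct_add (j : ℕ) (m : Matrix (Fin 2) (Fin 2) ℂ) (v w : Fin (j + 1) → ℂ) :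
    symAct j m (v + w) = symAct j m v + symAct j m w := by
  funext i
  simp [symAct, mul_add, Finset.sum_add_distrib]

lemma symAct_smul (j : ℕ) (m : Matrix (Fin 2) (Fin 2) ℂ) (a : ℂ) (v : Fin (j + 1) → ℂ) :
    symAct j m (a • v) = a • symAct j m v := by
  funext i
  simp only [symAct, Pi.smul_apply, smul_eq_mul, Finset.mul_sum]
  exact Finset.sum_congr rfl fun l _ => by ring

lemma symAct_zero (j : ℕ) (m : Matrix (Fin 2) (Fin 2) ℂ) : symAct j m 0 = 0 := by
  funext i; simp [symAct]

/-- The weight `(j,k)` automorphy action `Sym^j(m) ⊗ det(m)^k`. -/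
def wt (j : ℕ) (k : ℤ) (m : Matrix (Fin 2) (Fin 2) ℂ) (v : Fin (j + 1) → ℂ) :
    Fin (j + 1) → ℂ :=
  (m.det ^ k) • symAct j m v

lemma wt_add (j : ℕ) (k : ℤ) (m : Matrix (Fin 2) (Fin 2) ℂ) (v w : Fin (j + 1) → ℂ) :
    wt j k m (v + w) = wt j k m v + wt j k m w := by
  simp [wt, symAct_add, smul_add]

lemma wt_smul (j : ℕ) (k : ℤ) (m : Matrix (Fin 2) (Fin 2) ℂ) (a : ℂ) (v : Fin (j + 1) → ℂ) :
    wt j k m (a • v) = a • wt j k m v := by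
  rw [wt, wt, symAct_smul, smul_comm]

lemma wt_zero (j : ℕ) (k : ℤ) (m : Matrix (Fin 2) (Fin 2) ℂ) : wt j k m 0 = 0 := by
  simp [wt, symAct_zero]

/-- The slash operation `(F|γ)(τ) = Sym^j(cτ+d)⁻¹ det(cτ+d)⁻ᵏ F(γ·τ)`. -/
def slashS (j : ℕ) (k : ℤ) (γ : Matrix (Fin 4) (Fin 4) ℤ)
    (F : (Fin 2 → Fin 2 → ℂ) → (Fin (j + 1) → ℂ)) (τ : Fin 2 → Fin 2 → ℂ) :
    Fin (j + 1) → ℂ :=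
  ((den γ τ).det ^ (-k)) • symAct j ((den γ τ)⁻¹) (F (moeb γ τ))

lemma slashS_add (j : ℕ) (k : ℤ) (γ : Matrix (Fin 4) (Fin 4) ℤ)
    (F G : (Fin 2 → Fin 2 → ℂ) → (Fin (j + 1) → ℂ)) (τ : Fin 2 → Fin 2 → ℂ) :
    slashS j k γ (F + G) τ = slashS j k γ F τ + slashS j k γ G τ := by
  simp [slashS, symAct_add, smul_add]

lemma slashS_smul (j : ℕ) (k : ℤ) (γ : Matrix (Fin 4) (Fin 4) ℤ) (a : ℂ)
    (F : (Fin 2 → Fin 2 → ℂ) → (Fin (j + 1) → ℂ)) (τ : Fin 2 → Fin 2 → ℂ) :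
    slashS j k γ (a • F) τ = a • slashS j k γ F τ := by
  simp only [slashS, Pi.smul_apply, symAct_smul]
  rw [smul_comm]

lemma slashS_zero (j : ℕ) (k : ℤ) (γ : Matrix (Fin 4) (Fin 4) ℤ) (τ : Fin 2 → Fin 2 → ℂ) :
    slashS j k γ (0 : (Fin 2 → Fin 2 → ℂ) → (Fin (j + 1) → ℂ)) τ = 0 := by
  simp [slashS, symAct_zero]

/-- The diagonal point `diag(τ₁,τ₂)` of the Siegel upper half space. -/
def diagH (τ₁ τ₂ : ℂ) : Fin 2 → Fin 2 → ℂ :=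
  fun i j => if i = j then (if i = 0 then τ₁ else τ₂) else 0

/-- `F` is a Siegel cusp form of degree 2 and weight `(j,k)` on `Γ`, with character `χ`:
holomorphic on `ℍ₂`, transforming by `F(γ·τ) = χ(γ) Sym^j(cτ+d) det(cτ+d)^k F(τ)` for `γ ∈ Γ`,
with `(F|γ)(diag(τ₁,it)) → 0` as `t → ∞` for every `γ ∈ Γ₂`, and (normalization) vanishing
off `ℍ₂`. -/
def IsSiegelCuspForm (j : ℕ) (k : ℤ) (Γ : Set (Matrix (Fin 4) (Fin 4) ℤ))
    (χ : Matrix (Fin 4) (Fin 4) ℤ → ℂ)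
    (F : (Fin 2 → Fin 2 → ℂ) → (Fin (j + 1) → ℂ)) : Prop :=
  DifferentiableOn ℂ F H2 ∧
  (∀ γ ∈ Γ, ∀ τ ∈ H2, F (moeb γ τ) = χ γ • wt j k (den γ τ) (F τ)) ∧
  (∀ γ ∈ Sp4Z, ∀ τ₁ : ℂ, 0 < τ₁.im →
    Tendsto (fun t : ℝ => slashS j k γ F (diagH τ₁ (t * Complex.I))) atTop (𝓝 0)) ∧
  (∀ τ, τ ∉ H2 → F τ = 0)

/-- The space `S_{j,k}(Γ, χ)` of Siegel cusp forms of degree 2 and weight `(j,k)` on `Γ`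
with character `χ`, as a complex vector space. -/
def SiegelCusp (j : ℕ) (k : ℤ) (Γ : Set (Matrix (Fin 4) (Fin 4) ℤ))
    (χ : Matrix (Fin 4) (Fin 4) ℤ → ℂ) :
    Submodule ℂ ((Fin 2 → Fin 2 → ℂ) → (Fin (j + 1) → ℂ)) where
  carrier := {F | IsSiegelCuspForm j k Γ χ F}
  add_mem' := by
    rintro F G hF hG
    refine ⟨hF.1.add hG.1, ?_, ?_, ?_⟩
    · intro γ hγ τ hτ
      show F (moeb γ τ) + G (moeb γ τ) = χ γ • wt j k (den γ τ) (F τ + G τ)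
      rw [wt_add, smul_add, hF.2.1 γ hγ τ hτ, hG.2.1 γ hγ τ hτ]
    · intro γ hγ τ₁ hτ
      have h := (hF.2.2.1 γ hγ τ₁ hτ).add (hG.2.2.1 γ hγ τ₁ hτ)
      rw [add_zero] at h
      exact h.congr fun t => (slashS_add j k γ F G _).symm
    · intro τ hτ
      show F τ + G τ = 0
      rw [hF.2.2.2 τ hτ, hG.2.2.2 τ hτ, add_zero]
  zero_mem' := by
    refine ⟨?_, ?_, ?_, ?_⟩
    · exact differentiableOn_const 0
    · intro γ hγ τ hτ
      show (0 : Fin (j + 1) → ℂ) = χ γ • wt j k (den γ τ) 0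
      rw [wt_zero, smul_zero]
    · intro γ hγ τ₁ hτ
      have : (fun t : ℝ => slashS j k γ (0 : (Fin 2 → Fin 2 → ℂ) → (Fin (j + 1) → ℂ))
          (diagH τ₁ (t * Complex.I))) = fun _ => 0 := by
        funext t; exact slashS_zero j k γ _
      rw [this]
      exact tendsto_const_nhds
    · intro τ _; rfl
  smul_mem' := by
    rintro a F hF
    refine ⟨hF.1.const_smul a, ?_, ?_, ?_⟩
    · intro γ hγ τ hτ
      show a • F (moeb γ τ) = χ γ • wt j k (den γ τ) (a • F τ)
      rw [hF.2.1 γ hγ τ hτ, wt_smul, smul_comm]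
    · intro γ hγ τ₁ hτ
      have h := (hF.2.2.1 γ hγ τ₁ hτ).const_smul a
      rw [smul_zero] at h
      exact h.congr fun t => (slashS_smul j k γ a F _).symm
    · intro τ hτ
      show a • F τ = 0
      rw [hF.2.2.2 τ hτ, smul_zero]

/-- `ε` is (on `Γ₂`) the unique nontrivial homomorphism `Γ₂ → {±1}`. -/
def IsEps (ε : Matrix (Fin 4) (Fin 4) ℤ → ℂ) : Prop :=
  (∀ γ ∈ Sp4Z, ε γ = 1 ∨ ε γ = -1) ∧
  (∀ γ ∈ Sp4Z, ∀ δ ∈ Sp4Z, ε (γ * δ) = ε γ * ε δ) ∧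
  (∃ γ ∈ Sp4Z, ε γ ≠ 1)

/-! For odd `j` the matrix `-1 ∈ Γ₂[2]` acts by `(-1)^j`; so let `j ≤ 10` and let `F` be a cusp form
of weight `(j, 2)`. The functions `F|γ`, with `γ` running over `Sp(4, ℤ/2ℤ)`, form a finite family
permuted by `Sp(4, ℤ)`. By Koecher's principle and cuspidality their Fourier coefficients
`a(m, b, n)` at `e^{πi(mτ + bz + nσ)}` vanish unless `m, n ≥ 1`, and then `|b| < m + n`.

In the `i`-th component, the `k`-th Taylor coefficients at `z = 0` of the `m`-th Fourier–Jacobi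
coefficients, that is the moments `∑_b b^k a(m, b, n)`, form a finite family of modular forms in `σ`
of weight `2 + i + k` under `SL(2, ℤ)`, as soon as the preceding moments vanish. Such a family of
weight `w` in which the coefficients of `e^{πinσ}` with `n < M` vanish is zero if `w ≤ 5 M`: compare
its supremum on the fundamental domain with that on a lower horizontal line.

Conversely, `m + 1` vanishing moments kill the coefficients `a(m, b, n)` with `|b| ≤ m`, to which
the unipotent substitutions reduce everything. Applied to the vector-valued `a(1, b, 1)`, regarded
as polynomials of degree at most `j ≤ 10`, the same substitutions force more zeros than the degree
allows. This starts an induction on `k` showing that all moments vanish. -/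

theorem eq_zero_of_prod_X_sub_C_pow_dvd {K κ : Type*} [Field K] [Fintype κ] {c : κ → K}
    (hc : Function.Injective c) (r : κ → ℕ) {p : Polynomial K}
    (hdvd : ∀ u, (Polynomial.X - Polynomial.C (c u)) ^ r u ∣ p)
    (hp : ∀ i, ∑ u, r u ≤ i → p.coeff i = 0) : p = 0 := by
  have hprod : ∏ u, (Polynomial.X - Polynomial.C (c u)) ^ r u ∣ p :=
    Finset.prod_dvd_of_coprime
      (fun u _ v _ huv => (Polynomial.pairwise_coprime_X_sub_C hc huv).pow) fun u _ => hdvd u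
  refine Polynomial.eq_zero_of_dvd_of_degree_lt hprod ?_
  have hdeg : (∏ u, (Polynomial.X - Polynomial.C (c u)) ^ r u).degree =
      ((∑ u, r u : ℕ) : WithBot ℕ) := by
    simp [Polynomial.degree_prod]
  rw [hdeg, Polynomial.degree_lt_iff_coeff_zero]
  exact hp

theorem comp_X_add_C_comp_X_sub_C {R : Type*} [CommRing R] (p : Polynomial R) (c : R) :
    (p.comp (Polynomial.X + Polynomial.C c)).comp (Polynomial.X - Polynomial.C c) = p := by
  simp [Polynomial.comp_assoc]

theorem X_sub_C_pow_dvd_of_X_pow_dvd_comp {R : Type*} [CommRing R] {p : Polynomial R} {c : R}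
    {r : ℕ} (h : Polynomial.X ^ r ∣ p.comp (Polynomial.X + Polynomial.C c)) :
    (Polynomial.X - Polynomial.C c) ^ r ∣ p := by
  obtain ⟨q, hq⟩ := h
  refine ⟨q.comp (Polynomial.X - Polynomial.C c), ?_⟩
  rw [← comp_X_add_C_comp_X_sub_C p c, hq]
  simp

theorem eq_zero_of_sum_pow_mul_eq_zero {R κ : Type*} [CommRing R] [IsDomain R] {s : Finset κ}
    {p f : κ → R} (hp : Set.InjOn p s) (h : ∀ k < s.card, ∑ b ∈ s, p b ^ k * f b = 0)
    {b : κ} (hb : b ∈ s) : f b = 0 := by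
  let e := s.equivFin
  have hinj : Function.Injective fun i => p (e.symm i) := fun i i' hii' =>
    e.symm.injective (Subtype.ext (hp (e.symm i).2 (e.symm i').2 hii'))
  have hzero := Matrix.eq_zero_of_forall_pow_sum_mul_pow_eq_zero (v := fun i => f (e.symm i))
    hinj fun k => by
      rw [← h k k.2, ← s.sum_coe_sort, ← e.symm.sum_comp]
      exact Finset.sum_congr rfl fun i _ => mul_comm _ _
  simpa using congrFun hzero (e ⟨b, hb⟩)

theorem card_filter_le_of_abs_le_of_dvd_sub (s : Finset ℤ) (m : ℕ) (b : ℤ) :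
    (s.filter fun c => |c| ≤ (m : ℤ) ∧ (2 : ℤ) ∣ c - b).card ≤ m + 1 := by
  have h : (s.filter fun c => |c| ≤ (m : ℤ) ∧ (2 : ℤ) ∣ c - b).card ≤
      (Finset.Icc (0 : ℤ) m).card := by
    refine Finset.card_le_card_of_injOn (fun c => (c + m) / 2) (fun c hc => ?_)
      fun c hc d hd hcd => ?_
    · simp only [Finset.coe_filter, Set.mem_ofPred_eq, abs_le] at hc
      simp only [Finset.coe_Icc, Set.mem_Icc]
      omega
    · simp only [Finset.coe_filter, Set.mem_ofPred_eq, abs_le] at hc hd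
      change (c + m) / 2 = (d + m) / 2 at hcd
      omega
  simpa using h

/- The integers in `[-m, m]` of a given parity are at most `m + 1` in number, so `m + 1` moments
of the even and of the odd part of `f` already form an injective Vandermonde system. -/
theorem eq_zero_of_signed_moments_eq_zero {K : Type*} [Field K] [CharZero K] {f : ℤ → K} {m : ℕ}
    (s : Finset ℤ) (hf : ∀ b, f b ≠ 0 → b ∈ s ∧ |b| ≤ m)
    (h : ∀ k ≤ m, ∑ b ∈ s, (b : K) ^ k * f b = 0)
    (h' : ∀ k ≤ m, ∑ b ∈ s, (b : K) ^ k * ((-1) ^ b * f b) = 0) : f = 0 := by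
  funext b
  by_contra hb
  obtain ⟨hbs, hbm⟩ := hf b hb
  refine hb (eq_zero_of_sum_pow_mul_eq_zero (s := s.filter fun c => |c| ≤ (m : ℤ) ∧ (2 : ℤ) ∣ c - b)
    (p := fun c : ℤ => (c : K)) Int.cast_injective.injOn (fun k hk => ?_) (by simp [hbs, hbm]))
  have hk' : k ≤ m := by have := card_filter_le_of_abs_le_of_dvd_sub s m b; omega
  have hsum : ∑ c ∈ s, (1 + (-1 : K) ^ (b + c)) * ((c : K) ^ k * f c) = 0 := by
    calc _ = ∑ c ∈ s, (c : K) ^ k * f c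
            + (-1) ^ b * ∑ c ∈ s, (c : K) ^ k * ((-1) ^ c * f c) := by
          rw [Finset.mul_sum, ← Finset.sum_add_distrib]
          refine Finset.sum_congr rfl fun c _ => ?_
          rw [zpow_add₀ (by simp)]
          ring
      _ = 0 := by rw [h k hk', h' k hk', mul_zero, add_zero]
  refine (mul_eq_zero.1 (?_ : (2 : K) * _ = 0)).resolve_left two_ne_zero
  rw [← hsum, Finset.mul_sum, Finset.sum_filter]
  refine Finset.sum_congr rfl fun c _ => ?_
  split_ifs with hc
  · rw [Even.neg_one_zpow (by rw [Int.even_iff]; omega), one_add_one_eq_two]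
  · by_cases hfc : f c = 0
    · simp [hfc]
    · have hodd : Odd (b + c) := by
        have := (hf c hfc).2
        rw [Int.odd_iff]
        omega
      rw [hodd.neg_one_zpow, add_neg_cancel, zero_mul]

/-- The polynomial `∑_{i ≤ j} a x i m b n Xⁱ`: the vector-valued Fourier coefficient at
`[m, b/2, n]`, with `Sym^j(ℂ²)` realised as polynomials of degree at most `j`. -/
def coeffPoly {ι : Type*} (j : ℕ) (a : ι → ℕ → ℤ → ℤ → ℤ → ℂ) (x : ι) (m b n : ℤ) :
    Polynomial ℂ :=
  ∑ i ∈ Finset.range (j + 1), Polynomial.C (a x i m b n) * Polynomial.X ^ i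

/-- The moment `∑_b bᵏ a x i m b n`, over the range in which the coefficients of a cusp form can
be nonzero. Up to a constant it is the `n`-th coefficient of the `k`-th derivative at `z = 0` of
the `m`-th Fourier–Jacobi coefficient. -/
def moment {ι : Type*} (a : ι → ℕ → ℤ → ℤ → ℤ → ℂ) (x : ι) (i k : ℕ) (m n : ℤ) : ℂ :=
  ∑ b ∈ Finset.Icc (-(m + n)) (m + n), (b : ℂ) ^ k * a x i m b n

/-- The transformation properties of the Fourier coefficients `a x i m b n` (component `i` of the
coefficient at `[m, b/2, n]`) of the translates `F|γ`, indexed by `x`, of a modular form of degree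
`2` and level `2`, under `τ ↦ uτuᵗ` for `u` unipotent and for `u` the transposition of coordinates,
and under `z ↦ z + 1`. -/
structure IsCoeffSystem {ι : Type*} (j : ℕ) (a : ι → ℕ → ℤ → ℤ → ℤ → ℂ) : Prop where
  deg : ∀ x i m b n, j < i → a x i m b n = 0
  shift : ∀ x (s : ℤ), ∃ y, ∀ m b n,
    coeffPoly j a y (m + s * b + s ^ 2 * n) (b + 2 * s * n) n
      = (coeffPoly j a x m b n).comp (Polynomial.X + Polynomial.C (s : ℂ))
  swap : ∀ x, ∃ y, ∀ i ≤ j, ∀ m b n, a x i m b n = a y (j - i) n b m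
  sign : ∀ x, ∃ y, ∀ i m b n, a y i m b n = (-1 : ℂ) ^ b * a x i m b n

namespace IsCoeffSystem

variable {ι : Type*} {j : ℕ} {a : ι → ℕ → ℤ → ℤ → ℤ → ℂ}

lemma coeff_coeffPoly (h : IsCoeffSystem j a) (x : ι) (m b n : ℤ) (i : ℕ) :
    (coeffPoly j a x m b n).coeff i = a x i m b n := by
  rcases lt_or_ge j i with hi | hi
  · simp [coeffPoly, h.deg _ _ _ _ _ hi]
  · simp [coeffPoly, Polynomial.coeff_X_pow, Nat.lt_succ_of_le hi]

lemma coeffPoly_eq_zero_iff (h : IsCoeffSystem j a) {x : ι} {m b n : ℤ} :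
    coeffPoly j a x m b n = 0 ↔ ∀ i, a x i m b n = 0 := by
  simp [Polynomial.ext_iff, h.coeff_coeffPoly]

lemma le_of_ne_zero (h : IsCoeffSystem j a) {x : ι} {i : ℕ} {m b n : ℤ} (hx : a x i m b n ≠ 0) :
    i ≤ j :=
  not_lt.1 fun hi => hx (h.deg _ _ _ _ _ hi)

lemma exists_shift_ne_zero (h : IsCoeffSystem j a) {x : ι} {i : ℕ} {m b n : ℤ}
    (hx : a x i m b n ≠ 0) (s : ℤ) :
    ∃ y i', a y i' (m + s * b + s ^ 2 * n) (b + 2 * s * n) n ≠ 0 := by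
  obtain ⟨y, hy⟩ := h.shift x s
  refine ⟨y, not_forall.1 fun hzero => hx ?_⟩
  have hcomp := (hy m b n).symm.trans (h.coeffPoly_eq_zero_iff.2 hzero)
  refine h.coeffPoly_eq_zero_iff.1 ?_ i
  rw [← comp_X_add_C_comp_X_sub_C (coeffPoly j a x m b n) (s : ℂ), hcomp, Polynomial.zero_comp]

lemma exists_shift_right_ne_zero (h : IsCoeffSystem j a) {x : ι} {i : ℕ} {m b n : ℤ}
    (hx : a x i m b n ≠ 0) (s : ℤ) :
    ∃ y i', a y i' m (b + 2 * s * m) (n + s * b + s ^ 2 * m) ≠ 0 := by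
  obtain ⟨y, hy⟩ := h.swap x
  rw [hy i (h.le_of_ne_zero hx)] at hx
  obtain ⟨y', i', hy'⟩ := h.exists_shift_ne_zero hx s
  obtain ⟨y'', hy''⟩ := h.swap y'
  rw [hy'' i' (h.le_of_ne_zero hy')] at hy'
  exact ⟨_, _, hy'⟩

end IsCoeffSystem

/-- A coefficient system with the positivity of exponents that holds for cusp forms. -/
structure IsCuspidalCoeffSystem {ι : Type*} (j : ℕ) (a : ι → ℕ → ℤ → ℤ → ℤ → ℂ) : Prop
    extends IsCoeffSystem j a where
  supp : ∀ x i m b n, a x i m b n ≠ 0 → 1 ≤ m ∧ 1 ≤ n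

namespace IsCuspidalCoeffSystem

variable {ι : Type*} {j : ℕ} {a : ι → ℕ → ℤ → ℤ → ℤ → ℂ}

lemma abs_le_add (h : IsCuspidalCoeffSystem j a) {x : ι} {i : ℕ} {m b n : ℤ}
    (hx : a x i m b n ≠ 0) : |b| ≤ m + n - 1 := by
  obtain ⟨_, _, hpos⟩ := h.exists_shift_ne_zero hx 1
  obtain ⟨_, _, hneg⟩ := h.exists_shift_ne_zero hx (-1)
  have := (h.supp _ _ _ _ _ hpos).1
  have := (h.supp _ _ _ _ _ hneg).1
  rw [abs_le]
  constructor <;> linarith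

lemma mem_Icc_of_ne_zero (h : IsCuspidalCoeffSystem j a) {x : ι} {i : ℕ} {m b n : ℤ}
    (hx : a x i m b n ≠ 0) : b ∈ Finset.Icc (-(m + n)) (m + n) := by
  have := abs_le.1 (h.abs_le_add hx)
  rw [Finset.mem_Icc]
  omega

lemma exists_moment_swap (h : IsCuspidalCoeffSystem j a) (x : ι) :
    ∃ y, ∀ i ≤ j, ∀ k m n, moment a x i k m n = moment a y (j - i) k n m := by
  obtain ⟨y, hy⟩ := h.swap x
  exact ⟨y, fun i hi k m n => by simp only [moment, hy i hi, add_comm]⟩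

lemma moment_eq_zero_of_lt (h : IsCuspidalCoeffSystem j a) (x : ι) {i : ℕ} (k : ℕ) (m n : ℤ)
    (hi : j < i) : moment a x i k m n = 0 :=
  Finset.sum_eq_zero fun b _ => by rw [h.deg _ _ _ _ _ hi, mul_zero]

lemma moment_eq_zero_of_nonpos (h : IsCuspidalCoeffSystem j a) (x : ι) (i k : ℕ) (m : ℤ) {n : ℤ}
    (hn : n < 1) : moment a x i k m n = 0 := by
  refine Finset.sum_eq_zero fun b _ => ?_
  by_contra hne
  exact hn.not_ge (h.supp _ _ _ _ _ (right_ne_zero_of_mul hne)).2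

lemma coeff_eq_zero_of_moment_eq_zero (h : IsCuspidalCoeffSystem j a) (i m : ℕ) (n : ℤ)
    (hb : ∀ x (b : ℤ), a x i m b n ≠ 0 → |b| ≤ m)
    (hmom : ∀ x, ∀ k ≤ m, moment a x i k m n = 0) (x : ι) (b : ℤ) : a x i m b n = 0 := by
  obtain ⟨y, hy⟩ := h.sign x
  refine congrFun (eq_zero_of_signed_moments_eq_zero (f := fun b => a x i m b n)
    (Finset.Icc (-(m + n)) (m + n)) (fun b hne => ⟨h.mem_Icc_of_ne_zero hne, hb x b hne⟩)
    (fun k hk => hmom x k hk) fun k hk => ?_) b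
  simpa only [moment, hy] using hmom y k hk

lemma X_sub_C_pow_dvd_coeffPoly (h : IsCuspidalCoeffSystem j a) (x : ι) {s m b n m' : ℤ}
    (hm : m + s * b + s ^ 2 * n = m') {r : ℕ} (hr : ∀ y b', ∀ i < r, a y i m' b' n = 0) :
    (Polynomial.X - Polynomial.C (s : ℂ)) ^ r ∣ coeffPoly j a x m b n := by
  obtain ⟨y, hy⟩ := h.shift x s
  apply X_sub_C_pow_dvd_of_X_pow_dvd_comp
  rw [← hy, hm, Polynomial.X_pow_dvd_iff]
  intro i hi
  rw [h.coeff_coeffPoly, hr y _ i hi]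

lemma coeff_one_one_eq_zero_of_lt_add (h : IsCuspidalCoeffSystem j a) (x : ι) {r i : ℕ} {b : ℤ}
    (hr : ∀ y, ∀ i < r, a y i 1 b 1 = 0) (hi : j < i + r) : a x i 1 b 1 = 0 := by
  rcases lt_or_ge j i with hij | hij
  · exact h.deg _ _ _ _ _ hij
  · obtain ⟨y, hy⟩ := h.swap x
    rw [hy i hij]
    exact hr y _ (by omega)

/- Otherwise take a nonzero `a y i m b n` with `n` minimal. The unipotent shifts of the last
exponent cannot lower `n`, whence `|b| ≤ m`, and the first `m + 1` moments determine such
coefficients. -/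
lemma coeff_eq_zero_of_lt (h : IsCuspidalCoeffSystem j a) {K : ℕ}
    (hmom : ∀ k < K, ∀ x i m n, moment a x i k m n = 0) {m : ℤ} (hm : m < K)
    (x : ι) (i : ℕ) (b n : ℤ) : a x i m b n = 0 := by
  by_contra hne
  obtain ⟨hm1, hn1⟩ := h.supp _ _ _ _ _ hne
  lift m to ℕ using by omega
  lift n to ℕ using by omega
  classical
  have hex : ∃ n : ℕ, ∃ x i b, a x i m b n ≠ 0 := ⟨n, x, i, b, hne⟩
  obtain ⟨y, i', b', hy⟩ := Nat.find_spec hex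
  refine hy (h.coeff_eq_zero_of_moment_eq_zero i' m _ (fun z c hz => ?_)
    (fun x k hk => hmom k (by omega) _ _ _ _) y b')
  have hmin : ∀ s : ℤ, (Nat.find hex : ℤ) ≤ Nat.find hex + s * c + s ^ 2 * m := fun s => by
    obtain ⟨y', i'', hs⟩ := h.exists_shift_right_ne_zero hz s
    have hpos := (h.supp _ _ _ _ _ hs).2
    generalize hN : (Nat.find hex : ℤ) + s * c + s ^ 2 * m = N at hs hpos ⊢
    lift N to ℕ using by omega
    exact_mod_cast Nat.find_min' hex ⟨y', i'', _, hs⟩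
  rw [abs_le]
  constructor <;> linarith [hmin 1, hmin (-1)]

lemma abs_le_of_ne_zero (h : IsCuspidalCoeffSystem j a) {x : ι} {i : ℕ} {m b : ℤ}
    (hx : a x i m b 1 ≠ 0) : |b| ≤ m := by
  simpa using h.abs_le_add hx

end IsCuspidalCoeffSystem

/-- A cuspidal coefficient system of weight `w` in which a moment vanishes as soon as its expansion
in `n` starts at an order `M` with `w + i + k ≤ 5 M`, provided that the moments preceding it
vanish: the moment is then the coefficient of a modular form of weight `w + i + k` and level `2`. -/
structure IsModularCoeffSystem {ι : Type*} (w j : ℕ) (a : ι → ℕ → ℤ → ℤ → ℤ → ℂ) : Prop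
    extends IsCuspidalCoeffSystem j a where
  moment_eq_zero : ∀ (i k : ℕ) (m M : ℤ), i ≤ j → 1 ≤ M → (w + i + k : ℤ) ≤ 5 * M →
    (∀ l k' : ℕ, l ≤ i → k' + (i - l) ≤ k → ¬(l = i ∧ k' = k) →
      ∀ x n, moment a x l k' m n = 0) →
    (∀ x n, n < M → moment a x i k m n = 0) → ∀ x n, moment a x i k m n = 0

namespace IsModularCoeffSystem

variable {ι : Type*} {w j : ℕ} {a : ι → ℕ → ℤ → ℤ → ℤ → ℂ}

lemma moment_eq_zero_of_add_le (h : IsModularCoeffSystem w j a) (i k : ℕ) (hw : w + i + k ≤ 5)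
    (x : ι) (m n : ℤ) : moment a x i k m n = 0 := by
  induction hN : i + k using Nat.strong_induction_on generalizing i k x n with
  | _ N ih =>
  rcases lt_or_ge j i with hij | hij
  · exact h.moment_eq_zero_of_lt x k m n hij
  · refine h.moment_eq_zero i k m 1 hij le_rfl (by omega) (fun l k' hl hk hne x n => ?_)
      (fun x n hn => h.moment_eq_zero_of_nonpos x i k m hn) x n
    exact ih (l + k') (by omega) l k' (by omega) x n rfl

lemma coeff_eq_zero_of_add_le (h : IsModularCoeffSystem w j a) (i m : ℕ) (hw : w + i + m ≤ 5)
    (x : ι) (b : ℤ) : a x i m b 1 = 0 :=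
  h.coeff_eq_zero_of_moment_eq_zero i m 1 (fun _ _ hx => h.abs_le_of_ne_zero hx)
    (fun x k _ => h.moment_eq_zero_of_add_le i k (by omega) x m 1) x b

lemma coeff_one_eq_zero (h : IsModularCoeffSystem 2 j a) (x : ι) (b : ℤ) {i : ℕ} (hi : i < 3) :
    a x i 1 b 1 = 0 := by
  exact_mod_cast h.coeff_eq_zero_of_add_le i 1 (by omega) x b

lemma coeff_two_eq_zero (h : IsModularCoeffSystem 2 j a) (x : ι) (b : ℤ) {i : ℕ} (hi : i < 2) :
    a x i 2 b 1 = 0 := by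
  exact_mod_cast h.coeff_eq_zero_of_add_le i 2 (by omega) x b

lemma coeff_three_eq_zero (h : IsModularCoeffSystem 2 j a) (x : ι) (b : ℤ) {i : ℕ} (hi : i < 1) :
    a x i 3 b 1 = 0 := by
  exact_mod_cast h.coeff_eq_zero_of_add_le i 3 (by omega) x b

lemma coeff_one_unit_one_eq_zero (h : IsModularCoeffSystem 2 j a) (hj : j ≤ 10) {b : ℤ}
    (hb : b = 1 ∨ b = -1) (x : ι) (i : ℕ) : a x i 1 b 1 = 0 := by
  refine h.coeffPoly_eq_zero_iff.1 (eq_zero_of_prod_X_sub_C_pow_dvd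
    (c := fun u => ((![0, -b, b, -2 * b] u : ℤ) : ℂ)) ?_ ![3, 3, 1, 1] ?_ ?_) i
  · refine Int.cast_injective.comp ?_
    rcases hb with rfl | rfl <;> decide
  · have h1 := fun y b' i => h.coeff_one_eq_zero (i := i) y b'
    have h3 := fun y b' i => h.coeff_three_eq_zero (i := i) y b'
    intro u
    fin_cases u
    · exact h.X_sub_C_pow_dvd_coeffPoly x (by rcases hb with rfl | rfl <;> simp) h1
    · exact h.X_sub_C_pow_dvd_coeffPoly x (by rcases hb with rfl | rfl <;> simp) h1
    · exact h.X_sub_C_pow_dvd_coeffPoly x (by rcases hb with rfl | rfl <;> simp) h3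
    · exact h.X_sub_C_pow_dvd_coeffPoly x (by rcases hb with rfl | rfl <;> simp) h3
  · intro i hi
    simp only [Fin.sum_univ_four, Matrix.cons_val] at hi
    rw [h.coeff_coeffPoly]
    exact h.coeff_one_one_eq_zero_of_lt_add x (r := 3)
      (fun y i hi => h.coeff_one_eq_zero y b hi) (by omega)

lemma coeff_one_zero_one_eq_zero_of_lt (h : IsModularCoeffSystem 2 j a) (hj : j ≤ 10) (x : ι)
    {i : ℕ} (hi : i < 4) : a x i 1 0 1 = 0 := by
  have hmom := h.moment_eq_zero_of_add_le i 0 (by omega) x 1 1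
  rw [moment, Finset.sum_eq_single 0] at hmom
  · simpa using hmom
  · intro c _ hc
    by_contra hne
    have hcoeff := right_ne_zero_of_mul hne
    have := abs_le.1 (h.abs_le_of_ne_zero hcoeff)
    exact hcoeff (h.coeff_one_unit_one_eq_zero hj (by omega) x i)
  · simp

lemma coeff_one_zero_one_eq_zero (h : IsModularCoeffSystem 2 j a) (hj : j ≤ 10) (x : ι) (i : ℕ) :
    a x i 1 0 1 = 0 := by
  have h0 := fun y i => h.coeff_one_zero_one_eq_zero_of_lt (i := i) hj y
  refine h.coeffPoly_eq_zero_iff.1 (eq_zero_of_prod_X_sub_C_pow_dvd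
    (c := fun u => ((![0, 1, -1] u : ℤ) : ℂ)) (Int.cast_injective.comp (by decide))
    ![4, 2, 2] ?_ ?_) i
  · have h2 := fun y b' i => h.coeff_two_eq_zero (i := i) y b'
    intro u
    fin_cases u
    · simpa [Polynomial.X_pow_dvd_iff, h.coeff_coeffPoly] using h0 x
    · exact h.X_sub_C_pow_dvd_coeffPoly x (by simp) h2
    · exact h.X_sub_C_pow_dvd_coeffPoly x (by simp) h2
  · intro i hi
    simp only [Fin.sum_univ_three, Matrix.cons_val] at hi
    rw [h.coeff_coeffPoly]
    exact h.coeff_one_one_eq_zero_of_lt_add x (r := 4) h0 (by omega)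

lemma coeff_one_one_eq_zero (h : IsModularCoeffSystem 2 j a) (hj : j ≤ 10) (x : ι) (i : ℕ)
    (b : ℤ) : a x i 1 b 1 = 0 := by
  by_contra hne
  have hb := abs_le.1 (h.abs_le_of_ne_zero hne)
  rcases (by omega : b = 0 ∨ b = 1 ∨ b = -1) with rfl | hb
  · exact hne (h.coeff_one_zero_one_eq_zero hj x i)
  · exact hne (h.coeff_one_unit_one_eq_zero hj hb x i)

lemma moment_eq_zero_of_lower (h : IsModularCoeffSystem w j a) {N : ℕ}
    (hlow : ∀ k < N, ∀ x i m n, moment a x i k m n = 0) {i : ℕ} (hi : i ≤ j) {m M : ℤ}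
    (hM : 1 ≤ M) (hw : (w + i + N : ℤ) ≤ 5 * M)
    (hord : ∀ x n, n < M → moment a x i N m n = 0) (x : ι) (n : ℤ) : moment a x i N m n = 0 :=
  h.moment_eq_zero i N m M hi hM hw (fun l k' _ _ _ x n => hlow k' (by omega) x l m n) hord x n

lemma moment_eq_zero_of_moment_one_eq_zero (h : IsModularCoeffSystem w j a) {N : ℕ}
    (hlow : ∀ k < N, ∀ x i m n, moment a x i k m n = 0) {i : ℕ} (hi : i ≤ j)
    (hw : w + i + N ≤ 10) {m : ℤ} (hone : ∀ x, moment a x i N m 1 = 0) (x : ι) (n : ℤ) :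
    moment a x i N m n = 0 := by
  refine h.moment_eq_zero_of_lower hlow hi one_le_two (by omega) (fun x n hn => ?_) x n
  rcases (by omega : n < 1 ∨ n = 1) with hn | rfl
  · exact h.moment_eq_zero_of_nonpos _ _ _ _ hn
  · exact hone x

lemma moment_eq_zero_of_le_one (h : IsModularCoeffSystem 2 j a) (hj : j ≤ 10) {N : ℕ} (hN : N ≤ 1)
    (hlow : ∀ k < N, ∀ x i m n, moment a x i k m n = 0) (x : ι) (i : ℕ) (m n : ℤ) :
    moment a x i N m n = 0 := by
  rcases lt_or_ge j i with hi | hi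
  · exact h.moment_eq_zero_of_lt x N m n hi
  obtain ⟨y, hy⟩ := h.exists_moment_swap x
  by_cases hsmall : 2 + i + N ≤ 5
  · exact h.moment_eq_zero_of_add_le i N hsmall x m n
  by_cases hsmall' : 2 + (j - i) + N ≤ 5
  · rw [hy i hi]
    exact h.moment_eq_zero_of_add_le _ _ hsmall' _ _ _
  have hone : ∀ x i, moment a x i N 1 1 = 0 := fun x i =>
    Finset.sum_eq_zero fun b _ => by rw [h.coeff_one_one_eq_zero hj, mul_zero]
  refine h.moment_eq_zero_of_moment_one_eq_zero hlow hi (by omega) (fun x => ?_) x n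
  obtain ⟨y, hy⟩ := h.exists_moment_swap x
  rw [hy i hi]
  exact h.moment_eq_zero_of_moment_one_eq_zero hlow (j.sub_le i) (by omega) (fun x => hone x _) _ _

/- For `k ≥ 2` and `2 i ≤ j` one has `2 + i + k ≤ 5 k`, and the coefficients with `n < k` vanish
because the moments of order less than `k` do. -/
theorem moment_eq_zero_of_le_ten (h : IsModularCoeffSystem 2 j a) (hj : j ≤ 10) (k : ℕ) (x : ι)
    (i : ℕ) (m n : ℤ) : moment a x i k m n = 0 := by
  induction k using Nat.strong_induction_on generalizing x i m n with
  | _ k hlow =>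
  rcases le_or_gt k 1 with hk | hk
  · exact h.moment_eq_zero_of_le_one hj hk hlow x i m n
  have hfirst : ∀ i, 2 * i ≤ j → ∀ x m n, moment a x i k m n = 0 := fun i hi x m n => by
    refine h.moment_eq_zero_of_lower hlow (by omega) (M := k) (by omega) (by omega)
      (fun x n hn => Finset.sum_eq_zero fun b _ => ?_) x n
    obtain ⟨y, hy⟩ := h.swap x
    rw [hy i (by omega), h.coeff_eq_zero_of_lt hlow hn, mul_zero]
  rcases lt_or_ge j i with hi | hi
  · exact h.moment_eq_zero_of_lt x k m n hi
  by_cases hij : 2 * i ≤ j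
  · exact hfirst i hij x m n
  · obtain ⟨y, hy⟩ := h.exists_moment_swap x
    rw [hy i hi]
    exact hfirst _ (by omega) _ _ _

theorem coeff_eq_zero_of_le_ten (h : IsModularCoeffSystem 2 j a) (hj : j ≤ 10) (x : ι) (i : ℕ)
    (m b n : ℤ) : a x i m b n = 0 :=
  h.coeff_eq_zero_of_lt (K := m.toNat + 1) (fun k _ => h.moment_eq_zero_of_le_ten hj k) (by omega)
    x i b n

end IsModularCoeffSystem

section TorusFourier

open MeasureTheory

lemma summable_pi_prod_of_nonneg {ι κ : Type*} [Fintype ι] {f : ι → κ → ℝ} (hf : ∀ i n, 0 ≤ f i n)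
    (hs : ∀ i, Summable (f i)) : Summable fun n : ι → κ => ∏ i, f i (n i) := by
  classical
  refine summable_of_sum_le (c := ∏ i, ∑' n, f i n)
    (fun n => Finset.prod_nonneg fun i _ => hf i (n i)) fun s => ?_
  calc ∑ n ∈ s, ∏ i, f i (n i)
      ≤ ∑ n ∈ Fintype.piFinset fun i => s.image (· i), ∏ i, f i (n i) :=
        Finset.sum_le_sum_of_subset_of_nonneg
          (fun n hn => Fintype.mem_piFinset.2 fun i => Finset.mem_image_of_mem (· i) hn)
          fun n _ _ => Finset.prod_nonneg fun i _ => hf i (n i)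
    _ = ∏ i, ∑ n ∈ s.image (· i), f i n := by
      rw [Finset.prod_univ_sum]
    _ ≤ ∏ i, ∑' n, f i n := by
      gcongr with i
      · exact fun i _ => Finset.sum_nonneg fun n _ => hf i n
      · exact (hs i).sum_le_tsum _ fun n _ => hf i n

lemma summable_exp_neg_mul_abs {ε : ℝ} (hε : 0 < ε) :
    Summable fun n : ℤ => Real.exp (-(ε * |(n : ℝ)|)) := by
  have h : Summable fun n : ℕ => Real.exp (-(ε * n)) :=
    (summable_geometric_of_lt_one (Real.exp_pos (-ε)).le (by simpa using hε)).congr fun n => by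
      rw [← Real.exp_nat_mul, mul_neg, mul_comm]
  exact .of_nat_of_neg (by simpa using h) (by simpa using h)

lemma integral_eq_integral_intervalIntegral_add {G E : Type*} [AddGroup G] [TopologicalSpace G]
    [CompactSpace G] [ContinuousAdd G] [MeasurableSpace G] [BorelSpace G]
    [SecondCountableTopology G] [NormedAddCommGroup E] [NormedSpace ℝ E] [CompleteSpace E]
    {μ : Measure G} [IsFiniteMeasure μ] [μ.IsAddRightInvariant] {h : G → E} (hh : Continuous h)
    {φ : ℝ → G} (hφ : Continuous φ) :
    ∫ x, h x ∂μ = ∫ x, (∫ s in (0 : ℝ)..1, h (x + φ s)) ∂μ := by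
  rw [← intervalIntegral_integral_swap]
  · simp_rw [integral_add_right_eq_self (μ := μ) h]
    simp
  · obtain ⟨C, hC⟩ := (isCompact_range hh).isBounded.exists_norm_le
    have hfin : IsFiniteMeasure (volume.restrict (Set.uIoc (0 : ℝ) 1)) := ⟨by simp⟩
    refine Integrable.of_bound (C := C) (Continuous.aestronglyMeasurable ?_)
      (Eventually.of_forall fun p => hC _ ⟨_, rfl⟩)
    unfold Function.uncurry
    fun_prop

/- The vertical sides of the rectangle cancel in Cauchy's theorem. -/
lemma intervalIntegral_eq_of_periodic {p : ℂ → ℂ} {a b : ℝ}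
    (hd : DifferentiableOn ℂ p {ζ | ζ.im ∈ Set.uIcc a b})
    (hp : ∀ ζ : ℂ, ζ.im ∈ Set.uIcc a b → p (ζ + 1) = p ζ) :
    ∫ s in (0 : ℝ)..1, p (s + a * I) = ∫ s in (0 : ℝ)..1, p (s + b * I) := by
  have h := Complex.integral_boundary_rect_eq_zero_of_differentiableOn p (a * I) (1 + b * I)
    (hd.mono fun ζ hζ => by simpa using hζ.2)
  simp only [mul_re, mul_im, add_re, add_im, one_re, one_im, ofReal_re, ofReal_im, I_re, I_im,
    mul_zero, mul_one, sub_self, add_zero, zero_add, ofReal_zero, ofReal_one] at h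
  have hsides : ∫ y in a..b, p (1 + y * I) = ∫ y in a..b, p (y * I) := by
    refine intervalIntegral.integral_congr fun y hy => ?_
    simpa only [add_comm] using hp (y * I) (by simpa using hy)
  rw [hsides, add_sub_cancel_right] at h
  exact sub_eq_zero.1 h

variable {ι : Type*}

/-- The projection from `ℝ^ι` to the torus `(ℝ/ℤ)^ι`. -/
def torusMk (x : ι → ℝ) : UnitAddTorus ι := fun i => (x i : UnitAddCircle)

lemma isOpenQuotientMap_torusMk : IsOpenQuotientMap (torusMk (ι := ι)) :=
  IsOpenQuotientMap.piMap fun _ => QuotientAddGroup.isOpenQuotientMap_mk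

lemma torusMk_add (x y : ι → ℝ) : torusMk (x + y) = torusMk x + torusMk y := rfl

lemma exists_int_of_torusMk_eq {x y : ι → ℝ} (h : torusMk x = torusMk y) :
    ∃ n : ι → ℤ, ∀ i, x i = y i + n i := by
  have hi : ∀ i, ∃ n : ℤ, x i = y i + n := fun i => by
    have h0 : ((x i - y i : ℝ) : UnitAddCircle) = 0 := by
      rw [AddCircle.coe_sub, sub_eq_zero]
      exact congrFun h i
    obtain ⟨n, hn⟩ := (AddCircle.coe_eq_zero_iff 1).1 h0
    exact ⟨n, by rw [zsmul_one] at hn; linarith⟩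
  exact ⟨fun i => (hi i).choose, fun i => (hi i).choose_spec⟩

/-- The point `x + iY` of `ℂ^ι` with real part `x` and imaginary part `Y`. -/
def tubePoint (x Y : ι → ℝ) : ι → ℂ := fun i => x i + Y i * I

lemma tubePoint_im (x Y : ι → ℝ) : (fun i => (tubePoint x Y i).im) = Y := by
  funext i
  simp [tubePoint]

lemma tubePoint_re_im (ζ : ι → ℂ) : tubePoint (fun i => (ζ i).re) (fun i => (ζ i).im) = ζ :=
  funext fun i => re_add_im (ζ i)

/-- The tube domain `ℝ^ι + iD`. -/
def tube (D : Set (ι → ℝ)) : Set (ι → ℂ) := {ζ | (fun i => (ζ i).im) ∈ D}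

lemma tubePoint_mem_tube {D : Set (ι → ℝ)} {Y : ι → ℝ} (hY : Y ∈ D) (x : ι → ℝ) :
    tubePoint x Y ∈ tube D := by
  rwa [tube, Set.mem_ofPred_eq, tubePoint_im]

lemma update_tubePoint_mem_tube [DecidableEq ι] {D : Set (ι → ℝ)} {Y : ι → ℝ} {k : ι} {ζ : ℂ}
    (h : Function.update Y k ζ.im ∈ D) (x : ι → ℝ) :
    Function.update (tubePoint x Y) k ζ ∈ tube D := by
  rw [tube, Set.mem_ofPred_eq]
  convert h using 1
  funext i
  rcases eq_or_ne i k with rfl | hi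
  · simp
  · simp [hi, tubePoint]

/-- Functions on the tube domain over `D` to which the theory of Fourier series applies. -/
structure IsPeriodicOnTube [Fintype ι] (D : Set (ι → ℝ)) (f : (ι → ℂ) → ℂ) : Prop where
  differentiableOn : DifferentiableOn ℂ f (tube D)
  periodic : ∀ ζ ∈ tube D, ∀ n : ι → ℤ, f (fun i => ζ i + n i) = f ζ

/-- The function `x ↦ f (x + iY)` on the torus, for `f` periodic in the real directions. -/
def tubeSlice (f : (ι → ℂ) → ℂ) (Y : ι → ℝ) (x : UnitAddTorus ι) : ℂ :=
  f (tubePoint (Function.surjInv isOpenQuotientMap_torusMk.surjective x) Y)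

/-- The character `e^{2πi n·ζ}`. -/
def tubeChar [Fintype ι] (n : ι → ℤ) (ζ : ι → ℂ) : ℂ :=
  Complex.exp (2 * Real.pi * I * ∑ i, n i * ζ i)

variable [Fintype ι] {D : Set (ι → ℝ)} {f : (ι → ℂ) → ℂ} {Y : ι → ℝ}

lemma mFourier_torusMk (n : ι → ℤ) (x : ι → ℝ) :
    UnitAddTorus.mFourier n (torusMk x) = tubeChar n fun i => x i := by
  change ∏ i, fourier (n i) ((x i : ℝ) : UnitAddCircle) = _
  simp_rw [fourier_coe_apply, ← Complex.exp_sum, tubeChar, Finset.mul_sum, ofReal_one, div_one,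
    mul_assoc]

lemma tubeChar_tubePoint (n : ι → ℤ) (x Y : ι → ℝ) :
    tubeChar n (tubePoint x Y) =
      Real.exp (-(2 * Real.pi * ∑ i, n i * Y i)) * UnitAddTorus.mFourier n (torusMk x) := by
  rw [mFourier_torusMk, tubeChar, tubeChar, ofReal_exp, ← Complex.exp_add]
  congr 1
  push_cast
  simp only [tubePoint, mul_add, Finset.sum_add_distrib, ← mul_assoc, ← Finset.sum_mul]
  linear_combination (2 * Real.pi * ∑ i, (n i : ℂ) * Y i) * I_sq

namespace IsPeriodicOnTube

lemma tubeSlice_torusMk (hf : IsPeriodicOnTube D f) (hY : Y ∈ D) (x : ι → ℝ) :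
    tubeSlice f Y (torusMk x) = f (tubePoint x Y) := by
  obtain ⟨n, hn⟩ := exists_int_of_torusMk_eq
    (Function.surjInv_eq isOpenQuotientMap_torusMk.surjective (torusMk x))
  rw [tubeSlice, ← hf.periodic _ (tubePoint_mem_tube hY x) n]
  congr 1
  funext i
  simp only [tubePoint, hn]
  push_cast
  ring

lemma continuous_tubeSlice (hf : IsPeriodicOnTube D f) (hY : Y ∈ D) :
    Continuous (tubeSlice f Y) := by
  rw [isOpenQuotientMap_torusMk.isQuotientMap.continuous_iff]
  have hcont : Continuous fun x => f (tubePoint x Y) := by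
    rw [← continuousOn_univ]
    exact hf.differentiableOn.continuousOn.comp (by unfold tubePoint; fun_prop)
      fun x _ => tubePoint_mem_tube hY x
  exact hcont.congr fun x => (hf.tubeSlice_torusMk hY x).symm

lemma tubeChar_mul (hf : IsPeriodicOnTube D f) (n : ι → ℤ) :
    IsPeriodicOnTube D fun ζ => tubeChar n ζ * f ζ where
  differentiableOn := by
    refine DifferentiableOn.mul (Differentiable.differentiableOn ?_) hf.differentiableOn
    unfold tubeChar
    fun_prop
  periodic ζ hζ m := by
    rw [hf.periodic ζ hζ m]
    congr 1
    refine Complex.exp_eq_exp_iff_exists_int.2 ⟨∑ i, n i * m i, ?_⟩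
    push_cast
    simp only [mul_add, Finset.sum_add_distrib]
    ring

end IsPeriodicOnTube

section Integration

local instance : MeasureSpace UnitAddCircle := ⟨AddCircle.haarAddCircle⟩

local instance : Measure.IsAddHaarMeasure (volume : Measure UnitAddCircle) :=
  inferInstanceAs (Measure.IsAddHaarMeasure AddCircle.haarAddCircle)

local instance : IsProbabilityMeasure (volume : Measure UnitAddCircle) :=
  inferInstanceAs (IsProbabilityMeasure AddCircle.haarAddCircle)

local instance : IsProbabilityMeasure (volume : Measure (UnitAddTorus ι)) :=
  inferInstanceAs (IsProbabilityMeasure (Measure.pi fun _ : ι => (volume : Measure UnitAddCircle)))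

namespace IsPeriodicOnTube

lemma integral_tubeSlice_update [DecidableEq ι] (hf : IsPeriodicOnTube D f) (k : ι) {t : ℝ}
    (h : ∀ s ∈ Set.uIcc (Y k) t, Function.update Y k s ∈ D) :
    ∫ x, tubeSlice f Y x = ∫ x, tubeSlice f (Function.update Y k t) x := by
  have hline : ∀ s ∈ Set.uIcc (Y k) t, ∀ (x : ι → ℝ) (r : ℝ),
      tubeSlice f (Function.update Y k s) (torusMk x + torusMk (Pi.single k r)) =
        f (Function.update (tubePoint x Y) k (x k + (r + s * I))) := fun s hs x r => by
    rw [← torusMk_add, hf.tubeSlice_torusMk (h s hs)]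
    congr 1
    funext i
    rcases eq_or_ne i k with rfl | hi
    · simp [tubePoint]
      ring
    · simp [hi, tubePoint]
  have hline_mem : ∀ (x : ι → ℝ) (ζ : ℂ), ζ.im ∈ Set.uIcc (Y k) t →
      Function.update (tubePoint x Y) k (x k + ζ) ∈ tube D := fun x ζ hζ =>
    update_tubePoint_mem_tube (by simpa using h _ hζ) x
  have hcont : Continuous fun r => torusMk (Pi.single k r : ι → ℝ) :=
    isOpenQuotientMap_torusMk.continuous.comp (continuous_single (A := fun _ => ℝ) k)
  have hY : Y ∈ D := by simpa using h _ Set.left_mem_uIcc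
  rw [integral_eq_integral_intervalIntegral_add (hf.continuous_tubeSlice hY) hcont,
    integral_eq_integral_intervalIntegral_add
      (hf.continuous_tubeSlice (h _ Set.right_mem_uIcc)) hcont]
  congr 1
  funext x
  obtain ⟨x, rfl⟩ := isOpenQuotientMap_torusMk.surjective x
  have hleft := hline _ Set.left_mem_uIcc x
  rw [Function.update_eq_self] at hleft
  simp_rw [hleft, hline _ Set.right_mem_uIcc x]
  refine intervalIntegral_eq_of_periodic
    (p := fun ζ => f (Function.update (tubePoint x Y) k (x k + ζ)))
    (hf.differentiableOn.comp (Differentiable.differentiableOn ?_) fun ζ hζ => hline_mem x ζ hζ)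
    fun ζ hζ => ?_
  · refine differentiable_pi.2 fun i => ?_
    rcases eq_or_ne i k with rfl | hi
    · simp only [Function.update_self]
      fun_prop
    · simp [hi]
  · rw [← hf.periodic _ (hline_mem x ζ hζ) (Pi.single k 1)]
    congr 1
    funext i
    rcases eq_or_ne i k with rfl | hi
    · simp [add_assoc]
    · simp [hi]

/- In a sup-norm ball one can pass from `Y` to `Y'` by changing one coordinate at a time. -/
lemma integral_tubeSlice_eq_of_mem_ball (hf : IsPeriodicOnTube D f) {ε : ℝ}
    (hball : Metric.ball Y ε ⊆ D) {Y' : ι → ℝ} (hY' : Y' ∈ Metric.ball Y ε) :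
    ∫ x, tubeSlice f Y x = ∫ x, tubeSlice f Y' x := by
  classical
  have hε : 0 < ε := Metric.pos_of_mem_ball hY'
  have hdist := (dist_pi_lt_iff hε).1 hY'
  suffices h : ∀ s : Finset ι, ∫ x, tubeSlice f Y x = ∫ x, tubeSlice f (s.piecewise Y' Y) x by
    simpa using h Finset.univ
  intro s
  induction s using Finset.induction_on with
  | empty => simp
  | insert k s hk ih =>
    rw [ih, Finset.piecewise_insert]
    refine hf.integral_tubeSlice_update k fun r hr => hball ((dist_pi_lt_iff hε).2 fun i => ?_)
    rw [Finset.piecewise_eq_of_notMem _ _ _ hk] at hr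
    rcases eq_or_ne i k with rfl | hi
    · rw [Function.update_self, Real.dist_eq]
      have := Real.dist_eq (Y' i) (Y i) ▸ hdist i
      exact (Set.abs_sub_left_of_mem_uIcc hr).trans_lt this
    · rw [Function.update_of_ne hi]
      by_cases his : i ∈ s
      · simpa [his] using hdist i
      · simpa [his] using hε

theorem integral_tubeSlice_eq (hf : IsPeriodicOnTube D f) (hD : IsOpen D) (hD' : IsPreconnected D)
    {Y' : ι → ℝ} (hY : Y ∈ D) (hY' : Y' ∈ D) :
    ∫ x, tubeSlice f Y x = ∫ x, tubeSlice f Y' x := by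
  refine hD'.induction₂ (fun Y Y' => ∫ x, tubeSlice f Y x = ∫ x, tubeSlice f Y' x)
    (fun Y hY => ?_) (fun _ _ _ _ _ _ => Eq.trans) (fun _ _ _ _ => Eq.symm) hY hY'
  obtain ⟨ε, hε, hball⟩ := Metric.isOpen_iff.1 hD Y hY
  exact nhdsWithin_le_nhds (Filter.mem_of_superset (Metric.ball_mem_nhds Y hε)
    fun Y' => hf.integral_tubeSlice_eq_of_mem_ball hball)

lemma mFourierCoeff_tubeSlice (hf : IsPeriodicOnTube D f) (hY : Y ∈ D) (n : ι → ℤ) :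
    UnitAddTorus.mFourierCoeff (tubeSlice f Y) n =
      Real.exp (-(2 * Real.pi * ∑ i, n i * Y i)) *
        ∫ x, tubeSlice (fun ζ => tubeChar (-n) ζ * f ζ) Y x := by
  rw [UnitAddTorus.mFourierCoeff, ← integral_const_mul]
  congr 1
  funext x
  obtain ⟨x, rfl⟩ := isOpenQuotientMap_torusMk.surjective x
  rw [(hf.tubeChar_mul (-n)).tubeSlice_torusMk hY, hf.tubeSlice_torusMk hY, tubeChar_tubePoint,
    ← mul_assoc, ← mul_assoc, ← ofReal_mul, ← Real.exp_add, smul_eq_mul]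
  simp

lemma exists_norm_mFourierCoeff_le (hf : IsPeriodicOnTube D f) (hY : Y ∈ D) :
    ∃ K : ℝ, 0 ≤ K ∧ ∀ n, ‖UnitAddTorus.mFourierCoeff (tubeSlice f Y) n‖ ≤ K := by
  let g : C(UnitAddTorus ι, ℂ) := ⟨tubeSlice f Y, hf.continuous_tubeSlice hY⟩
  refine ⟨‖g‖, norm_nonneg g, fun n => ?_⟩
  have h := norm_integral_le_of_norm_le_const (μ := (volume : Measure (UnitAddTorus ι)))
    (f := fun t => UnitAddTorus.mFourier (-n) t • g t) (C := ‖g‖)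
    (Eventually.of_forall fun t => by
      have hn := (UnitAddTorus.mFourier (-n)).norm_coe_le_norm t
      rw [UnitAddTorus.mFourier_norm] at hn
      rw [norm_smul]
      exact (mul_le_of_le_one_left (norm_nonneg _) hn).trans (g.norm_coe_le_norm t))
  simpa [UnitAddTorus.mFourierCoeff, g] using h

end IsPeriodicOnTube

/- Moving `Y` by a small multiple of the sign vector of `n` makes the bound decay
exponentially. -/
lemma summable_mul_exp_of_forall_exists_le (hD : IsOpen D) {c : (ι → ℤ) → ℂ}
    (hc : ∀ Y ∈ D, ∃ K : ℝ, 0 ≤ K ∧ ∀ n, ‖c n‖ * Real.exp (-(2 * Real.pi * ∑ i, n i * Y i)) ≤ K)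
    (hY : Y ∈ D) : Summable fun n => ‖c n‖ * Real.exp (-(2 * Real.pi * ∑ i, n i * Y i)) := by
  classical
  obtain ⟨ε, hε, hball⟩ := Metric.isOpen_iff.1 hD Y hY
  let sign : (ι → Bool) → ι → ℝ := fun s i => if s i then 1 else -1
  have hmem : ∀ s, Y - (ε / 2) • sign s ∈ D := fun s => by
    refine hball ((dist_pi_lt_iff hε).2 fun i => ?_)
    by_cases hs : s i <;> simp [sign, hs, abs_of_pos hε, hε]
  choose K hK0 hK using fun s => hc _ (hmem s)
  have hgeom : Summable fun n : ι → ℤ => ∏ i, Real.exp (-(Real.pi * ε * |(n i : ℝ)|)) :=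
    summable_pi_prod_of_nonneg (f := fun _ (n : ℤ) => Real.exp (-(Real.pi * ε * |(n : ℝ)|)))
      (fun _ _ => (Real.exp_pos _).le) fun _ => summable_exp_neg_mul_abs (by positivity)
  refine .of_nonneg_of_le (fun n => by positivity) (fun n => ?_) (hgeom.mul_left (∑ s, K s))
  let s : ι → Bool := fun i => decide (0 ≤ n i)
  have habs : ∀ i, |(n i : ℝ)| = n i * sign s i := fun i => by
    by_cases hi : 0 ≤ n i
    · simp [sign, s, hi]
    · simp [sign, s, hi, abs_of_neg (Int.cast_lt_zero.2 (not_le.1 hi))]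
  have hexp : Real.exp (-(2 * Real.pi * ∑ i, n i * Y i)) =
      Real.exp (-(2 * Real.pi * ∑ i, n i * (Y - (ε / 2) • sign s) i)) *
        ∏ i, Real.exp (-(Real.pi * ε * |(n i : ℝ)|)) := by
    rw [← Real.exp_sum, ← Real.exp_add]
    congr 1
    simp only [habs, Finset.mul_sum, ← Finset.sum_neg_distrib, ← Finset.sum_add_distrib,
      Pi.sub_apply, Pi.smul_apply, smul_eq_mul]
    exact Finset.sum_congr rfl fun i _ => by ring
  rw [hexp, ← mul_assoc]
  gcongr
  exact (hK s n).trans (Finset.single_le_sum (fun s _ => hK0 s) (Finset.mem_univ s))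

theorem IsPeriodicOnTube.exists_hasSum (hf : IsPeriodicOnTube D f) (hD : IsOpen D)
    (hD' : IsPreconnected D) :
    ∃ c : (ι → ℤ) → ℂ, ∀ ζ ∈ tube D, HasSum (fun n => c n * tubeChar n ζ) (f ζ) := by
  rcases D.eq_empty_or_nonempty with rfl | ⟨Y₀, hY₀⟩
  · exact ⟨0, fun ζ hζ => hζ.elim⟩
  obtain ⟨c, hc⟩ : ∃ c : (ι → ℤ) → ℂ, ∀ Y ∈ D, ∀ n, UnitAddTorus.mFourierCoeff (tubeSlice f Y) n =
      c n * Real.exp (-(2 * Real.pi * ∑ i, n i * Y i)) := ⟨_, fun Y hY n => by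
    rw [hf.mFourierCoeff_tubeSlice hY n,
      (hf.tubeChar_mul (-n)).integral_tubeSlice_eq hD hD' hY hY₀, mul_comm]⟩
  have hnorm : ∀ Y ∈ D, ∀ n, ‖UnitAddTorus.mFourierCoeff (tubeSlice f Y) n‖ =
      ‖c n‖ * Real.exp (-(2 * Real.pi * ∑ i, n i * Y i)) := fun Y hY n => by
    rw [hc Y hY, norm_mul, norm_real, Real.norm_of_nonneg (Real.exp_pos _).le]
  refine ⟨c, fun ζ hζ => ?_⟩
  set Y : ι → ℝ := fun i => (ζ i).im
  let g : C(UnitAddTorus ι, ℂ) := ⟨tubeSlice f Y, hf.continuous_tubeSlice hζ⟩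
  have hsum : Summable (UnitAddTorus.mFourierCoeff g) :=
    .of_norm (((summable_mul_exp_of_forall_exists_le hD fun Y hY => by
      simpa only [hnorm Y hY] using hf.exists_norm_mFourierCoeff_le hY) hζ).congr
        fun n => (hnorm Y hζ n).symm)
  have h := UnitAddTorus.hasSum_mFourier_series_apply_of_summable hsum
    (torusMk fun i => (ζ i).re)
  rw [show g (torusMk fun i => (ζ i).re) = f ζ from
    (hf.tubeSlice_torusMk hζ _).trans (congrArg f (tubePoint_re_im ζ))] at h
  refine h.congr_fun fun n => ?_
  rw [show UnitAddTorus.mFourierCoeff g n = _ from hc Y hζ n, smul_eq_mul, mul_assoc,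
    ← tubeChar_tubePoint, tubePoint_re_im]

/- The series converges uniformly on the torus, so its coefficients are those of its sum. -/
theorem eq_zero_of_hasSum_mul_tubeChar {c : (ι → ℤ) → ℂ} (Y : ι → ℝ)
    (h : ∀ x, HasSum (fun n => c n * tubeChar n (tubePoint x Y)) 0) (m : ι → ℤ) : c m = 0 := by
  set β : (ι → ℤ) → ℂ := fun n => c n * Real.exp (-(2 * Real.pi * ∑ i, n i * Y i)) with hβ
  have hβsum : ∀ x : ι → ℝ, HasSum (fun n => β n * UnitAddTorus.mFourier n (torusMk x)) 0 :=
    fun x => (h x).congr_fun fun n => by rw [tubeChar_tubePoint, mul_assoc]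
  have hβ_summable : Summable fun n => ‖β n‖ := by
    simpa [mFourier_torusMk, tubeChar] using (hβsum 0).summable.norm
  have hunif : Summable fun n => β n • UnitAddTorus.mFourier n :=
    .of_norm (hβ_summable.congr fun n => by rw [norm_smul, UnitAddTorus.mFourier_norm, mul_one])
  have hzero : ∑' n, β n • UnitAddTorus.mFourier n = 0 := by
    ext x
    obtain ⟨x, rfl⟩ := isOpenQuotientMap_torusMk.surjective x
    exact ((ContinuousMap.evalCLM ℂ (torusMk x)).hasSum hunif.hasSum).unique (hβsum x)
  have hL2 := (ContinuousMap.toLp (E := ℂ) 2 volume ℂ).hasSum (hzero ▸ hunif.hasSum)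
  have hinner := (innerSL ℂ (UnitAddTorus.mFourierLp 2 m)).hasSum hL2
  have horth := orthonormal_iff_ite.1 (UnitAddTorus.orthonormal_mFourier (d := ι)) m
  simp only [map_zero, map_smul, innerSL_apply_apply, horth, smul_eq_mul,
    mul_ite, mul_one, mul_zero] at hinner
  have hm : β m = 0 := by
    simpa using (hinner.unique (hasSum_single m fun n hn => if_neg hn.symm)).symm
  simpa [hβ] using hm

end Integration

end TorusFourier

/-- The character `e^{πinτ}` of period 2; the powers of `q = e^{πiτ}` are the monomials of
expansions of level 2. -/
def expPi (n : ℤ) (τ : ℂ) : ℂ := Complex.exp (Real.pi * I * n * τ)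

lemma norm_expPi (n : ℤ) (τ : ℂ) : ‖expPi n τ‖ = Real.exp (-(Real.pi * n * τ.im)) := by
  simp [expPi, Complex.norm_exp]

lemma expPi_ne_zero (n : ℤ) (τ : ℂ) : expPi n τ ≠ 0 := Complex.exp_ne_zero _

lemma expPi_add (n : ℤ) (τ σ : ℂ) : expPi n (τ + σ) = expPi n τ * expPi n σ := by
  simp [expPi, ← Complex.exp_add, mul_add]

lemma expPi_add_left (m n : ℤ) (τ : ℂ) : expPi (m + n) τ = expPi m τ * expPi n τ := by
  simp [expPi, ← Complex.exp_add, mul_add, add_mul]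

@[simp]
lemma expPi_zero_right (n : ℤ) : expPi n 0 = 1 := by simp [expPi]

@[simp]
lemma expPi_zero_left (τ : ℂ) : expPi 0 τ = 1 := by simp [expPi]

lemma expPi_one (n : ℤ) : expPi n 1 = (-1) ^ n := by
  rw [expPi, ← Complex.exp_pi_mul_I, ← Complex.exp_int_mul]
  ring_nf

theorem eq_zero_of_hasSum_mul_expPi {c : ℤ → ℂ} {y : ℝ}
    (h : ∀ τ : ℂ, τ.im = y → HasSum (fun n => c n * expPi n τ) 0) (m : ℤ) : c m = 0 := by
  refine eq_zero_of_hasSum_mul_tubeChar (ι := Unit) (c := fun n => c (n ())) (fun _ => y / 2)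
    (fun x => ?_) fun _ => m
  rw [← (Equiv.funUnique Unit ℤ).symm.hasSum_iff]
  refine (h (2 * tubePoint x (fun _ => y / 2) ()) ?_).congr_fun fun n => ?_
  · simp [tubePoint]
    ring
  · change c n * tubeChar (fun _ => n) _ = _
    simp only [tubeChar, expPi, Finset.univ_unique, Finset.sum_singleton]
    ring_nf

/-- The cone of positive definite binary quadratic forms `(Y₀ Y₁; Y₁ Y₂)`. -/
def siegelCone : Set (Fin 3 → ℝ) := {Y | 0 < Y 0 ∧ Y 1 ^ 2 < Y 0 * Y 2}

lemma isOpen_siegelCone : IsOpen siegelCone := by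
  rw [siegelCone, Set.ofPred_and]
  exact (isOpen_lt (by fun_prop) (by fun_prop)).inter (isOpen_lt (by fun_prop) (by fun_prop))

lemma convex_siegelCone : Convex ℝ siegelCone := by
  refine convex_iff_forall_pos.2 fun Y ⟨hY, hY'⟩ Z ⟨hZ, hZ'⟩ a b ha hb _ => ?_
  have mixed : 2 * (Y 1 * Z 1) < Y 0 * Z 2 + Z 0 * Y 2 := by
    refine lt_of_mul_lt_mul_left ?_ (mul_pos hY hZ).le
    nlinarith [sq_nonneg (Y 0 * Z 1 - Z 0 * Y 1), mul_lt_mul_of_pos_left hY' (pow_pos hZ 2),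
      mul_lt_mul_of_pos_left hZ' (pow_pos hY 2)]
  refine ⟨by simp only [Pi.add_apply, Pi.smul_apply, smul_eq_mul]; positivity, ?_⟩
  simp only [Pi.add_apply, Pi.smul_apply, smul_eq_mul]
  nlinarith [mul_lt_mul_of_pos_left hY' (pow_pos ha 2), mul_lt_mul_of_pos_left hZ' (pow_pos hb 2),
    mul_lt_mul_of_pos_left mixed (mul_pos ha hb)]

/-- The Siegel upper half space in the coordinates `(τ, z, σ) ↦ (τ z; z σ)`. -/
def siegelDomain : Set (ℂ × ℂ × ℂ) := {p | 0 < p.1.im ∧ p.2.1.im ^ 2 < p.1.im * p.2.2.im}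

/-- The monomial `e^{πi(mτ + bz + nσ)}`, where `(m, b, n)` is the exponent. -/
def siegelMonomial (e : ℤ × ℤ × ℤ) (p : ℂ × ℂ × ℂ) : ℂ :=
  expPi e.1 p.1 * expPi e.2.1 p.2.1 * expPi e.2.2 p.2.2

/-- `(m, b, n) ↦ ![m, b, n]`. -/
def tripleEquiv : ℤ × ℤ × ℤ ≃ (Fin 3 → ℤ) where
  toFun e := ![e.1, e.2.1, e.2.2]
  invFun n := (n 0, n 1, n 2)
  left_inv e := by simp
  right_inv n := by
    funext i
    fin_cases i <;> rfl

lemma siegelMonomial_eq_tubeChar (e : ℤ × ℤ × ℤ) (ζ : Fin 3 → ℂ) :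
    siegelMonomial e (2 * ζ 0, 2 * ζ 1, 2 * ζ 2) = tubeChar (tripleEquiv e) ζ := by
  simp only [siegelMonomial, expPi, tubeChar, tripleEquiv, Equiv.coe_fn_mk, Fin.sum_univ_three,
    ← Complex.exp_add, cons_val]
  ring_nf

lemma two_mul_mem_siegelDomain {ζ : Fin 3 → ℂ} :
    (2 * ζ 0, 2 * ζ 1, 2 * ζ 2) ∈ siegelDomain ↔ ζ ∈ tube siegelCone := by
  simp only [siegelDomain, tube, siegelCone, Set.mem_ofPred_eq, mul_im, re_ofNat, im_ofNat]
  refine and_congr ⟨fun h => by linarith, fun h => by linarith⟩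
    ⟨fun h => by nlinarith, fun h => by nlinarith⟩

/-- `f` is the sum of the Fourier series `∑ a(m,b,n) e^{πi(mτ + bz + nσ)}` on the Siegel upper half
space. -/
def HasFourierExpansion (f : ℂ × ℂ × ℂ → ℂ) (a : ℤ → ℤ → ℤ → ℂ) : Prop :=
  ∀ p ∈ siegelDomain, HasSum (fun e : ℤ × ℤ × ℤ => a e.1 e.2.1 e.2.2 * siegelMonomial e p) (f p)

theorem exists_hasFourierExpansion {f : ℂ × ℂ × ℂ → ℂ} (hf : DifferentiableOn ℂ f siegelDomain)
    (hper : ∀ τ z σ, (τ, z, σ) ∈ siegelDomain → ∀ a b c : ℤ,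
      f (τ + 2 * a, z + 2 * b, σ + 2 * c) = f (τ, z, σ)) :
    ∃ a, HasFourierExpansion f a := by
  have hg : IsPeriodicOnTube siegelCone fun ζ => f (2 * ζ 0, 2 * ζ 1, 2 * ζ 2) :=
    { differentiableOn := hf.comp (Differentiable.differentiableOn (by fun_prop))
        fun _ => two_mul_mem_siegelDomain.2
      periodic := fun ζ hζ n => by
        simpa only [mul_add] using
          hper _ _ _ (two_mul_mem_siegelDomain.2 hζ) (n 0) (n 1) (n 2) }
  obtain ⟨c, hc⟩ := hg.exists_hasSum isOpen_siegelCone convex_siegelCone.isPreconnected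
  refine ⟨fun m b n => c ![m, b, n], fun ⟨τ, z, σ⟩ hp => ?_⟩
  have hζ : ((2 * ![τ / 2, z / 2, σ / 2] 0, 2 * ![τ / 2, z / 2, σ / 2] 1,
      2 * ![τ / 2, z / 2, σ / 2] 2) : ℂ × ℂ × ℂ) = (τ, z, σ) := by
    simp [mul_div_cancel₀]
  have hsum := hc _ (two_mul_mem_siegelDomain.1 (hζ ▸ hp))
  rw [← tripleEquiv.hasSum_iff, hζ] at hsum
  refine hsum.congr_fun fun e => ?_
  rw [← hζ, siegelMonomial_eq_tubeChar]
  rfl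

theorem HasFourierExpansion.eq_zero {a : ℤ → ℤ → ℤ → ℂ} (h : HasFourierExpansion 0 a)
    (m b n : ℤ) : a m b n = 0 := by
  refine eq_zero_of_hasSum_mul_tubeChar (c := fun n => a (n 0) (n 1) (n 2)) ![1, 0, 1]
    (fun x => ?_) ![m, b, n]
  have hx : tubePoint x ![1, 0, 1] ∈ tube siegelCone :=
    tubePoint_mem_tube (by simp [siegelCone]) x
  rw [← tripleEquiv.hasSum_iff]
  exact (h _ (two_mul_mem_siegelDomain.2 hx)).congr_fun fun e => by
    rw [siegelMonomial_eq_tubeChar]; rfl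

theorem HasFourierExpansion.unique {f : ℂ × ℂ × ℂ → ℂ} {a a' : ℤ → ℤ → ℤ → ℂ}
    (h : HasFourierExpansion f a) (h' : HasFourierExpansion f a') (m b n : ℤ) :
    a m b n = a' m b n := by
  refine sub_eq_zero.1 (HasFourierExpansion.eq_zero (a := fun m b n => a m b n - a' m b n)
    (fun p hp => ?_) m b n)
  simpa [sub_mul] using (h p hp).sub (h' p hp)

/-- `f` is the sum of the series `∑ c(n) qⁿ`, `q = e^{πiτ}`, on the upper half plane. -/
def HasQExpansion (f : ℂ → ℂ) (c : ℤ → ℂ) : Prop :=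
  ∀ τ : ℂ, 0 < τ.im → HasSum (fun n => c n * expPi n τ) (f τ)

lemma HasQExpansion.eq_zero {f : ℂ → ℂ} {c : ℤ → ℂ} (hf : HasQExpansion f c)
    (h0 : ∀ τ : ℂ, 0 < τ.im → f τ = 0) (n : ℤ) : c n = 0 := by
  refine eq_zero_of_hasSum_mul_expPi (y := 1) (fun τ hτ => ?_) n
  have hpos : 0 < τ.im := hτ ▸ one_pos
  exact h0 τ hpos ▸ hf τ hpos

lemma expPi_natCast (k : ℕ) (τ : ℂ) : expPi k τ = expPi 1 τ ^ k := by
  rw [expPi, expPi, ← Complex.exp_nat_mul]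
  push_cast
  ring_nf

lemma exists_expPi_one_eq {q : ℂ} (hq : q ≠ 0) : ∃ τ, expPi 1 τ = q := by
  refine ⟨Complex.log q / (Real.pi * I), ?_⟩
  rw [expPi, Int.cast_one, mul_one, mul_div_cancel₀ _ (by simp [Real.pi_ne_zero]),
    Complex.exp_log hq]

lemma norm_expPi_one_le_iff {τ σ : ℂ} : ‖expPi 1 τ‖ ≤ ‖expPi 1 σ‖ ↔ σ.im ≤ τ.im := by
  simp [norm_expPi, Real.pi_pos]

lemma HasQExpansion.exists_differentiableOn {f : ℂ → ℂ} {c : ℤ → ℂ} (hf : HasQExpansion f c)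
    {M : ℤ} (hM : ∀ n < M, c n = 0) :
    ∃ H : ℂ → ℂ, DifferentiableOn ℂ H (Metric.ball 0 1) ∧
      ∀ τ : ℂ, 0 < τ.im → f τ = expPi M τ * H (expPi 1 τ) := by
  have hinj : Function.Injective (fun k : ℕ => (k : ℤ) + M) := fun a b h => by simpa using h
  have hterm (k : ℕ) (τ : ℂ) :
      c (k + M) * expPi (k + M) τ = expPi M τ * (c (k + M) * expPi 1 τ ^ k) := by
    rw [expPi_add_left, expPi_natCast]
    ring
  have hseries (τ : ℂ) (hτ : 0 < τ.im) :
      HasSum (fun k : ℕ => expPi M τ * (c (k + M) * expPi 1 τ ^ k)) (f τ) := by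
    simp_rw [← hterm]
    refine (hinj.hasSum_iff (f := fun n => c n * expPi n τ) fun n hn => ?_).2 (hf τ hτ)
    rw [hM n (lt_of_not_ge fun h => hn ⟨(n - M).toNat, by simp [h]⟩), zero_mul]
  refine ⟨fun q => ∑' k : ℕ, c (k + M) * q ^ k, fun q hq => ?_, fun τ hτ => ?_⟩
  · obtain ⟨r, hqr, hr⟩ := exists_between (mem_ball_zero_iff.1 hq)
    obtain ⟨τ, hτ⟩ := exists_expPi_one_eq (q := r)
      (by exact_mod_cast ((norm_nonneg q).trans_lt hqr).ne')
    have hr0 : ‖(r : ℂ)‖ = r := Complex.norm_of_nonneg ((norm_nonneg q).trans_lt hqr).le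
    have hτ0 : 0 < τ.im := by
      rw [← hτ, norm_expPi, Int.cast_one, mul_one] at hr0
      rw [← hr0, Real.exp_lt_one_iff, neg_lt_zero] at hr
      exact pos_of_mul_pos_right hr Real.pi_pos.le
    have hsum : Summable fun k : ℕ => ‖c (k + M)‖ * r ^ k := by
      have := ((summable_mul_left_iff (expPi_ne_zero M τ)).1 (hseries τ hτ0).summable).norm
      simpa only [hτ, norm_mul, norm_pow, hr0] using this
    refine ((differentiableOn_tsum_of_summable_norm hsum (fun k => by fun_prop)
      Metric.isOpen_ball fun k z hz => ?_).differentiableAt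
        (Metric.isOpen_ball.mem_nhds (mem_ball_zero_iff.2 hqr))).differentiableWithinAt
    rw [norm_mul, norm_pow]
    gcongr
    exact (mem_ball_zero_iff.1 hz).le
  · rw [← tsum_mul_left, (hseries τ hτ).tsum_eq]

theorem HasQExpansion.norm_le_mul_exp {f : ℂ → ℂ} {c : ℤ → ℂ} (hf : HasQExpansion f c) {M : ℤ}
    (hM : ∀ n < M, c n = 0) {y B : ℝ} (hy : 0 < y) (hB : ∀ τ : ℂ, τ.im = y → ‖f τ‖ ≤ B) {τ : ℂ}
    (hτ : y ≤ τ.im) : ‖f τ‖ ≤ B * Real.exp (-(Real.pi * M * (τ.im - y))) := by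
  obtain ⟨H, hH, hfH⟩ := hf.exists_differentiableOn hM
  set r := ‖expPi 1 (y * I)‖ with hr
  have hr0 : 0 < r := norm_pos_iff.2 (expPi_ne_zero _ _)
  have hr1 : r < 1 := by
    rw [hr, norm_expPi, Real.exp_lt_one_iff]
    simpa using mul_pos Real.pi_pos hy
  have hcl : DiffContOnCl ℂ H (Metric.ball 0 r) := by
    refine (hH.mono ?_).diffContOnCl
    rw [closure_ball _ hr0.ne']
    exact Metric.closedBall_subset_ball hr1
  have hfrontier : ∀ q ∈ frontier (Metric.ball (0 : ℂ) r),
      ‖H q‖ ≤ B * Real.exp (Real.pi * M * y) := by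
    intro q hq
    rw [frontier_ball _ hr0.ne', mem_sphere_zero_iff_norm] at hq
    obtain ⟨σ, rfl⟩ := exists_expPi_one_eq (norm_pos_iff.1 (hq ▸ hr0))
    have hσ : σ.im = y := by
      simpa using le_antisymm (norm_expPi_one_le_iff.1 hq.ge) (norm_expPi_one_le_iff.1 hq.le)
    have hbound := hB σ hσ
    rwa [hfH σ (hσ ▸ hy), norm_mul, norm_expPi, hσ, Real.exp_neg, inv_mul_le_iff₀ (Real.exp_pos _),
      mul_comm] at hbound
  have hmem : expPi 1 τ ∈ closure (Metric.ball (0 : ℂ) r) := by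
    rw [closure_ball _ hr0.ne', mem_closedBall_zero_iff, norm_expPi_one_le_iff]
    simpa using hτ
  calc ‖f τ‖ = Real.exp (-(Real.pi * M * τ.im)) * ‖H (expPi 1 τ)‖ := by
        rw [hfH τ (hy.trans_le hτ), norm_mul, norm_expPi]
    _ ≤ Real.exp (-(Real.pi * M * τ.im)) * (B * Real.exp (Real.pi * M * y)) := by
        gcongr
        exact norm_le_of_forall_mem_frontier_norm_le Metric.isBounded_ball hcl hfrontier hmem
    _ = B * Real.exp (-(Real.pi * M * (τ.im - y))) := by
        rw [mul_left_comm, ← Real.exp_add]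
        ring_nf

lemma HasQExpansion.exists_norm_le {f : ℂ → ℂ} {c : ℤ → ℂ} (hf : HasQExpansion f c) {y : ℝ}
    (hy : 0 < y) : ∃ B, ∀ τ : ℂ, τ.im = y → ‖f τ‖ ≤ B := by
  refine ⟨∑' n, ‖c n * expPi n (y * I)‖, fun τ hτ => ?_⟩
  have hterm (n : ℤ) : ‖c n * expPi n τ‖ = ‖c n * expPi n (y * I)‖ := by
    simp [norm_expPi, hτ]
  have hpos : 0 < τ.im := hτ ▸ hy
  rw [← (hf τ hpos).tsum_eq, ← tsum_congr hterm]
  exact norm_tsum_le_tsum_norm (hf τ hpos).summable.norm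

/-- The invariant norm `|f(τ)|² (Im τ)^w` of a function of weight `w`. -/
def peterssonNorm (w : ℕ) (f : ℂ → ℂ) (τ : ℂ) : ℝ := ‖f τ‖ ^ 2 * τ.im ^ w

lemma modularGroup_S_inv_smul (τ : UpperHalfPlane) : ModularGroup.S⁻¹ • τ = ModularGroup.S • τ := by
  rw [ModularGroup.S_inv, ModularGroup.SL_neg_smul]

/-- A family of functions on the upper half plane which is permuted by the weight `w` action of
`SL(2, ℤ)`. -/
structure IsModularFamily {ι : Type*} (w : ℕ) (f : ι → ℂ → ℂ) : Prop where
  translate : ∀ x (s : ℤ), ∃ y, ∀ τ : ℂ, 0 < τ.im → f x (τ + s) = f y τ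
  invert : ∀ x, ∃ y, ∀ τ : ℂ, 0 < τ.im → f x (-1 / τ) = τ ^ w * f y τ

namespace IsModularFamily

variable {ι : Type*} {w : ℕ} {f : ι → ℂ → ℂ}

lemma exists_peterssonNorm_T_zpow_smul_eq (hf : IsModularFamily w f) (s : ℤ) (x : ι) :
    ∃ y, ∀ τ : UpperHalfPlane, peterssonNorm w (f x) ↑(ModularGroup.T ^ s • τ) =
      peterssonNorm w (f y) τ := by
  obtain ⟨y, hy⟩ := hf.translate x s
  refine ⟨y, fun τ => ?_⟩
  rw [peterssonNorm, peterssonNorm, ModularGroup.coe_T_zpow_smul_eq, hy τ τ.im_pos]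
  simp

lemma exists_peterssonNorm_S_smul_eq (hf : IsModularFamily w f) (x : ι) :
    ∃ y, ∀ τ : UpperHalfPlane, peterssonNorm w (f x) ↑(ModularGroup.S • τ) =
      peterssonNorm w (f y) τ := by
  obtain ⟨y, hy⟩ := hf.invert x
  refine ⟨y, fun τ => ?_⟩
  have hτ : ‖(τ : ℂ)‖ ≠ 0 := norm_ne_zero_iff.2 τ.ne_zero
  have hS : ((ModularGroup.S • τ : UpperHalfPlane) : ℂ) = -1 / τ := by
    rw [UpperHalfPlane.modular_S_smul, UpperHalfPlane.coe_mk, inv_neg, neg_div, one_div]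
  have him : (-1 / (τ : ℂ)).im = τ.im / ‖(τ : ℂ)‖ ^ 2 := by
    rw [← Complex.normSq_eq_norm_sq]
    simp [neg_div]
  rw [peterssonNorm, peterssonNorm, hS, hy τ τ.im_pos, him, norm_mul, norm_pow,
    UpperHalfPlane.coe_im, div_pow, mul_pow, pow_right_comm]
  field_simp

lemma exists_peterssonNorm_smul_eq (hf : IsModularFamily w f)
    (g : SpecialLinearGroup (Fin 2) ℤ) (x : ι) :
    ∃ y, ∀ τ : UpperHalfPlane, peterssonNorm w (f x) ↑(g • τ) = peterssonNorm w (f y) τ := by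
  have hg : g ∈ Subgroup.closure {ModularGroup.S, ModularGroup.T} := by
    rw [SpecialLinearGroup.SL2Z_generators]
    trivial
  have step (g s : SpecialLinearGroup (Fin 2) ℤ)
      (hg : ∃ y, ∀ τ : UpperHalfPlane, peterssonNorm w (f x) ↑(g • τ) = peterssonNorm w (f y) τ)
      (hs : ∀ x, ∃ y, ∀ τ : UpperHalfPlane,
        peterssonNorm w (f x) ↑(s • τ) = peterssonNorm w (f y) τ) :
      ∃ y, ∀ τ : UpperHalfPlane,
        peterssonNorm w (f x) ↑((g * s) • τ) = peterssonNorm w (f y) τ := by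
    obtain ⟨y, hy⟩ := hg
    obtain ⟨z, hz⟩ := hs y
    exact ⟨z, fun τ => by rw [mul_smul, hy, hz]⟩
  induction hg using Subgroup.closure_induction_right with
  | one => exact ⟨x, fun τ => by rw [one_smul]⟩
  | mul_right g _ s hs ih =>
    rcases hs with rfl | rfl
    · exact step g _ ih hf.exists_peterssonNorm_S_smul_eq
    · simpa using step g _ ih (hf.exists_peterssonNorm_T_zpow_smul_eq 1)
  | mul_inv_cancel g _ s hs ih =>
    rcases hs with rfl | rfl
    · exact step g _ ih (by
        simpa only [modularGroup_S_inv_smul] using hf.exists_peterssonNorm_S_smul_eq)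
    · simpa using step g _ ih (hf.exists_peterssonNorm_T_zpow_smul_eq (-1))

lemma exists_three_le_four_mul_im_sq (hf : IsModularFamily w f) (x : ι) {τ : ℂ} (hτ : 0 < τ.im) :
    ∃ y, ∃ σ : ℂ, 0 < σ.im ∧ 3 ≤ 4 * σ.im ^ 2 ∧
      peterssonNorm w (f x) τ = peterssonNorm w (f y) σ := by
  lift τ to UpperHalfPlane using hτ
  obtain ⟨g, hg⟩ := ModularGroup.exists_smul_mem_fd τ
  obtain ⟨y, hy⟩ := hf.exists_peterssonNorm_smul_eq g⁻¹ x
  refine ⟨y, ↑(g • τ), (g • τ).im_pos, ModularGroup.three_le_four_mul_im_sq_of_mem_fd hg, ?_⟩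
  simpa using hy (g • τ)

end IsModularFamily

lemma exp_sq_mul_pow_le {w : ℕ} {M : ℤ} (hM : 1 ≤ M) (hw : (w : ℤ) ≤ 5 * M) {y : ℝ} (hy0 : 0 < y)
    (hy : 3 ≤ 4 * y ^ 2) :
    Real.exp (-(Real.pi * M * (y - 17 / 20))) ^ 2 * y ^ w ≤
      Real.exp (-(1 / 1000)) * (17 / 20) ^ w := by
  have hM' : (1 : ℝ) ≤ M := by exact_mod_cast hM
  have hw' : (w : ℝ) ≤ 5 * M := by exact_mod_cast hw
  have hyl : (0.866 : ℝ) ≤ y := by nlinarith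
  have hyw : y ^ w ≤ Real.exp (w * (20 / 17 * (y - 17 / 20))) * (17 / 20) ^ w := by
    rw [Real.exp_nat_mul, ← mul_pow]
    gcongr
    linarith [Real.add_one_le_exp (20 / 17 * (y - 17 / 20))]
  have hexponent : 2 * -(Real.pi * M * (y - 17 / 20)) + w * (20 / 17 * (y - 17 / 20)) ≤
      -(1 / 1000) := by
    have hπ : 3.14 * (M * (y - 17 / 20)) ≤ Real.pi * (M * (y - 17 / 20)) :=
      mul_le_mul_of_nonneg_right Real.pi_gt_d2.le (by nlinarith)
    nlinarith [mul_le_mul_of_nonneg_right hw' (by linarith : 0 ≤ y - 17 / 20)]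
  calc Real.exp (-(Real.pi * M * (y - 17 / 20))) ^ 2 * y ^ w
      ≤ Real.exp (-(Real.pi * M * (y - 17 / 20))) ^ 2 *
          (Real.exp (w * (20 / 17 * (y - 17 / 20))) * (17 / 20) ^ w) := by gcongr
    _ = Real.exp (2 * -(Real.pi * M * (y - 17 / 20)) + w * (20 / 17 * (y - 17 / 20))) *
          (17 / 20) ^ w := by
        rw [← Real.exp_nat_mul, ← mul_assoc, ← Real.exp_add, Nat.cast_ofNat]
    _ ≤ Real.exp (-(1 / 1000)) * (17 / 20) ^ w := by gcongr

namespace IsModularFamily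

variable {ι : Type*} {w : ℕ} {f : ι → ℂ → ℂ} {c : ι → ℤ → ℂ} {M : ℤ}

lemma peterssonNorm_le_of_le_on_line (hf : IsModularFamily w f)
    (hc : ∀ x, HasQExpansion (f x) (c x)) (hM : 1 ≤ M) (hw : (w : ℤ) ≤ 5 * M)
    (h0 : ∀ x, ∀ n < M, c x n = 0) {B : ℝ}
    (hB : ∀ x, ∀ τ : ℂ, τ.im = 17 / 20 → peterssonNorm w (f x) τ ≤ B) (x : ι) {τ : ℂ}
    (hτ : 0 < τ.im) : peterssonNorm w (f x) τ ≤ Real.exp (-(1 / 1000)) * B := by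
  have hy : (0 : ℝ) < (17 / 20) ^ w := by positivity
  have hB0 : 0 ≤ B := by
    refine le_trans ?_ (hB x ((17 / 20 : ℝ) * I) (by simp))
    simp only [peterssonNorm, mul_I_im, ofReal_re]
    positivity
  obtain ⟨y, σ, hσ, hσ3, hxy⟩ := hf.exists_three_le_four_mul_im_sq x hτ
  have hline (ρ : ℂ) (hρ : ρ.im = 17 / 20) : ‖f y ρ‖ ≤ √(B / (17 / 20) ^ w) := by
    refine Real.le_sqrt_of_sq_le ((le_div_iff₀ hy).2 ?_)
    simpa only [peterssonNorm, hρ] using hB y ρ hρ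
  have hdecay := (hc y).norm_le_mul_exp (h0 y) (by norm_num) hline (τ := σ) (by nlinarith)
  calc peterssonNorm w (f x) τ = ‖f y σ‖ ^ 2 * σ.im ^ w := hxy
    _ ≤ (√(B / (17 / 20) ^ w) * Real.exp (-(Real.pi * M * (σ.im - 17 / 20)))) ^ 2 * σ.im ^ w := by
        gcongr
    _ = B / (17 / 20) ^ w * (Real.exp (-(Real.pi * M * (σ.im - 17 / 20))) ^ 2 * σ.im ^ w) := by
        rw [mul_pow, Real.sq_sqrt (by positivity), mul_assoc]
    _ ≤ B / (17 / 20) ^ w * (Real.exp (-(1 / 1000)) * (17 / 20) ^ w) :=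
        mul_le_mul_of_nonneg_left (exp_sq_mul_pow_le hM hw hσ hσ3) (by positivity)
    _ = Real.exp (-(1 / 1000)) * B := by field_simp

lemma exists_peterssonNorm_le_on_line [Finite ι] (hc : ∀ x, HasQExpansion (f x) (c x)) {y : ℝ}
    (hy : 0 < y) : ∃ B, ∀ x, ∀ τ : ℂ, τ.im = y → peterssonNorm w (f x) τ ≤ B := by
  choose A hA using fun x => (hc x).exists_norm_le hy
  obtain ⟨B, hB⟩ := (Set.finite_range A).bddAbove
  refine ⟨B ^ 2 * y ^ w, fun x τ hτ => ?_⟩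
  have hAB : ‖f x τ‖ ≤ B := (hA x τ hτ).trans (hB ⟨x, rfl⟩)
  rw [peterssonNorm, hτ]
  gcongr

/-- The supremum of the invariant norms is finite, and is at most `e^{-1/1000}` times itself. -/
theorem coeff_eq_zero [Finite ι] (hf : IsModularFamily w f) (hc : ∀ x, HasQExpansion (f x) (c x))
    (hM : 1 ≤ M) (hw : (w : ℤ) ≤ 5 * M) (h0 : ∀ x, ∀ n < M, c x n = 0) (x : ι) (n : ℤ) :
    c x n = 0 := by
  obtain ⟨B, hB⟩ := exists_peterssonNorm_le_on_line (w := w) hc (y := 17 / 20) (by norm_num)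
  have hbdd : BddAbove
      (Set.range fun p : ι × UpperHalfPlane => peterssonNorm w (f p.1) p.2) := by
    refine ⟨Real.exp (-(1 / 1000)) * B, Set.forall_mem_range.2 fun p => ?_⟩
    exact hf.peterssonNorm_le_of_le_on_line hc hM hw h0 hB p.1 p.2.im_pos
  set S := ⨆ p : ι × UpperHalfPlane, peterssonNorm w (f p.1) p.2
  have hS (x : ι) (τ : ℂ) (hτ : 0 < τ.im) : peterssonNorm w (f x) τ ≤ S :=
    le_ciSup hbdd (x, ⟨τ, hτ⟩)
  have : Nonempty (ι × UpperHalfPlane) := ⟨(x, UpperHalfPlane.I)⟩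
  have hcontract : S ≤ Real.exp (-(1 / 1000)) * S := ciSup_le fun p =>
    hf.peterssonNorm_le_of_le_on_line hc hM hw h0
      (fun x τ hτ => hS x τ (by rw [hτ]; norm_num)) p.1 p.2.im_pos
  have hS0 : S ≤ 0 := by
    have : Real.exp (-(1 / 1000)) < 1 := Real.exp_lt_one_iff.2 (by norm_num)
    nlinarith
  refine (hc x).eq_zero (fun τ hτ => ?_) n
  have h := (hS x τ hτ).trans hS0
  rw [peterssonNorm] at h
  simpa using nonpos_of_mul_nonpos_left h (pow_pos hτ w)

end IsModularFamily

lemma exists_abs_eq_and_mul_add_sq_mul_le {b n : ℤ} (h : n < 0 ∨ n = 0 ∧ b ≠ 0) (N : ℕ) :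
    ∃ s : ℤ, |s| = N ∧ s * b + s ^ 2 * n ≤ -N := by
  have hN : (N : ℤ) ≤ N ^ 2 := mod_cast Nat.le_self_pow two_ne_zero N
  rcases le_or_gt 0 b with hb | hb
  · refine ⟨-N, by simp, ?_⟩
    rcases h with hn | ⟨rfl, hb'⟩
    · nlinarith [mul_nonneg (Int.natCast_nonneg N) hb]
    · nlinarith [hb.lt_of_ne' hb', Int.natCast_nonneg N]
  · refine ⟨N, by simp, ?_⟩
    rcases h with hn | ⟨rfl, -⟩ <;> nlinarith [Int.natCast_nonneg N]

lemma tendsto_add_pow_mul_exp_neg (r : ℝ) (j : ℕ) :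
    Tendsto (fun N : ℕ => (r + N) ^ j * Real.exp (-N)) atTop (𝓝 0) := by
  have hadd : Tendsto (fun N : ℕ => r + (N : ℝ)) atTop atTop :=
    tendsto_atTop_add_const_left _ _ tendsto_natCast_atTop_atTop
  have hlim := ((Real.tendsto_pow_mul_exp_neg_atTop_nhds_zero j).comp hadd).mul_const (Real.exp r)
  rw [zero_mul] at hlim
  refine hlim.congr fun N => ?_
  rw [Function.comp_apply, mul_assoc, ← Real.exp_add]
  ring_nf

lemma norm_eval_coeffPoly_le {ι : Type*} {j : ℕ} {a : ι → ℕ → ℤ → ℤ → ℤ → ℂ} {x : ι}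
    {m b n : ℤ} {B R : ℝ} (hB : ∀ i, ‖a x i m b n‖ ≤ B) {u : ℂ} (hR : 1 ≤ R) (hu : ‖u‖ ≤ R) :
    ‖(coeffPoly j a x m b n).eval u‖ ≤ (j + 1) * (B * R ^ j) := by
  simp only [coeffPoly, Polynomial.eval_finsetSum, Polynomial.eval_mul, Polynomial.eval_C,
    Polynomial.eval_pow, Polynomial.eval_X]
  calc ‖∑ l ∈ Finset.range (j + 1), a x l m b n * u ^ l‖
      ≤ ∑ _l ∈ Finset.range (j + 1), B * R ^ j := by
        refine norm_sum_le_of_le _ fun l hl => ?_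
        rw [norm_mul, norm_pow]
        have hB0 : 0 ≤ B := (norm_nonneg _).trans (hB l)
        gcongr
        · exact hB l
        · exact (pow_le_pow_left₀ (norm_nonneg u) hu l).trans
            (pow_le_pow_right₀ hR (Finset.mem_range_succ_iff.1 hl))
    _ = (j + 1) * (B * R ^ j) := by simp

/- Koecher's principle: the shift by a suitable `s` with `|s| = N` lowers the exponent `m` by at
least `N`, hence the bound on the coefficient polynomial by `e^{-N}`, while its argument grows only
linearly in `N`. -/
theorem IsCoeffSystem.eq_zero_of_norm_le_exp {ι : Type*} {j : ℕ}
    {a : ι → ℕ → ℤ → ℤ → ℤ → ℂ} (h : IsCoeffSystem j a) {K : ℝ}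
    (hK : ∀ x i m b n, ‖a x i m b n‖ ≤ K * Real.exp (Real.pi * (m + n)))
    (x : ι) (i : ℕ) (m : ℤ) {b n : ℤ} (hbn : n < 0 ∨ n = 0 ∧ b ≠ 0) : a x i m b n = 0 := by
  refine h.coeffPoly_eq_zero_iff.1 (Polynomial.funext fun u => ?_) i
  have hK0 : 0 ≤ K := nonneg_of_mul_nonneg_left ((norm_nonneg _).trans (hK x 0 0 0 0))
    (Real.exp_pos _)
  have bound : ∀ N : ℕ, ‖(coeffPoly j a x m b n).eval u‖ ≤
      (j + 1) * (K * Real.exp (Real.pi * (m + n))) * ((‖u‖ + 1 + N) ^ j * Real.exp (-N)) := by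
    intro N
    obtain ⟨s, hsN, hs⟩ := exists_abs_eq_and_mul_add_sq_mul_le hbn N
    obtain ⟨y, hy⟩ := h.shift x s
    have heval : (coeffPoly j a x m b n).eval u =
        (coeffPoly j a y (m + s * b + s ^ 2 * n) (b + 2 * s * n) n).eval (u - s) := by
      simp [hy]
    have hexp : Real.exp (Real.pi * (↑(m + s * b + s ^ 2 * n) + n)) ≤
        Real.exp (Real.pi * (m + n)) * Real.exp (-N) := by
      have hs' : (s * b + s ^ 2 * n : ℝ) ≤ -N := mod_cast hs
      rw [← Real.exp_add, Real.exp_le_exp]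
      push_cast
      nlinarith [Real.pi_gt_three, N.cast_nonneg (α := ℝ)]
    have hu : ‖u - s‖ ≤ ‖u‖ + 1 + N := by
      have hs' : ‖(s : ℂ)‖ = N := by rw [Complex.norm_intCast]; exact_mod_cast hsN
      linarith [norm_sub_le u s]
    rw [heval]
    refine (norm_eval_coeffPoly_le (fun l => (hK y l _ _ n).trans
      (mul_le_mul_of_nonneg_left hexp hK0)) ?_ hu).trans_eq (by ring)
    linarith [norm_nonneg u, N.cast_nonneg (α := ℝ)]
  have lim := (tendsto_add_pow_mul_exp_neg (‖u‖ + 1) j).const_mul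
    ((j + 1) * (K * Real.exp (Real.pi * (m + n))))
  rw [mul_zero] at lim
  simpa using ge_of_tendsto' lim bound

lemma norm_siegelMonomial (e : ℤ × ℤ × ℤ) (p : ℂ × ℂ × ℂ) : ‖siegelMonomial e p‖ =
    Real.exp (-(Real.pi * (e.1 * p.1.im + e.2.1 * p.2.1.im + e.2.2 * p.2.2.im))) := by
  simp only [siegelMonomial, norm_mul, norm_expPi, ← Real.exp_add]
  ring_nf

lemma mk_zero_mul_I_mem_siegelDomain {τ : ℂ} {t : ℝ} (hτ : 0 < τ.im) (ht : 0 < t) :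
    (τ, 0, t * I) ∈ siegelDomain :=
  ⟨hτ, by simpa using mul_pos hτ ht⟩

namespace HasFourierExpansion

variable {f : ℂ × ℂ × ℂ → ℂ} {c : ℤ → ℤ → ℤ → ℂ}

lemma norm_coeff_le (hf : HasFourierExpansion f c) :
    ∃ K, 0 ≤ K ∧ ∀ m b n, ‖c m b n‖ ≤ K * Real.exp (Real.pi * (m + n)) := by
  have hp : ((I : ℂ), (0 : ℂ), (I : ℂ)) ∈ siegelDomain := by
    simpa using mk_zero_mul_I_mem_siegelDomain (τ := I) (t := 1) (by simp) one_pos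
  have hs := (hf _ hp).summable.norm
  refine ⟨∑' e : ℤ × ℤ × ℤ, ‖c e.1 e.2.1 e.2.2 * siegelMonomial e (I, 0, I)‖,
    tsum_nonneg fun _ => norm_nonneg _, fun m b n => ?_⟩
  have hle := hs.le_tsum (m, b, n) fun _ _ => norm_nonneg _
  rwa [norm_mul, norm_siegelMonomial, Real.exp_neg, ← div_eq_mul_inv, div_le_iff₀ (Real.exp_pos _),
    I_im, zero_im, mul_one, mul_one, mul_zero, add_zero] at hle

lemma tendsto_term (hc : ∀ m b n, n < 0 ∨ n = 0 ∧ b ≠ 0 → c m b n = 0) (τ : ℂ) (e : ℤ × ℤ × ℤ) :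
    Tendsto (fun t : ℝ => c e.1 e.2.1 e.2.2 * siegelMonomial e (τ, 0, t * I)) atTop
      (𝓝 (if e.2 = 0 then c e.1 0 0 * expPi e.1 τ else 0)) := by
  obtain ⟨m, b, n⟩ := e
  by_cases hbn : n < 0 ∨ n = 0 ∧ b ≠ 0
  · have hne : (b, n) ≠ 0 := by
      rintro ⟨⟩
      simp at hbn
    simp [hc m b n hbn, hne]
  · rcases (not_lt.1 fun hn => hbn (.inl hn)).eq_or_lt with rfl | hn
    · obtain rfl : b = 0 := not_not.1 fun hb => hbn (.inr ⟨rfl, hb⟩)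
      simp [siegelMonomial]
    · rw [if_neg fun h => hn.ne' (congrArg Prod.snd h), tendsto_zero_iff_norm_tendsto_zero]
      simp only [norm_mul, norm_siegelMonomial]
      rw [← mul_zero ‖c m b n‖]
      refine (Real.tendsto_exp_neg_atTop_nhds_zero.comp ?_).const_mul _
      refine Tendsto.const_mul_atTop Real.pi_pos (tendsto_atTop_add_const_left _ _ ?_)
      simpa using tendsto_id.const_mul_atTop (Int.cast_pos.2 hn : (0 : ℝ) < n)

theorem hasSum_boundary (hf : HasFourierExpansion f c)
    (hc : ∀ m b n, n < 0 ∨ n = 0 ∧ b ≠ 0 → c m b n = 0) {τ L : ℂ} (hτ : 0 < τ.im)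
    (hL : Tendsto (fun t : ℝ => f (τ, 0, t * I)) atTop (𝓝 L)) :
    HasSum (fun m => c m 0 0 * expPi m τ) L := by
  set g : ℤ × ℤ × ℤ → ℂ := fun e => if e.2 = 0 then c e.1 0 0 * expPi e.1 τ else 0
  have hs := (hf _ (mk_zero_mul_I_mem_siegelDomain hτ one_pos)).summable.norm
  have bound : ∀ᶠ t : ℝ in atTop, ∀ e, ‖c e.1 e.2.1 e.2.2 * siegelMonomial e (τ, 0, t * I)‖ ≤
      ‖c e.1 e.2.1 e.2.2 * siegelMonomial e (τ, 0, ((1 : ℝ) : ℂ) * I)‖ := by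
    filter_upwards [eventually_ge_atTop 1] with t ht
    rintro ⟨m, b, n⟩
    rcases lt_or_ge n 0 with hn | hn
    · simp [hc m b n (.inl hn)]
    · have : (0 : ℝ) ≤ n := Int.cast_nonneg hn
      simp only [norm_mul, norm_siegelMonomial, mul_I_im, ofReal_re]
      gcongr
  have hg : Summable g := .of_norm_bounded hs fun e =>
    le_of_tendsto (tendsto_term hc τ e).norm (bound.mono fun _ ht => ht e)
  have hlim := tendsto_tsum_of_dominated_convergence hs (tendsto_term hc τ) bound
  have hsum : HasSum g L := by
    convert hg.hasSum
    refine tendsto_nhds_unique hL (hlim.congr' ?_)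
    filter_upwards [eventually_gt_atTop 0] with t ht
    exact (hf _ (mk_zero_mul_I_mem_siegelDomain hτ ht)).tsum_eq
  have hinj : Function.Injective fun m : ℤ => ((m, 0) : ℤ × ℤ × ℤ) := Prod.mk_left_injective 0
  rw [← hinj.hasSum_iff (f := g)] at hsum
  · simpa [g, Function.comp_def] using hsum
  · rintro ⟨m, q⟩ hq
    exact if_neg fun h : q = 0 => hq ⟨m, by rw [h]⟩

end HasFourierExpansion

/-- The transformation properties of the components `Φ x i`, in the coordinates `(τ z; z σ)`, of
the translates `F|γ`, indexed by `x`, of a cusp form of weight `(j, w)` and level `2`. The fields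
`shift` and `swap` concern `(τ z; z σ) ↦ u (τ z; z σ) uᵗ` for `u` unipotent and for `u` the
transposition of coordinates, `invert` the inversion in the variable `σ`. -/
structure IsCuspidalFamily {ι : Type*} (w j : ℕ) (Φ : ι → ℕ → ℂ × ℂ × ℂ → ℂ) : Prop where
  zero : ∀ x i p, j < i → Φ x i p = 0
  differentiableOn : ∀ x i, DifferentiableOn ℂ (Φ x i) siegelDomain
  periodic : ∀ x i τ z σ, (τ, z, σ) ∈ siegelDomain → ∀ a b c : ℤ,
    Φ x i (τ + 2 * a, z + 2 * b, σ + 2 * c) = Φ x i (τ, z, σ)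
  translate : ∀ x (a b c : ℤ), ∃ y, ∀ i τ z σ, (τ, z, σ) ∈ siegelDomain →
    Φ y i (τ, z, σ) = Φ x i (τ + a, z + b, σ + c)
  shift : ∀ x (s : ℤ), ∃ y, ∀ i τ z σ, (τ, z, σ) ∈ siegelDomain → Φ y i (τ, z, σ) =
    ∑ l ∈ Finset.range (j + 1), (l.choose i : ℂ) * (s : ℂ) ^ (l - i) *
      Φ x l (τ, z + s * τ, σ + 2 * s * z + s ^ 2 * τ)
  swap : ∀ x, ∃ y, ∀ i ≤ j, ∀ τ z σ, (τ, z, σ) ∈ siegelDomain →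
    Φ x i (τ, z, σ) = Φ y (j - i) (σ, z, τ)
  invert : ∀ x, ∃ y, ∀ i ≤ j, ∀ τ z σ, (τ, z, σ) ∈ siegelDomain →
    Φ x i (τ - z ^ 2 / σ, z / σ, -1 / σ) = σ ^ w * ∑ l ∈ Finset.range (i + 1),
      ((j - l).choose (i - l) : ℂ) * z ^ (i - l) * σ ^ l * Φ y l (τ, z, σ)
  cusp : ∀ x i τ, 0 < τ.im → Tendsto (fun t : ℝ => Φ x i (τ, 0, t * I)) atTop (𝓝 0)

lemma im_snd_snd_pos {p : ℂ × ℂ × ℂ} (hp : p ∈ siegelDomain) : 0 < p.2.2.im :=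
  pos_of_mul_pos_right ((sq_nonneg _).trans_lt hp.2) hp.1.le

lemma swap_mem_siegelDomain {τ z σ : ℂ} (hp : (τ, z, σ) ∈ siegelDomain) :
    (σ, z, τ) ∈ siegelDomain :=
  ⟨im_snd_snd_pos hp, hp.2.trans_eq (mul_comm _ _)⟩

lemma shift_mem_siegelDomain {τ z σ : ℂ} (hp : (τ, z, σ) ∈ siegelDomain) (s : ℤ) :
    (τ, z + s * τ, σ + 2 * s * z + s ^ 2 * τ) ∈ siegelDomain := by
  refine ⟨hp.1, ?_⟩
  have := hp.2
  simp [sq] at this ⊢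
  nlinarith

lemma translate_mem_siegelDomain {τ z σ : ℂ} (hp : (τ, z, σ) ∈ siegelDomain) (a b c : ℤ) :
    (τ + a, z + b, σ + c) ∈ siegelDomain := by
  simpa [siegelDomain] using hp

namespace HasFourierExpansion

variable {f : ℂ × ℂ × ℂ → ℂ} {c : ℤ → ℤ → ℤ → ℂ}

lemma comp_translate (hf : HasFourierExpansion f c) (r s t : ℤ) :
    HasFourierExpansion (fun p => f (p.1 + r, p.2.1 + s, p.2.2 + t))
      fun m b n => siegelMonomial (m, b, n) (r, s, t) * c m b n := fun p hp => by
  refine (hf _ (translate_mem_siegelDomain hp r s t)).congr_fun fun e => ?_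
  simp only [siegelMonomial, expPi_add]
  ring

lemma comp_swap (hf : HasFourierExpansion f c) :
    HasFourierExpansion (fun p => f (p.2.2, p.2.1, p.1)) fun m b n => c n b m := fun p hp => by
  have hsum := hf _ (swap_mem_siegelDomain hp)
  let e : ℤ × ℤ × ℤ ≃ ℤ × ℤ × ℤ :=
    ⟨fun q => (q.2.2, q.2.1, q.1), fun q => (q.2.2, q.2.1, q.1), fun _ => rfl, fun _ => rfl⟩
  rw [← e.hasSum_iff] at hsum
  refine hsum.congr_fun fun q => ?_
  simp only [siegelMonomial, e, Function.comp_apply, Equiv.coe_fn_mk]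
  ring

lemma comp_shift (hf : HasFourierExpansion f c) (s : ℤ) :
    HasFourierExpansion (fun p => f (p.1, p.2.1 + s * p.1, p.2.2 + 2 * s * p.2.1 + s ^ 2 * p.1))
      fun m b n => c (m - s * b + s ^ 2 * n) (b - 2 * s * n) n := fun p hp => by
  have hsum := hf _ (shift_mem_siegelDomain hp s)
  let e : ℤ × ℤ × ℤ ≃ ℤ × ℤ × ℤ :=
    { toFun q := (q.1 - s * q.2.1 + s ^ 2 * q.2.2, q.2.1 - 2 * s * q.2.2, q.2.2)
      invFun q := (q.1 + s * q.2.1 + s ^ 2 * q.2.2, q.2.1 + 2 * s * q.2.2, q.2.2)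
      left_inv q := by ext <;> simp; ring
      right_inv q := by ext <;> simp; ring }
  rw [← e.hasSum_iff] at hsum
  refine hsum.congr_fun fun q => ?_
  simp only [siegelMonomial, e, Function.comp_apply, Equiv.coe_fn_mk, expPi, ← Complex.exp_add]
  congr 2
  push_cast
  ring

lemma const_mul (hf : HasFourierExpansion f c) (r : ℂ) :
    HasFourierExpansion (fun p => r * f p) fun m b n => r * c m b n := fun p hp =>
  ((hf p hp).mul_left r).congr_fun fun _ => by ring

lemma congr {g : ℂ × ℂ × ℂ → ℂ} (hf : HasFourierExpansion f c)
    (h : ∀ τ z σ, (τ, z, σ) ∈ siegelDomain → g (τ, z, σ) = f (τ, z, σ)) :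
    HasFourierExpansion g c := fun p hp => by
  rw [h _ _ _ hp]
  exact hf p hp

lemma sum {κ : Type*} (s : Finset κ) {f : κ → ℂ × ℂ × ℂ → ℂ} {c : κ → ℤ → ℤ → ℤ → ℂ}
    (hf : ∀ l, HasFourierExpansion (f l) (c l)) :
    HasFourierExpansion (fun p => ∑ l ∈ s, f l p) fun m b n => ∑ l ∈ s, c l m b n := fun p hp => by
  simp only [Finset.sum_mul]
  exact hasSum_sum fun l _ => hf l p hp

end HasFourierExpansion

namespace IsCuspidalFamily

variable {ι : Type*} {w j : ℕ} {Φ : ι → ℕ → ℂ × ℂ × ℂ → ℂ} {a : ι → ℕ → ℤ → ℤ → ℤ → ℂ}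

lemma coeff_eq_zero_of_lt (h : IsCuspidalFamily w j Φ)
    (ha : ∀ x i, HasFourierExpansion (Φ x i) (a x i)) (x : ι) {i : ℕ} (m b n : ℤ)
    (hi : j < i) : a x i m b n = 0 :=
  HasFourierExpansion.eq_zero ((ha x i).congr fun _ _ _ _ => (h.zero x i _ hi).symm) m b n

lemma exists_coeff_translate (h : IsCuspidalFamily w j Φ)
    (ha : ∀ x i, HasFourierExpansion (Φ x i) (a x i)) (x : ι) (r s t : ℤ) :
    ∃ y, ∀ i m b n, a y i m b n = siegelMonomial (m, b, n) (r, s, t) * a x i m b n := by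
  obtain ⟨y, hy⟩ := h.translate x r s t
  exact ⟨y, fun i => (ha y i).unique
    (((ha x i).comp_translate r s t).congr (hy i))⟩

lemma exists_coeff_swap (h : IsCuspidalFamily w j Φ)
    (ha : ∀ x i, HasFourierExpansion (Φ x i) (a x i)) (x : ι) :
    ∃ y, ∀ i ≤ j, ∀ m b n, a x i m b n = a y (j - i) n b m := by
  obtain ⟨y, hy⟩ := h.swap x
  exact ⟨y, fun i hi => (ha x i).unique ((ha y (j - i)).comp_swap.congr (hy i hi))⟩

lemma exists_coeffPoly_shift (h : IsCuspidalFamily w j Φ)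
    (ha : ∀ x i, HasFourierExpansion (Φ x i) (a x i)) (x : ι) (s : ℤ) :
    ∃ y, ∀ m b n, coeffPoly j a y (m + s * b + s ^ 2 * n) (b + 2 * s * n) n =
      (coeffPoly j a x m b n).comp (Polynomial.X + Polynomial.C (s : ℂ)) := by
  obtain ⟨y, hy⟩ := h.shift x s
  refine ⟨y, fun m b n => Polynomial.ext fun i => ?_⟩
  have hcoeff : (coeffPoly j a y (m + s * b + s ^ 2 * n) (b + 2 * s * n) n).coeff i =
      a y i (m + s * b + s ^ 2 * n) (b + 2 * s * n) n := by
    rcases lt_or_ge j i with hi | hi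
    · simp [coeffPoly, h.coeff_eq_zero_of_lt ha _ _ _ _ hi]
    · simp [coeffPoly, Polynomial.coeff_X_pow, Nat.lt_succ_of_le hi]
  rw [hcoeff, (ha y i).unique ((HasFourierExpansion.sum (Finset.range (j + 1)) fun l =>
    ((ha x l).comp_shift s).const_mul ((l.choose i : ℂ) * (s : ℂ) ^ (l - i))).congr (hy i))]
  simp only [coeffPoly, Polynomial.sum_comp, Polynomial.mul_comp, Polynomial.C_comp,
    Polynomial.X_pow_comp, Polynomial.finsetSum_coeff, Polynomial.coeff_C_mul,
    Polynomial.coeff_X_add_C_pow]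
  refine Finset.sum_congr rfl fun l _ => ?_
  ring_nf

theorem isCoeffSystem (h : IsCuspidalFamily w j Φ)
    (ha : ∀ x i, HasFourierExpansion (Φ x i) (a x i)) : IsCoeffSystem j a where
  deg _ _ _ _ _ := h.coeff_eq_zero_of_lt ha _ _ _ _
  shift := h.exists_coeffPoly_shift ha
  swap := h.exists_coeff_swap ha
  sign x := by
    obtain ⟨y, hy⟩ := h.exists_coeff_translate ha x 0 1 0
    exact ⟨y, fun i m b n => by simp [hy, siegelMonomial, expPi_one]⟩

lemma exists_norm_coeff_le [Finite ι] (h : IsCuspidalFamily w j Φ)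
    (ha : ∀ x i, HasFourierExpansion (Φ x i) (a x i)) :
    ∃ K, ∀ x i m b n, ‖a x i m b n‖ ≤ K * Real.exp (Real.pi * (m + n)) := by
  have := Fintype.ofFinite ι
  choose K hK0 hK using fun x i => (ha x i).norm_coeff_le
  refine ⟨∑ x, ∑ i ∈ Finset.range (j + 1), K x i, fun x i m b n => ?_⟩
  rcases lt_or_ge j i with hi | hi
  · rw [h.coeff_eq_zero_of_lt ha x m b n hi, norm_zero]
    exact mul_nonneg (Finset.sum_nonneg fun x _ => Finset.sum_nonneg fun i _ => hK0 x i)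
      (Real.exp_pos _).le
  · refine (hK x i m b n).trans (mul_le_mul_of_nonneg_right ?_ (Real.exp_pos _).le)
    exact (Finset.single_le_sum (f := K x) (fun i _ => hK0 x i)
      (Finset.mem_range_succ_iff.2 hi)).trans (Finset.single_le_sum
        (f := fun x => ∑ i ∈ Finset.range (j + 1), K x i)
        (fun x _ => Finset.sum_nonneg fun i _ => hK0 x i) (Finset.mem_univ x))

theorem isCuspidalCoeffSystem [Finite ι] (h : IsCuspidalFamily w j Φ)
    (ha : ∀ x i, HasFourierExpansion (Φ x i) (a x i)) : IsCuspidalCoeffSystem j a := by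
  have hsys := h.isCoeffSystem ha
  obtain ⟨K, hK⟩ := h.exists_norm_coeff_le ha
  have koecher : ∀ x i m b n, n < 0 ∨ n = 0 ∧ b ≠ 0 → a x i m b n = 0 := fun x i m _ _ =>
    hsys.eq_zero_of_norm_le_exp hK x i m
  have boundary : ∀ x i m, a x i m 0 0 = 0 := fun x i =>
    eq_zero_of_hasSum_mul_expPi (y := 1) fun τ hτ =>
      have hτ' : 0 < τ.im := hτ ▸ one_pos
      (ha x i).hasSum_boundary (koecher x i) hτ' (h.cusp x i τ hτ')
  have pos : ∀ x i m b n, a x i m b n ≠ 0 → 1 ≤ n := fun x i m b n hne => by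
    by_contra hn
    rcases eq_or_ne n 0 with rfl | hn0
    · rcases eq_or_ne b 0 with rfl | hb
      · exact hne (boundary x i m)
      · exact hne (koecher x i m b 0 (.inr ⟨rfl, hb⟩))
    · exact hne (koecher x i m b n (.inl (by omega)))
  refine { hsys with supp := fun x i m b n hne => ⟨?_, pos x i m b n hne⟩ }
  obtain ⟨y, hy⟩ := hsys.swap x
  exact pos y _ _ _ _ (hy i (hsys.le_of_ne_zero hne) m b n ▸ hne)

end IsCuspidalFamily

theorem hasSum_mul_pow_div_factorial {κ : Type*} {u v : κ → ℂ}
    (h : Summable fun q => ‖u q‖ * Real.exp ‖v q‖) :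
    HasSum (fun p : κ × ℕ => u p.1 * (v p.1 ^ p.2 / p.2.factorial))
      (∑' q, u q * Complex.exp (v q)) := by
  have hexp (r : ℝ) : HasSum (fun k : ℕ => r ^ k / k.factorial) (Real.exp r) := by
    simpa only [Real.exp_eq_exp_ℝ] using NormedSpace.expSeries_div_hasSum_exp r
  have hnorm : Summable fun p : κ × ℕ => ‖u p.1‖ * (‖v p.1‖ ^ p.2 / p.2.factorial) := by
    rw [summable_prod_of_nonneg fun p => by dsimp only [Pi.zero_apply]; positivity]
    have htsum (q : κ) :
        ∑' k : ℕ, ‖u q‖ * (‖v q‖ ^ k / k.factorial) = ‖u q‖ * Real.exp ‖v q‖ := by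
      rw [tsum_mul_left, (hexp _).tsum_eq]
    exact ⟨fun q => (hexp ‖v q‖).summable.mul_left ‖u q‖, h.congr fun q => (htsum q).symm⟩
  have hsum : Summable fun p : κ × ℕ => u p.1 * (v p.1 ^ p.2 / p.2.factorial) :=
    .of_norm (hnorm.congr fun p => by
      rw [norm_mul, norm_div, norm_pow, Complex.norm_natCast])
  convert hsum.hasSum using 1
  refine (hsum.hasSum.prod_fiberwise fun q => ?_).tsum_eq
  simpa only [Complex.exp_eq_exp_ℂ] using
    (NormedSpace.expSeries_div_hasSum_exp (v q)).mul_left (u q)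

section LeadingCoefficient

variable {α : ℕ → ℂ} {f : ℂ → ℂ} {k : ℕ}

lemma tendsto_div_pow_of_hasSum (hf : ∀ z, HasSum (fun k => α k * z ^ k) (f z))
    (h0 : ∀ l < k, α l = 0) : Tendsto (fun z => f z / z ^ k) (𝓝[≠] 0) (𝓝 (α k)) := by
  have hsum : Summable fun l => ‖α (l + k)‖ := by
    have := (hf 1).summable.norm
    simp only [one_pow, mul_one] at this
    exact (summable_nat_add_iff k).2 this
  have hcont : ContinuousOn (fun z : ℂ => ∑' l, α (l + k) * z ^ l) (Metric.closedBall 0 1) := by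
    refine continuousOn_tsum (fun l => by fun_prop) hsum fun l z hz => ?_
    rw [norm_mul, norm_pow]
    exact mul_le_of_le_one_right (norm_nonneg _)
      (pow_le_one₀ (norm_nonneg _) (mem_closedBall_zero_iff.1 hz))
  have hlim := (hcont.continuousAt (Metric.closedBall_mem_nhds 0 one_pos)).tendsto
  rw [tsum_eq_single 0 fun l hl => by simp [hl], pow_zero, mul_one, zero_add] at hlim
  refine (hlim.mono_left nhdsWithin_le_nhds).congr' ?_
  filter_upwards [self_mem_nhdsWithin] with z (hz : z ≠ 0)
  have htail := (hf z).summable.sum_add_tsum_nat_add k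
  rw [(hf z).tsum_eq, Finset.sum_eq_zero fun l hl => by rw [h0 l (Finset.mem_range.1 hl), zero_mul],
    zero_add] at htail
  rw [← htail, eq_div_iff (pow_ne_zero _ hz), ← tsum_mul_right]
  exact tsum_congr fun l => by ring

lemma tendsto_pow_mul_div_pow_of_hasSum (hf : ∀ z, HasSum (fun k => α k * z ^ k) (f z)) {r : ℕ}
    (hr : 0 < r) (h0 : ∀ l, l + r ≤ k → α l = 0) :
    Tendsto (fun z => z ^ r * f z / z ^ k) (𝓝[≠] 0) (𝓝 0) := by
  have hlim := tendsto_div_pow_of_hasSum (k := k + 1 - r) hf fun l hl => h0 l (by omega)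
  have hpow : Tendsto (fun z : ℂ => z ^ (r + (k + 1 - r) - k)) (𝓝[≠] 0) (𝓝 0) := by
    have := (continuous_pow (M := ℂ) (r + (k + 1 - r) - k)).tendsto 0
    rw [zero_pow (by have := hr; omega)] at this
    exact this.mono_left nhdsWithin_le_nhds
  have hmul := hpow.mul hlim
  rw [zero_mul] at hmul
  refine hmul.congr' ?_
  filter_upwards [self_mem_nhdsWithin] with z (hz : z ≠ 0)
  rw [mul_div_assoc', div_eq_div_iff (pow_ne_zero _ hz) (pow_ne_zero _ hz), mul_right_comm,
    mul_right_comm (z ^ r), ← pow_add, ← pow_add]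
  congr 2
  omega

end LeadingCoefficient

/-- The general term of the series `∑ c(b,n) e^{πi(bz + nσ)}` defining a Jacobi form. -/
def jacobiTerm (c : ℤ → ℤ → ℂ) (z σ : ℂ) (q : ℤ × ℤ) : ℂ :=
  c q.1 q.2 * (expPi q.1 z * expPi q.2 σ)

/-- The Jacobi form `∑ c(b,n) e^{πi(bz + nσ)}`. -/
def jacobiSeries (c : ℤ → ℤ → ℂ) (z σ : ℂ) : ℂ := ∑' q, jacobiTerm c z σ q

/-- The function `∑ bᵏ c(b,n) e^{πinσ}`, which up to the factor `(πi)ᵏ` is the `k`-th derivative at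
`z = 0` of `∑ c(b,n) e^{πi(bz + nσ)}`. -/
def jacobiMoment (c : ℤ → ℤ → ℂ) (k : ℕ) (σ : ℂ) : ℂ :=
  ∑' q : ℤ × ℤ, (q.1 : ℂ) ^ k * c q.1 q.2 * expPi q.2 σ

section JacobiSeries

variable {c : ℤ → ℤ → ℂ} {σ : ℂ} (hc : ∀ z, Summable (jacobiTerm c z σ))
include hc

lemma summable_mul_exp_norm (z : ℂ) : Summable fun q : ℤ × ℤ =>
    ‖c q.1 q.2 * expPi q.2 σ‖ * Real.exp ‖(Real.pi * I * q.1 * z : ℂ)‖ := by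
  refine Summable.of_nonneg_of_le (fun q => by positivity) (fun q => ?_)
    ((hc (‖z‖ * I)).norm.add (hc (-‖z‖ * I)).norm)
  have hexp : Real.exp ‖(Real.pi * I * q.1 * z : ℂ)‖ ≤ ‖expPi q.1 (‖z‖ * I)‖ +
      ‖expPi q.1 (-‖z‖ * I)‖ := by
    simp only [norm_expPi, norm_mul, norm_real, norm_I, Complex.norm_intCast,
      Real.norm_of_nonneg Real.pi_pos.le]
    rcases abs_cases (q.1 : ℝ) with ⟨h, _⟩ | ⟨h, _⟩
    · rw [h]
      exact le_add_of_nonneg_of_le (Real.exp_pos _).le (by simp)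
    · rw [h]
      exact le_add_of_le_of_nonneg (by simp) (Real.exp_pos _).le
  simp only [jacobiTerm, norm_mul] at hexp ⊢
  nlinarith [mul_le_mul_of_nonneg_left hexp
    (mul_nonneg (norm_nonneg (c q.1 q.2)) (norm_nonneg (expPi q.2 σ)))]

lemma hasSum_jacobiSeries_exp (z : ℂ) : HasSum (fun p : (ℤ × ℤ) × ℕ =>
    c p.1.1 p.1.2 * expPi p.1.2 σ * ((Real.pi * I * p.1.1 * z : ℂ) ^ p.2 / p.2.factorial))
    (jacobiSeries c z σ) := by
  convert hasSum_mul_pow_div_factorial (summable_mul_exp_norm hc z) using 1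
  exact tsum_congr fun q => by rw [jacobiTerm, expPi]; ring

lemma summable_jacobiMoment (k : ℕ) :
    Summable fun q : ℤ × ℤ => (q.1 : ℂ) ^ k * c q.1 q.2 * expPi q.2 σ := by
  have hinj : Function.Injective fun q : ℤ × ℤ => (q, k) := Prod.mk_left_injective k
  have hne : ((Real.pi * I) ^ k / k.factorial : ℂ) ≠ 0 := by
    simp [Real.pi_ne_zero, Nat.factorial_ne_zero]
  refine (summable_mul_left_iff hne).1
    (((hasSum_jacobiSeries_exp hc 1).summable.comp_injective hinj).congr fun q => ?_)
  simp only [Function.comp_apply, mul_one, mul_pow (Real.pi * I : ℂ)]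
  ring

theorem hasSum_taylor_jacobiSeries (z : ℂ) : HasSum
    (fun k : ℕ => (Real.pi * I : ℂ) ^ k / k.factorial * jacobiMoment c k σ * z ^ k)
    (jacobiSeries c z σ) := by
  refine ((Equiv.prodComm ℕ (ℤ × ℤ)).hasSum_iff.2
    (hasSum_jacobiSeries_exp hc z)).prod_fiberwise fun k => ?_
  rw [mul_right_comm]
  refine ((summable_jacobiMoment hc k).hasSum.mul_left _).congr_fun fun q => ?_
  simp only [Function.comp_apply, Equiv.prodComm_apply, Prod.swap_prod_mk, mul_pow]
  ring

end JacobiSeries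

lemma tendsto_jacobiSeries_div_pow {c : ℤ → ℤ → ℂ} {σ : ℂ} {k : ℕ}
    (hc : ∀ z, Summable (jacobiTerm c z σ)) (hc0 : ∀ k' < k, jacobiMoment c k' σ = 0) :
    Tendsto (fun z => jacobiSeries c z σ / z ^ k) (𝓝[≠] 0)
      (𝓝 ((Real.pi * I) ^ k / k.factorial * jacobiMoment c k σ)) :=
  tendsto_div_pow_of_hasSum (hasSum_taylor_jacobiSeries hc) fun l hl => by rw [hc0 l hl, mul_zero]

lemma tendsto_expPi_mul_jacobiSeries_div_pow {c : ℤ → ℤ → ℂ} {σ ρ : ℂ} {k : ℕ}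
    (hc : ∀ z, Summable (jacobiTerm c z ρ)) (hc0 : ∀ k' < k, jacobiMoment c k' ρ = 0) (m : ℤ)
    (hσ : σ ≠ 0) :
    Tendsto (fun z => expPi m (-(z ^ 2 / σ)) * jacobiSeries c (z / σ) ρ / z ^ k) (𝓝[≠] 0)
      (𝓝 ((Real.pi * I) ^ k / k.factorial * jacobiMoment c k ρ / σ ^ k)) := by
  have hexp : Tendsto (fun z : ℂ => expPi m (-(z ^ 2 / σ))) (𝓝[≠] 0) (𝓝 1) := by
    have hcont : Continuous fun z : ℂ => expPi m (-(z ^ 2 / σ)) := by unfold expPi; fun_prop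
    simpa using (hcont.tendsto 0).mono_left nhdsWithin_le_nhds
  have hscale : Tendsto (fun z : ℂ => z / σ) (𝓝[≠] 0) (𝓝[≠] 0) := by
    refine tendsto_nhdsWithin_iff.2 ⟨?_, ?_⟩
    · simpa using ((continuous_id.div_const σ).tendsto 0).mono_left nhdsWithin_le_nhds
    · filter_upwards [self_mem_nhdsWithin] with z hz using div_ne_zero hz hσ
  have hlim := (hexp.mul ((tendsto_jacobiSeries_div_pow hc hc0).comp hscale)).div_const (σ ^ k)
  rw [one_mul] at hlim
  refine hlim.congr fun z => ?_
  rw [Function.comp_apply, div_pow]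
  field_simp

/- Both sides of the hypothesis on `jacobiSeries` are divided by `zᵏ`, and their limits at `z = 0`
are compared: by the vanishing of moments only the summand `l = i` contributes on the right. -/
theorem jacobiMoment_invert {w i k : ℕ} {m : ℤ} {σ : ℂ} {c : ℤ → ℤ → ℂ} {d : ℕ → ℤ → ℤ → ℂ}
    {β : ℕ → ℂ} (hβ : β i = 1) (hσ : σ ≠ 0)
    (hc : ∀ z, Summable (jacobiTerm c z (-1 / σ))) (hd : ∀ l z, Summable (jacobiTerm (d l) z σ))
    (h : ∀ z, expPi m (-(z ^ 2 / σ)) * jacobiSeries c (z / σ) (-1 / σ) = σ ^ w *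
      ∑ l ∈ Finset.range (i + 1), β l * z ^ (i - l) * σ ^ l * jacobiSeries (d l) z σ)
    (hc0 : ∀ k' < k, jacobiMoment c k' (-1 / σ) = 0)
    (hd0 : ∀ l k', l ≤ i → k' + (i - l) ≤ k → ¬(l = i ∧ k' = k) → jacobiMoment (d l) k' σ = 0) :
    jacobiMoment c k (-1 / σ) = σ ^ (w + i + k) * jacobiMoment (d i) k σ := by
  set C : ℂ := (Real.pi * I) ^ k / k.factorial with hC
  have hC0 : C ≠ 0 := by simp [hC, Real.pi_ne_zero, Nat.factorial_ne_zero]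
  have right : ∀ l ∈ Finset.range (i + 1), Tendsto
      (fun z => β l * σ ^ l * (z ^ (i - l) * jacobiSeries (d l) z σ / z ^ k)) (𝓝[≠] 0)
      (𝓝 (if l = i then σ ^ i * (C * jacobiMoment (d i) k σ) else 0)) := by
    intro l hl
    split_ifs with hli
    · subst hli
      simpa [hβ] using (tendsto_jacobiSeries_div_pow (hd l) fun k' hk' =>
        hd0 l k' le_rfl (by omega) (by omega)).const_mul (σ ^ l)
    · have hli' : l < i := (Finset.mem_range_succ_iff.1 hl).lt_of_ne hli
      have hlim := (tendsto_pow_mul_div_pow_of_hasSum (hasSum_taylor_jacobiSeries (hd l))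
        (Nat.sub_pos_of_lt hli') fun k' hk' => by
          rw [hd0 l k' hli'.le hk' (by omega), mul_zero]).const_mul (β l * σ ^ l)
      rwa [mul_zero] at hlim
  have hlimits := tendsto_nhds_unique
    ((tendsto_expPi_mul_jacobiSeries_div_pow hc hc0 m hσ).congr fun z => ?_)
    ((tendsto_finsetSum _ right).const_mul (σ ^ w))
  · rw [Finset.sum_ite_eq', if_pos (by simp), div_eq_iff (pow_ne_zero k hσ)] at hlimits
    refine mul_left_cancel₀ hC0 (hlimits.trans ?_)
    ring
  · rw [h z, mul_div_assoc, Finset.sum_div]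
    exact congrArg _ (Finset.sum_congr rfl fun l _ => by ring)

lemma eventually_mem_siegelDomain (z : ℂ) {σ : ℂ} (hσ : 0 < σ.im) :
    ∀ᶠ T : ℝ in atTop, ∀ τ : ℂ, τ.im = T → (τ, z, σ) ∈ siegelDomain := by
  filter_upwards [eventually_gt_atTop 0, eventually_gt_atTop (z.im ^ 2 / σ.im)] with T h1 h2 τ hτ
  rw [div_lt_iff₀ hσ] at h2
  exact ⟨hτ ▸ h1, hτ ▸ h2⟩

lemma neg_one_div_im_pos {σ : ℂ} (hσ : 0 < σ.im) : 0 < (-1 / σ).im := by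
  have h0 : σ ≠ 0 := by
    rintro rfl
    simp at hσ
  rw [neg_div, one_div, Complex.neg_im, Complex.inv_im, neg_div, neg_neg]
  exact div_pos hσ (Complex.normSq_pos.2 h0)

namespace HasFourierExpansion

variable {f : ℂ × ℂ × ℂ → ℂ} {c : ℤ → ℤ → ℤ → ℂ}

lemma summable_jacobiTerm (hf : HasFourierExpansion f c) (m : ℤ) (z : ℂ) {σ : ℂ}
    (hσ : 0 < σ.im) : Summable (jacobiTerm (c m) z σ) := by
  obtain ⟨T, hT⟩ := (eventually_mem_siegelDomain z hσ).exists
  refine (summable_mul_left_iff (expPi_ne_zero m (T * I))).1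
    (((hf _ (hT (T * I) (by simp))).summable.prod_factor m).congr fun q => ?_)
  simp only [siegelMonomial, jacobiTerm]
  ring

lemma hasSum_jacobiSeries (hf : HasFourierExpansion f c) {τ z σ : ℂ}
    (hp : (τ, z, σ) ∈ siegelDomain) :
    HasSum (fun m => jacobiSeries (c m) z σ * expPi m τ) (f (τ, z, σ)) := by
  refine (hf _ hp).prod_fiberwise fun m => ?_
  refine ((hf.summable_jacobiTerm m z (im_snd_snd_pos hp)).hasSum.mul_right
    (expPi m τ)).congr_fun fun q => ?_
  simp only [siegelMonomial, jacobiTerm]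
  ring

end HasFourierExpansion

namespace IsCuspidalFamily

variable {ι : Type*} {w j : ℕ} {Φ : ι → ℕ → ℂ × ℂ × ℂ → ℂ} {a : ι → ℕ → ℤ → ℤ → ℤ → ℂ}

lemma exists_jacobiSeries_invert (h : IsCuspidalFamily w j Φ)
    (ha : ∀ x i, HasFourierExpansion (Φ x i) (a x i)) (x : ι) :
    ∃ y, ∀ i ≤ j, ∀ (m : ℤ) (z σ : ℂ), 0 < σ.im →
      expPi m (-(z ^ 2 / σ)) * jacobiSeries (a x i m) (z / σ) (-1 / σ) =
        σ ^ w * ∑ l ∈ Finset.range (i + 1),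
          ((j - l).choose (i - l) : ℂ) * z ^ (i - l) * σ ^ l * jacobiSeries (a y l m) z σ := by
  obtain ⟨y, hy⟩ := h.invert x
  refine ⟨y, fun i hi m z σ hσ => sub_eq_zero.1 ?_⟩
  obtain ⟨T, hT, hT'⟩ := ((eventually_mem_siegelDomain z hσ).and
    ((tendsto_atTop_add_const_right atTop (-(z ^ 2 / σ).im) tendsto_id).eventually
      (eventually_mem_siegelDomain (z / σ) (neg_one_div_im_pos hσ)))).exists
  refine eq_zero_of_hasSum_mul_expPi (y := T) (c := fun m =>
    expPi m (-(z ^ 2 / σ)) * jacobiSeries (a x i m) (z / σ) (-1 / σ) -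
      σ ^ w * ∑ l ∈ Finset.range (i + 1),
        ((j - l).choose (i - l) : ℂ) * z ^ (i - l) * σ ^ l * jacobiSeries (a y l m) z σ)
    (fun τ hτ => ?_) m
  have hright := (hasSum_sum fun l (_ : l ∈ Finset.range (i + 1)) =>
    ((ha y l).hasSum_jacobiSeries (hT τ hτ)).mul_left
      (((j - l).choose (i - l) : ℂ) * z ^ (i - l) * σ ^ l)).mul_left (σ ^ w)
  rw [← hy i hi τ z σ (hT τ hτ)] at hright
  have hdiff := ((ha x i).hasSum_jacobiSeries
    (hT' (τ - z ^ 2 / σ) (by simp [hτ, sub_eq_add_neg]))).sub hright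
  rw [sub_self] at hdiff
  refine hdiff.congr_fun fun m => ?_
  simp only [sub_mul, sub_eq_add_neg τ, expPi_add, Finset.mul_sum, Finset.sum_mul]
  congr 1
  · ring
  · exact Finset.sum_congr rfl fun l _ => by ring

lemma hasQExpansion_jacobiMoment [Finite ι] (h : IsCuspidalFamily w j Φ)
    (ha : ∀ x i, HasFourierExpansion (Φ x i) (a x i)) (x : ι) (i k : ℕ) (m : ℤ) :
    HasQExpansion (jacobiMoment (a x i m) k) (moment a x i k m) := fun σ hσ => by
  refine ((Equiv.prodComm ℤ ℤ).hasSum_iff.2 (summable_jacobiMoment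
    (fun z => (ha x i).summable_jacobiTerm m z hσ) k).hasSum).prod_fiberwise fun n => ?_
  rw [moment, Finset.sum_mul]
  refine hasSum_sum_of_ne_finset_zero fun b hb => ?_
  have hzero : a x i m b n = 0 :=
    not_not.1 fun hne => hb ((h.isCuspidalCoeffSystem ha).mem_Icc_of_ne_zero hne)
  simp [hzero]

lemma isModularFamily_jacobiMoment [Finite ι] (h : IsCuspidalFamily w j Φ)
    (ha : ∀ x i, HasFourierExpansion (Φ x i) (a x i)) {i k : ℕ} {m : ℤ} (hi : i ≤ j)
    (h0 : ∀ l k' : ℕ, l ≤ i → k' + (i - l) ≤ k → ¬(l = i ∧ k' = k) →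
      ∀ x n, moment a x l k' m n = 0) :
    IsModularFamily (w + i + k) fun x => jacobiMoment (a x i m) k where
  translate x s := by
    obtain ⟨y, hy⟩ := h.exists_coeff_translate ha x 0 0 s
    refine ⟨y, fun σ _ => tsum_congr fun q => ?_⟩
    simp only [hy, siegelMonomial, expPi_add, Int.cast_zero, expPi_zero_right]
    ring
  invert x := by
    obtain ⟨y, hy⟩ := h.exists_jacobiSeries_invert ha x
    have hD0 : ∀ l k' : ℕ, l ≤ i → k' + (i - l) ≤ k → ¬(l = i ∧ k' = k) → ∀ x σ, 0 < σ.im →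
        jacobiMoment (a x l m) k' σ = 0 := fun l k' hl hk hne x σ hσ => by
      rw [← (h.hasQExpansion_jacobiMoment ha x l k' m σ hσ).tsum_eq]
      simp [h0 l k' hl hk hne]
    refine ⟨y, fun σ hσ => jacobiMoment_invert (β := fun l => ((j - l).choose (i - l) : ℂ))
      (d := fun l => a y l m) (by simp) ?_ (fun z => (ha x i).summable_jacobiTerm m z
        (neg_one_div_im_pos hσ)) (fun l z => (ha y l).summable_jacobiTerm m z hσ)
      (fun z => hy i hi m z σ hσ) (fun k' hk' => hD0 i k' le_rfl (by omega) (by omega) x _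
        (neg_one_div_im_pos hσ)) fun l k' hl hk hne => hD0 l k' hl hk hne y σ hσ⟩
    rintro rfl
    simp at hσ

theorem isModularCoeffSystem [Finite ι] (h : IsCuspidalFamily w j Φ)
    (ha : ∀ x i, HasFourierExpansion (Φ x i) (a x i)) : IsModularCoeffSystem w j a :=
  { h.isCuspidalCoeffSystem ha with
    moment_eq_zero := fun i k m _ hi hM hw h0 hord =>
      (h.isModularFamily_jacobiMoment ha hi h0).coeff_eq_zero
        (fun x => h.hasQExpansion_jacobiMoment ha x i k m) hM (mod_cast hw) hord }

theorem eq_zero_of_le_ten [Finite ι] (h : IsCuspidalFamily 2 j Φ) (hj : j ≤ 10) (x : ι) (i : ℕ)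
    {p : ℂ × ℂ × ℂ} (hp : p ∈ siegelDomain) : Φ x i p = 0 := by
  choose a ha using fun x i => exists_hasFourierExpansion (h.differentiableOn x i) (h.periodic x i)
  rw [← (ha x i p hp).tsum_eq]
  simp [(h.isModularCoeffSystem ha).coeff_eq_zero_of_le_ten hj]

end IsCuspidalFamily

section UpperHalfSpace

open scoped ComplexOrder

lemma posDef_fin_two_iff {𝕜 : Type*} [RCLike 𝕜] {A : Matrix (Fin 2) (Fin 2) 𝕜}
    (hA : A.IsHermitian) : A.PosDef ↔ 0 < A 0 0 ∧ 0 < A.det := by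
  refine ⟨fun h => ⟨h.diag_pos, h.det_pos⟩, fun ⟨h0, hdet⟩ => ?_⟩
  set L : Matrix (Fin 2) (Fin 2) 𝕜 := !![1, A 0 1 / A 0 0; 0, 1] with hL
  have hfactor : A = Lᴴ * diagonal ![A 0 0, A.det / A 0 0] * L := by
    have h00 : star (A 0 0) = A 0 0 := hA.apply 0 0
    have h01 : star (A 0 1) = A 1 0 := hA.apply 1 0
    have hne : A 0 0 ≠ 0 := h0.ne'
    simp only [RCLike.star_def] at h00 h01
    ext i k
    fin_cases i <;> fin_cases k <;>
      simp [hL, h00, h01, mul_apply, det_fin_two] <;> field_simp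
    ring
  rw [hfactor]
  refine (PosDef.diagonal fun i => ?_).conjTranspose_mul_mul_same
    (mulVec_injective_of_isUnit ((isUnit_iff_isUnit_det L).2 (by simp [hL])))
  fin_cases i
  exacts [h0, div_pos hdet h0]

variable {τ : Fin 2 → Fin 2 → ℂ}

lemma isSymm_of_iff : (of τ).IsSymm ↔ τ 1 0 = τ 0 1 := by
  refine ⟨fun h => h.apply 0 1, fun h => ?_⟩
  ext i k
  fin_cases i <;> fin_cases k <;> simp [h]

theorem mem_H2_iff_mem_siegelDomain :
    τ ∈ H2 ↔ τ 1 0 = τ 0 1 ∧ (τ 0 0, τ 0 1, τ 1 1) ∈ siegelDomain := by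
  rw [H2, Set.mem_ofPred_eq, isSymm_of_iff]
  refine and_congr_right fun hsymm => ?_
  have hherm : (of fun i k => (τ i k).im).IsHermitian := by
    ext i k
    fin_cases i <;> fin_cases k <;> simp [hsymm]
  rw [posDef_fin_two_iff hherm, det_fin_two, sub_pos]
  simp [siegelDomain, hsymm, sq]

/- For symmetric `τ` the Hermitian matrix `i(τ* - τ)` is twice the imaginary part of `τ`. -/
theorem mem_H2_iff_posDef : τ ∈ H2 ↔ (of τ).IsSymm ∧ (I • ((of τ)ᴴ - of τ)).PosDef := by
  rw [mem_H2_iff_mem_siegelDomain, isSymm_of_iff]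
  refine and_congr_right fun hsymm => ?_
  have hherm : (I • ((of τ)ᴴ - of τ)).IsHermitian := by
    rw [IsHermitian, conjTranspose_smul, conjTranspose_sub, conjTranspose_conjTranspose,
      Complex.star_def, conj_I, neg_smul, ← smul_neg, neg_sub]
  have him (z : ℂ) : I * (star z - z) = ((2 * z.im : ℝ) : ℂ) := by
    apply Complex.ext <;> simp [two_mul]
  rw [posDef_fin_two_iff hherm, det_fin_two]
  simp only [Matrix.smul_apply, Matrix.sub_apply, conjTranspose_apply, of_apply, smul_eq_mul,
    hsymm, him]
  rw [← ofReal_mul, ← ofReal_mul, ← ofReal_sub]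
  simp only [zero_lt_real, siegelDomain, Set.mem_ofPred_eq]
  exact and_congr (by simp) ⟨fun h => by linarith, fun h => by linarith⟩

end UpperHalfSpace

section BlockRelations

variable (γ δ : Matrix (Fin 4) (Fin 4) ℤ) (r s : Fin 2)

lemma blk_mul : blk (γ * δ) r s = blk γ r 0 * blk δ 0 s + blk γ r 1 * blk δ 1 s := by
  ext i k
  simp only [blk, of_apply, Matrix.add_apply, mul_apply, Fin.sum_univ_four, Fin.sum_univ_two]
  push_cast
  rw [← add_assoc]
  rfl

lemma blk_transpose : blk γᵀ r s = (blk γ s r)ᵀ := rfl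

lemma blk_conjTranspose : (blk γ r s)ᴴ = (blk γ r s)ᵀ := by
  ext
  simp [blk]

lemma blk_one : blk 1 r s = if r = s then 1 else 0 := by
  ext i k
  fin_cases r <;> fin_cases s <;> fin_cases i <;> fin_cases k <;> simp [blk, one_apply]

lemma blk_neg : blk (-γ) r s = -blk γ r s := by
  ext
  simp [blk]

lemma blk_J4 : blk J4 r s = !![0, 1; -1, 0] r s • (1 : Matrix (Fin 2) (Fin 2) ℂ) := by
  ext i k
  fin_cases r <;> fin_cases s <;> fin_cases i <;> fin_cases k <;> simp [blk, J4]

end BlockRelations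

namespace Sp4Z

variable {γ δ : Matrix (Fin 4) (Fin 4) ℤ}

lemma one_mem : (1 : Matrix (Fin 4) (Fin 4) ℤ) ∈ Sp4Z := by simp [Sp4Z]

lemma mul_mem (hγ : γ ∈ Sp4Z) (hδ : δ ∈ Sp4Z) : γ * δ ∈ Sp4Z := by
  simp only [Sp4Z, Set.mem_ofPred_eq] at hγ hδ ⊢
  calc (γ * δ)ᵀ * J4 * (γ * δ) = δᵀ * (γᵀ * J4 * γ) * δ := by
        rw [transpose_mul]
        noncomm_ring
    _ = J4 := by rw [hγ, hδ]

lemma isUnit_det (hγ : γ ∈ Sp4Z) : IsUnit γ.det := by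
  have hdet := congrArg det (Set.mem_ofPred_eq.mp hγ)
  have hJ : J4.det = 1 := by decide
  rw [det_mul, det_mul, det_transpose, hJ, mul_one] at hdet
  exact .of_mul_eq_one _ hdet

lemma inv_mem (hγ : γ ∈ Sp4Z) : γ⁻¹ ∈ Sp4Z := by
  have hmul := mul_nonsing_inv γ (isUnit_det hγ)
  have hmul' : γ⁻¹ᵀ * γᵀ = 1 := by rw [← transpose_mul, hmul, transpose_one]
  simp only [Sp4Z, Set.mem_ofPred_eq] at hγ ⊢
  calc γ⁻¹ᵀ * J4 * γ⁻¹ = (γ⁻¹ᵀ * γᵀ) * J4 * (γ * γ⁻¹) := by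
        conv_lhs => rw [← hγ]
        noncomm_ring
    _ = J4 := by rw [hmul, hmul', Matrix.one_mul, Matrix.mul_one]

lemma blk_relation (hγ : γ ∈ Sp4Z) (r s : Fin 2) :
    (blk γ 0 r)ᵀ * blk γ 1 s - (blk γ 1 r)ᵀ * blk γ 0 s = blk J4 r s := by
  rw [← Set.mem_ofPred_eq.mp hγ]
  simp only [blk_mul, blk_transpose, blk_J4, of_apply, cons_val', cons_val_zero, cons_val_one,
    cons_val_fin_one, zero_smul, one_smul, neg_smul, Matrix.mul_zero, Matrix.mul_one,
    Matrix.mul_neg, add_zero, zero_add, Matrix.neg_mul]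
  abel

lemma bilinear_relation (hγ : γ ∈ Sp4Z) (t τ : Matrix (Fin 2) (Fin 2) ℂ) :
    (t * (blk γ 0 0)ᵀ + (blk γ 0 1)ᵀ) * (blk γ 1 0 * τ + blk γ 1 1) -
      (t * (blk γ 1 0)ᵀ + (blk γ 1 1)ᵀ) * (blk γ 0 0 * τ + blk γ 0 1) = t - τ := by
  calc _ = t * ((blk γ 0 0)ᵀ * blk γ 1 0 - (blk γ 1 0)ᵀ * blk γ 0 0) * τ +
      t * ((blk γ 0 0)ᵀ * blk γ 1 1 - (blk γ 1 0)ᵀ * blk γ 0 1) +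
      ((blk γ 0 1)ᵀ * blk γ 1 0 - (blk γ 1 1)ᵀ * blk γ 0 0) * τ +
      ((blk γ 0 1)ᵀ * blk γ 1 1 - (blk γ 1 1)ᵀ * blk γ 0 1) := by noncomm_ring
    _ = t - τ := by simp [blk_relation hγ, blk_J4, sub_eq_add_neg]

end Sp4Z

/-- The numerator `aτ + b` of the symplectic action. -/
def num (γ : Matrix (Fin 4) (Fin 4) ℤ) (τ : Fin 2 → Fin 2 → ℂ) : Matrix (Fin 2) (Fin 2) ℂ :=
  blk γ 0 0 * of τ + blk γ 0 1

section SymplecticAction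

open scoped ComplexOrder

variable {γ δ : Matrix (Fin 4) (Fin 4) ℤ} {τ τ' : Fin 2 → Fin 2 → ℂ}

lemma num_transpose_mul_den (hγ : γ ∈ Sp4Z) (hτ : (of τ).IsSymm) :
    (num γ τ)ᵀ * den γ τ = (den γ τ)ᵀ * num γ τ := by
  have h := Sp4Z.bilinear_relation hγ (of τ) (of τ)
  rw [sub_self, sub_eq_zero] at h
  simpa only [num, den, transpose_add, transpose_mul, hτ.eq] using h

lemma num_conjTranspose_mul_den_sub (hγ : γ ∈ Sp4Z) :
    (num γ τ)ᴴ * den γ τ - (den γ τ)ᴴ * num γ τ = (of τ)ᴴ - of τ := by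
  simpa only [num, den, conjTranspose_add, conjTranspose_mul, blk_conjTranspose] using
    Sp4Z.bilinear_relation hγ (of τ)ᴴ (of τ)

/- If `(cτ + d)v = 0`, then the positive definite form `i(τ* - τ)` vanishes at `v`. -/
theorem det_den_ne_zero (hγ : γ ∈ Sp4Z) (hτ : τ ∈ H2) : (den γ τ).det ≠ 0 := by
  intro hdet
  obtain ⟨v, hv, hker⟩ := exists_mulVec_eq_zero_iff.2 hdet
  refine ((mem_H2_iff_posDef.1 hτ).2.dotProduct_mulVec_pos hv).ne' ?_
  rw [← num_conjTranspose_mul_den_sub hγ, smul_mulVec, sub_mulVec, ← mulVec_mulVec,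
    ← mulVec_mulVec, hker, mulVec_zero, zero_sub, smul_neg, dotProduct_neg, dotProduct_smul,
    dotProduct_mulVec, ← star_mulVec, hker, star_zero, zero_dotProduct, smul_zero, neg_zero]

lemma isUnit_den (hγ : γ ∈ Sp4Z) (hτ : τ ∈ H2) : IsUnit (den γ τ) :=
  (isUnit_iff_isUnit_det _).2 (det_den_ne_zero hγ hτ).isUnit

lemma of_moeb (γ : Matrix (Fin 4) (Fin 4) ℤ) (τ : Fin 2 → Fin 2 → ℂ) :
    of (moeb γ τ) = num γ τ * (den γ τ)⁻¹ := rfl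

lemma moeb_eq_of_mul_den_eq_num (hdet : (den γ τ).det ≠ 0) (h : of τ' * den γ τ = num γ τ) :
    moeb γ τ = τ' := by
  have hof := of_moeb γ τ
  rwa [← h, mul_nonsing_inv_cancel_right _ _ hdet.isUnit] at hof

lemma of_moeb_mul_den (hγ : γ ∈ Sp4Z) (hτ : τ ∈ H2) : of (moeb γ τ) * den γ τ = num γ τ := by
  rw [of_moeb, nonsing_inv_mul_cancel_right _ _ (det_den_ne_zero hγ hτ).isUnit]

theorem moeb_mem_H2 (hγ : γ ∈ Sp4Z) (hτ : τ ∈ H2) : moeb γ τ ∈ H2 := by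
  have hden := isUnit_den hγ hτ
  have hnum := of_moeb_mul_den hγ hτ
  obtain ⟨hsymm, hpos⟩ := mem_H2_iff_posDef.1 hτ
  refine mem_H2_iff_posDef.2 ⟨?_, ?_⟩
  · have h := num_transpose_mul_den hγ hsymm
    rw [← hnum, transpose_mul, Matrix.mul_assoc] at h
    exact hden.mul_right_cancel (((isUnit_transpose _).2 hden).mul_left_cancel h)
  · rw [← hden.posDef_star_left_conjugate_iff]
    convert hpos using 1
    rw [← num_conjTranspose_mul_den_sub (τ := τ) hγ, ← hnum, conjTranspose_mul,
      star_eq_conjTranspose, Matrix.mul_smul, Matrix.smul_mul]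
    noncomm_ring

lemma den_mul (hδ : δ ∈ Sp4Z) (hτ : τ ∈ H2) : den (γ * δ) τ = den γ (moeb δ τ) * den δ τ := by
  rw [den.eq_1 γ, Matrix.add_mul, Matrix.mul_assoc, of_moeb_mul_den hδ hτ, den, den, num, blk_mul,
    blk_mul]
  noncomm_ring

lemma num_mul (hδ : δ ∈ Sp4Z) (hτ : τ ∈ H2) : num (γ * δ) τ = num γ (moeb δ τ) * den δ τ := by
  rw [num.eq_1 γ, Matrix.add_mul, Matrix.mul_assoc, of_moeb_mul_den hδ hτ, num, num, den, blk_mul,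
    blk_mul]
  noncomm_ring

theorem moeb_mul (hδ : δ ∈ Sp4Z) (hτ : τ ∈ H2) : moeb (γ * δ) τ = moeb γ (moeb δ τ) := by
  have h := of_moeb (γ * δ) τ
  rwa [num_mul hδ hτ, den_mul hδ hτ, Matrix.mul_inv_rev, Matrix.mul_assoc,
    mul_nonsing_inv_cancel_left _ _ (det_den_ne_zero hδ hτ).isUnit, ← of_moeb] at h

variable (τ)

lemma den_one : den 1 τ = 1 := by simp [den, blk_one]

lemma moeb_one : moeb 1 τ = τ :=
  moeb_eq_of_mul_den_eq_num (by simp [den_one]) (by simp [num, den_one, blk_one])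

lemma den_neg_one : den (-1) τ = -1 := by simp [den, blk_neg, blk_one]

lemma moeb_neg_one : moeb (-1) τ = τ :=
  moeb_eq_of_mul_den_eq_num (by simp [den_neg_one, det_fin_two])
    (by simp [num, den_neg_one, blk_neg, blk_one])

end SymplecticAction

section SymmetricPower

variable {j : ℕ}

/-- The binary form `∑ v_l x^(j-l) y^l` with coefficient vector `v`. In this model of `Sym^j(ℂ²)`
the matrix `m` acts by the substitution `(x, y) ↦ (x, y) m`. -/
def binaryForm (v : Fin (j + 1) → ℂ) (x y : ℂ) : ℂ :=
  ∑ l : Fin (j + 1), v l * x ^ (j - (l : ℕ)) * y ^ (l : ℕ)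

lemma sum_coeff_mul_pow_mul_pow_of_isHomogeneous {R : Type*} [CommSemiring R] {n : ℕ}
    {q : MvPolynomial (Fin 2) R} (hq : q.IsHomogeneous n) (x y : R) :
    ∑ i : Fin (n + 1), (MvPolynomial.aeval ![Polynomial.X, 1] q).coeff (i : ℕ) * x ^ (n - (i : ℕ)) *
      y ^ (i : ℕ) = MvPolynomial.eval ![y, x] q := by
  conv_rhs => rw [← Polynomial.homogenize_eq_of_isHomogeneous hq rfl]
  rw [Polynomial.homogenize, map_sum, Finset.Nat.sum_antidiagonal_eq_sum_range_succ_mk,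
    Finset.sum_range]
  refine Finset.sum_congr rfl fun i _ => ?_
  rw [MvPolynomial.eval_monomial, Finsupp.prod_fintype _ _ fun _ => pow_zero _]
  simp [mul_assoc, mul_comm]

theorem binaryForm_symAct (m : Matrix (Fin 2) (Fin 2) ℂ) (v : Fin (j + 1) → ℂ) (x y : ℂ) :
    binaryForm (symAct j m v) x y =
      binaryForm v (m 0 0 * x + m 1 0 * y) (m 0 1 * x + m 1 1 * y) := by
  simp only [binaryForm, symAct, Finset.sum_mul]
  rw [Finset.sum_comm]
  refine Finset.sum_congr rfl fun l _ => ?_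
  let linear (i : Fin 2) : MvPolynomial (Fin 2) ℂ :=
    .C (m 0 i) * .X 1 + .C (m 1 i) * .X 0
  have hlinear (i : Fin 2) : (linear i).IsHomogeneous 1 :=
    ((MvPolynomial.isHomogeneous_X _ _).C_mul _).add ((MvPolynomial.isHomogeneous_X _ _).C_mul _)
  have hhom : (linear 0 ^ (j - (l : ℕ)) * linear 1 ^ (l : ℕ)).IsHomogeneous j := by
    convert ((hlinear 0).pow (j - (l : ℕ))).mul ((hlinear 1).pow (l : ℕ)) using 1
    omega
  have hsum : ∑ i : Fin (j + 1), symCoeff j m l i * x ^ (j - (i : ℕ)) * y ^ (i : ℕ) =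
      (m 0 0 * x + m 1 0 * y) ^ (j - (l : ℕ)) * (m 0 1 * x + m 1 1 * y) ^ (l : ℕ) := by
    simpa [linear, symCoeff] using sum_coeff_mul_pow_mul_pow_of_isHomogeneous hhom x y
  rw [mul_assoc, ← hsum, Finset.mul_sum]
  exact Finset.sum_congr rfl fun i _ => by ring

theorem eq_of_binaryForm_eq {v w : Fin (j + 1) → ℂ}
    (h : ∀ y, binaryForm v 1 y = binaryForm w 1 y) : v = w := by
  let p (u : Fin (j + 1) → ℂ) : Polynomial ℂ :=
    ∑ l, Polynomial.C (u l) * Polynomial.X ^ (l : ℕ)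
  have hcoeff (u : Fin (j + 1) → ℂ) (l : Fin (j + 1)) : (p u).coeff l = u l := by
    simp [p, Polynomial.finsetSum_coeff, Polynomial.coeff_X_pow, Fin.val_inj]
  have hp : p v = p w := Polynomial.funext fun y => by
    simpa [p, binaryForm, Polynomial.eval_finsetSum] using h y
  funext l
  rw [← hcoeff v, hp, hcoeff]

lemma symAct_mul (m n : Matrix (Fin 2) (Fin 2) ℂ) (v : Fin (j + 1) → ℂ) :
    symAct j (m * n) v = symAct j m (symAct j n v) := by
  refine eq_of_binaryForm_eq fun y => ?_
  simp only [binaryForm_symAct, mul_apply, Fin.sum_univ_two]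
  congr 1 <;> ring

variable (v : Fin (j + 1) → ℂ)

lemma symAct_one : symAct j 1 v = v :=
  eq_of_binaryForm_eq fun y => by simp [binaryForm_symAct]

lemma symAct_neg_one : symAct j (-1) v = (-1 : ℂ) ^ j • v := by
  refine eq_of_binaryForm_eq fun y => ?_
  rw [binaryForm_symAct, binaryForm, binaryForm]
  refine Finset.sum_congr rfl fun l _ => ?_
  have hpow : (-1 : ℂ) ^ j = (-1) ^ (j - (l : ℕ)) * (-1) ^ (l : ℕ) := by
    rw [← pow_add, Nat.sub_add_cancel l.is_le]
  simp [hpow, neg_pow y, mul_assoc, mul_left_comm]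

variable {m : Matrix (Fin 2) (Fin 2) ℂ}

lemma symAct_symAct_inv (hm : m.det ≠ 0) : symAct j m (symAct j m⁻¹ v) = v := by
  rw [← symAct_mul, mul_nonsing_inv _ hm.isUnit, symAct_one]

lemma symAct_injective (hm : m.det ≠ 0) : Function.Injective (symAct j m) :=
  Function.LeftInverse.injective (g := symAct j m⁻¹) fun v => by
    rw [← symAct_mul, nonsing_inv_mul _ hm.isUnit, symAct_one]

lemma symAct_upper_unipotent (s : ℂ) (i : Fin (j + 1)) :
    symAct j !![1, s; 0, 1] v i =
      ∑ l : Fin (j + 1), ((l : ℕ).choose i : ℂ) * s ^ ((l : ℕ) - i) * v l := by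
  refine Finset.sum_congr rfl fun l _ => ?_
  congr 1
  simp [symCoeff, add_comm (Polynomial.C s), Polynomial.coeff_X_add_C_pow, mul_comm]

lemma symAct_swap (i : Fin (j + 1)) : symAct j !![0, 1; 1, 0] v i = v (Fin.rev i) := by
  have hcoeff (l : Fin (j + 1)) :
      symCoeff j !![0, 1; 1, 0] l i = if l = Fin.rev i then 1 else 0 := by
    have hiff : (i : ℕ) = j - (l : ℕ) ↔ l = Fin.rev i := by
      rw [Fin.ext_iff, Fin.val_rev]
      omega
    simp [symCoeff, Polynomial.coeff_X_pow, hiff]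
  simp [symAct, hcoeff]

lemma symAct_lower_triangular (z σ : ℂ) (i : Fin (j + 1)) :
    symAct j !![1, 0; z, σ] v i = ∑ l : Fin (j + 1), if (l : ℕ) ≤ i then
      ((j - (l : ℕ)).choose (i - l) : ℂ) * z ^ ((i : ℕ) - l) * σ ^ (l : ℕ) * v l else 0 := by
  refine Finset.sum_congr rfl fun l _ => ?_
  have hcoeff : symCoeff j !![1, 0; z, σ] l i =
      (Polynomial.C (σ ^ (l : ℕ)) * ((Polynomial.X + Polynomial.C (1 : ℂ)) ^ (j - (l : ℕ))).comp
        (Polynomial.C z * Polynomial.X) * Polynomial.X ^ (l : ℕ)).coeff i := by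
    simp [symCoeff, add_comm, mul_pow, mul_left_comm, mul_assoc]
  rw [hcoeff, Polynomial.coeff_mul_X_pow', Polynomial.coeff_C_mul, Polynomial.comp_C_mul_X_coeff,
    Polynomial.coeff_X_add_C_pow, one_pow]
  split_ifs <;> ring

end SymmetricPower

section Slash

variable {j : ℕ} {k : ℤ}

lemma wt_one (v : Fin (j + 1) → ℂ) : wt j k 1 v = v := by simp [wt, symAct_one]

lemma wt_injective {m : Matrix (Fin 2) (Fin 2) ℂ} (hm : m.det ≠ 0) :
    Function.Injective (wt j k m) :=
  (smul_right_injective _ (zpow_ne_zero k hm)).comp (symAct_injective hm)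

variable {γ δ : Matrix (Fin 4) (Fin 4) ℤ} {F : (Fin 2 → Fin 2 → ℂ) → Fin (j + 1) → ℂ}
  {τ : Fin 2 → Fin 2 → ℂ}

theorem slashS_moeb (hδ : δ ∈ Sp4Z) (hτ : τ ∈ H2) :
    slashS j k γ F (moeb δ τ) = wt j k (den δ τ) (slashS j k (γ * δ) F τ) := by
  have hdet := det_den_ne_zero hδ hτ
  rw [wt, slashS, slashS, moeb_mul hδ hτ, den_mul hδ hτ, symAct_smul, smul_smul,
    Matrix.mul_inv_rev, symAct_mul, symAct_symAct_inv _ hdet, det_mul, mul_zpow, mul_left_comm,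
    ← zpow_add₀ hdet, add_neg_cancel, zpow_zero, mul_one]

lemma slashS_one : slashS j k 1 F = F := by
  funext τ
  simp [slashS, den_one, moeb_one, symAct_one]

lemma wt_slashS (hγ : γ ∈ Sp4Z) (hτ : τ ∈ H2) :
    wt j k (den γ τ) (slashS j k γ F τ) = F (moeb γ τ) := by
  simpa only [slashS_one, Matrix.one_mul] using (slashS_moeb (γ := 1) hγ hτ).symm

/-- Reduction modulo `2`; its kernel on `Sp(4, ℤ)` is `Γ₂[2]`. -/
def modTwo (γ : Matrix (Fin 4) (Fin 4) ℤ) : Matrix (Fin 4) (Fin 4) (ZMod 2) :=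
  γ.map (Int.castRingHom (ZMod 2))

lemma modTwo_mul (γ δ : Matrix (Fin 4) (Fin 4) ℤ) : modTwo (γ * δ) = modTwo γ * modTwo δ :=
  Matrix.map_mul

lemma modTwo_one : modTwo 1 = 1 := Matrix.map_one _ (map_zero _) (map_one _)

lemma mem_Sp4Z2_iff : γ ∈ Sp4Z2 ↔ γ ∈ Sp4Z ∧ modTwo γ = 1 := by
  simp [Sp4Z2, modTwo, ← Matrix.ext_iff, one_apply]

variable (hF : ∀ γ ∈ Sp4Z2, ∀ τ ∈ H2, F (moeb γ τ) = wt j k (den γ τ) (F τ))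

include hF

lemma slashS_eq_self (hγ : γ ∈ Sp4Z2) (hτ : τ ∈ H2) : slashS j k γ F τ = F τ :=
  wt_injective (det_den_ne_zero hγ.1 hτ) (by rw [wt_slashS hγ.1 hτ, hF γ hγ τ hτ])

lemma slashS_eq_of_modTwo_eq (hγ : γ ∈ Sp4Z) (hδ : δ ∈ Sp4Z) (h : modTwo γ = modTwo δ)
    (hτ : τ ∈ H2) : slashS j k γ F τ = slashS j k δ F τ := by
  have hdet := Sp4Z.isUnit_det hδ
  have hε : γ * δ⁻¹ ∈ Sp4Z2 := mem_Sp4Z2_iff.2 ⟨Sp4Z.mul_mem hγ (Sp4Z.inv_mem hδ), by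
    rw [modTwo_mul, h, ← modTwo_mul, mul_nonsing_inv _ hdet, modTwo_one]⟩
  refine wt_injective (k := k) (det_den_ne_zero hδ hτ) ?_
  calc wt j k (den δ τ) (slashS j k γ F τ) = slashS j k (γ * δ⁻¹) F (moeb δ τ) := by
        rw [slashS_moeb hδ hτ, nonsing_inv_mul_cancel_right _ _ hdet]
    _ = F (moeb δ τ) := slashS_eq_self hF hε (moeb_mem_H2 hδ hτ)
    _ = wt j k (den δ τ) (slashS j k δ F τ) := (wt_slashS hδ hτ).symm

end Slash

section Differentiability

variable {E : Type*} [NormedAddCommGroup E] [NormedSpace ℂ E] {s : Set E}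

section Matrices

variable {n : Type*} [Fintype n] [DecidableEq n] {A : E → Matrix n n ℂ}

lemma differentiableOn_det (hA : ∀ i k, DifferentiableOn ℂ (fun e => A e i k) s) :
    DifferentiableOn ℂ (fun e => (A e).det) s := by
  simp only [det_apply']
  refine .fun_sum fun σ _ => .const_mul (fun e he => ?_) _
  exact (HasFDerivWithinAt.finsetProd fun i _ => (hA (σ i) i e he).hasFDerivWithinAt)
    |>.differentiableWithinAt

lemma differentiableOn_inv_apply (hA : ∀ i k, DifferentiableOn ℂ (fun e => A e i k) s)
    (hdet : ∀ e ∈ s, (A e).det ≠ 0) (i k : n) : DifferentiableOn ℂ (fun e => (A e)⁻¹ i k) s := by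
  have hinv (e : E) : (A e)⁻¹ i k = (A e).det⁻¹ * ((A e).updateRow k (Pi.single i 1)).det := by
    rw [Matrix.inv_def, Ring.inverse_eq_inv', Matrix.smul_apply, smul_eq_mul, adjugate_apply]
  simp only [hinv]
  refine ((differentiableOn_det hA).inv hdet).mul (differentiableOn_det fun r c => ?_)
  simp only [updateRow_apply]
  split_ifs
  exacts [differentiableOn_const _, hA r c]

end Matrices

section PolynomialCoefficients

variable {P Q : E → Polynomial ℂ}

lemma differentiableOn_coeff_mul (hP : ∀ n, DifferentiableOn ℂ (fun e => (P e).coeff n) s)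
    (hQ : ∀ n, DifferentiableOn ℂ (fun e => (Q e).coeff n) s) (n : ℕ) :
    DifferentiableOn ℂ (fun e => (P e * Q e).coeff n) s := by
  simp only [Polynomial.coeff_mul]
  exact .fun_sum fun q _ => (hP _).mul (hQ _)

lemma differentiableOn_coeff_pow (hP : ∀ n, DifferentiableOn ℂ (fun e => (P e).coeff n) s)
    (k n : ℕ) : DifferentiableOn ℂ (fun e => (P e ^ k).coeff n) s := by
  induction k generalizing n with
  | zero => simp only [pow_zero, differentiableOn_const]
  | succ k ih =>
    simp only [pow_succ]
    exact differentiableOn_coeff_mul ih hP n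

end PolynomialCoefficients

lemma differentiableOn_symCoeff {A : E → Matrix (Fin 2) (Fin 2) ℂ}
    (hA : ∀ i k, DifferentiableOn ℂ (fun e => A e i k) s) (j : ℕ) (l i : Fin (j + 1)) :
    DifferentiableOn ℂ (fun e => symCoeff j (A e) l i) s := by
  have hlinear (c : Fin 2) (n : ℕ) : DifferentiableOn ℂ (fun e =>
      (Polynomial.C (A e 0 c) + Polynomial.C (A e 1 c) * Polynomial.X).coeff n) s := by
    simp only [Polynomial.coeff_add, Polynomial.coeff_C_mul, Polynomial.coeff_C]
    refine .add ?_ ((hA 1 c).mul (differentiableOn_const _))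
    split_ifs
    exacts [hA 0 c, differentiableOn_const _]
  exact differentiableOn_coeff_mul (differentiableOn_coeff_pow (hlinear 0) _)
    (differentiableOn_coeff_pow (hlinear 1) _) _

lemma differentiable_mul_of_add (A B : Matrix (Fin 2) (Fin 2) ℂ) (i k : Fin 2) :
    Differentiable ℂ fun τ : Fin 2 → Fin 2 → ℂ => (A * of τ + B) i k := by
  simp only [Matrix.add_apply, mul_apply, of_apply]
  fun_prop

variable {j : ℕ} {γ : Matrix (Fin 4) (Fin 4) ℤ}

lemma differentiableOn_moeb (hγ : γ ∈ Sp4Z) : DifferentiableOn ℂ (moeb γ) H2 := by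
  refine differentiableOn_pi.2 fun i => differentiableOn_pi.2 fun k => ?_
  simp only [moeb, mul_apply (N := (den γ _)⁻¹)]
  exact .fun_sum fun r _ => (differentiable_mul_of_add _ _ i r).differentiableOn.mul
    (differentiableOn_inv_apply (fun _ _ => (differentiable_mul_of_add _ _ _ _).differentiableOn)
      (fun τ hτ => det_den_ne_zero hγ hτ) r k)

theorem differentiableOn_slashS {F : (Fin 2 → Fin 2 → ℂ) → Fin (j + 1) → ℂ}
    (hF : DifferentiableOn ℂ F H2) (k : ℤ) (hγ : γ ∈ Sp4Z) :
    DifferentiableOn ℂ (slashS j k γ F) H2 := by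
  have hden (r c : Fin 2) : DifferentiableOn ℂ (fun τ => den γ τ r c) H2 :=
    (differentiable_mul_of_add _ _ r c).differentiableOn
  have hne (τ) (hτ : τ ∈ H2) : (den γ τ).det ≠ 0 := det_den_ne_zero hγ hτ
  have hFmoeb := differentiableOn_pi.1 (hF.comp (differentiableOn_moeb hγ) fun τ => moeb_mem_H2 hγ)
  refine DifferentiableOn.smul (fun τ hτ => (differentiableOn_det hden τ hτ).zpow (.inl (hne τ hτ)))
    (differentiableOn_pi.2 fun i => ?_)
  exact .fun_sum fun l _ =>
    (differentiableOn_symCoeff (differentiableOn_inv_apply hden hne) j l i).mul (hFmoeb l)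

end Differentiability

/-- The point `(τ z; z σ)` of the Siegel upper half space, for `(τ, z, σ)` in `siegelDomain`. -/
def siegelPoint (p : ℂ × ℂ × ℂ) : Fin 2 → Fin 2 → ℂ := ![![p.1, p.2.1], ![p.2.1, p.2.2]]

lemma siegelPoint_mem_H2_iff {p : ℂ × ℂ × ℂ} : siegelPoint p ∈ H2 ↔ p ∈ siegelDomain := by
  simp [mem_H2_iff_mem_siegelDomain, siegelPoint]

lemma siegelPoint_eq_of_mem_H2 {τ : Fin 2 → Fin 2 → ℂ} (hτ : τ ∈ H2) :
    siegelPoint (τ 0 0, τ 0 1, τ 1 1) = τ := by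
  have hsymm := (mem_H2_iff_mem_siegelDomain.1 hτ).1
  ext i k
  fin_cases i <;> fin_cases k <;> simp [siegelPoint, hsymm]

lemma differentiable_siegelPoint : Differentiable ℂ siegelPoint := by
  refine differentiable_pi.2 fun i => differentiable_pi.2 fun k => ?_
  fin_cases i <;> fin_cases k <;> simp only [siegelPoint] <;> simp

section Generators

/-- The symplectic matrix acting by `(τ, z, σ) ↦ (τ + a, z + b, σ + c)`. -/
def translation (a b c : ℤ) : Matrix (Fin 4) (Fin 4) ℤ :=
  !![1, 0, a, b; 0, 1, b, c; 0, 0, 1, 0; 0, 0, 0, 1]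

/-- The symplectic matrix acting by `τ ↦ u τ uᵀ`, where `u = (1 0; s 1)`. -/
def shear (s : ℤ) : Matrix (Fin 4) (Fin 4) ℤ :=
  !![1, 0, 0, 0; s, 1, 0, 0; 0, 0, 1, -s; 0, 0, 0, 1]

/-- The symplectic matrix acting by `(τ, z, σ) ↦ (σ, z, τ)`. -/
def coordinateSwap : Matrix (Fin 4) (Fin 4) ℤ :=
  !![0, 1, 0, 0; 1, 0, 0, 0; 0, 0, 0, 1; 0, 0, 1, 0]

/-- The embedding of `(0 -1; 1 0) ∈ SL(2, ℤ)` acting on the last coordinate of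
`(τ, z, σ)`. -/
def partialInversion : Matrix (Fin 4) (Fin 4) ℤ :=
  !![1, 0, 0, 0; 0, 0, 0, -1; 0, 0, 1, 0; 0, 1, 0, 0]

variable (a b c s : ℤ) (τ z σ : ℂ)

lemma translation_mem : translation a b c ∈ Sp4Z := by
  ext i k
  fin_cases i <;> fin_cases k <;> simp [translation, J4, mul_apply, Fin.sum_univ_four]

lemma shear_mem : shear s ∈ Sp4Z := by
  ext i k
  fin_cases i <;> fin_cases k <;> simp [shear, J4, mul_apply, Fin.sum_univ_four]

lemma coordinateSwap_mem : coordinateSwap ∈ Sp4Z := by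
  rw [Sp4Z, Set.mem_ofPred_eq]
  decide

lemma partialInversion_mem : partialInversion ∈ Sp4Z := by
  rw [Sp4Z, Set.mem_ofPred_eq]
  decide

lemma modTwo_translation_two_mul : modTwo (translation (2 * a) (2 * b) (2 * c)) = 1 := by
  have htwo : (2 : ZMod 2) = 0 := rfl
  ext i k
  fin_cases i <;> fin_cases k <;> simp [modTwo, translation, htwo]

lemma den_translation : den (translation a b c) (siegelPoint (τ, z, σ)) = 1 := by
  ext i k
  fin_cases i <;> fin_cases k <;> simp [den, translation, blk, siegelPoint, mul_apply]

lemma den_shear : den (shear s) (siegelPoint (τ, z, σ)) = !![1, -(s : ℂ); 0, 1] := by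
  ext i k
  fin_cases i <;> fin_cases k <;> simp [den, shear, blk, siegelPoint, mul_apply]

lemma den_coordinateSwap : den coordinateSwap (siegelPoint (τ, z, σ)) = !![0, 1; 1, 0] := by
  ext i k
  fin_cases i <;> fin_cases k <;> simp [den, coordinateSwap, blk, siegelPoint, mul_apply]

lemma den_partialInversion : den partialInversion (siegelPoint (τ, z, σ)) = !![1, 0; z, σ] := by
  ext i k
  fin_cases i <;> fin_cases k <;> simp [den, partialInversion, blk, siegelPoint, mul_apply]

lemma moeb_translation :
    moeb (translation a b c) (siegelPoint (τ, z, σ)) = siegelPoint (τ + a, z + b, σ + c) := by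
  refine moeb_eq_of_mul_den_eq_num (by simp [den_translation]) ?_
  rw [den_translation]
  ext i k
  fin_cases i <;> fin_cases k <;> simp [num, translation, blk, siegelPoint, mul_apply]

lemma moeb_shear :
    moeb (shear s) (siegelPoint (τ, z, σ)) =
      siegelPoint (τ, z + s * τ, σ + 2 * s * z + s ^ 2 * τ) := by
  refine moeb_eq_of_mul_den_eq_num (by simp [den_shear]) ?_
  rw [den_shear]
  ext i k
  fin_cases i <;> fin_cases k <;> simp [num, shear, blk, siegelPoint, mul_apply] <;> ring

lemma moeb_coordinateSwap :
    moeb coordinateSwap (siegelPoint (τ, z, σ)) = siegelPoint (σ, z, τ) := by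
  refine moeb_eq_of_mul_den_eq_num (by simp [den_coordinateSwap]) ?_
  rw [den_coordinateSwap]
  ext i k
  fin_cases i <;> fin_cases k <;> simp [num, coordinateSwap, blk, siegelPoint, mul_apply]

lemma moeb_partialInversion {σ : ℂ} (hσ : σ ≠ 0) :
    moeb partialInversion (siegelPoint (τ, z, σ)) =
      siegelPoint (τ - z ^ 2 / σ, z / σ, -1 / σ) := by
  refine moeb_eq_of_mul_den_eq_num (by simp [den_partialInversion, hσ]) ?_
  rw [den_partialInversion]
  ext i k
  fin_cases i <;> fin_cases k <;>
    simp [num, partialInversion, blk, siegelPoint, mul_apply] <;> field_simp <;> ring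

end Generators

/-- A representative in `Sp(4, ℤ)` of a residue class modulo `2`. -/
def rep (x : modTwo '' Sp4Z) : Matrix (Fin 4) (Fin 4) ℤ := x.2.choose

lemma rep_mem (x : modTwo '' Sp4Z) : rep x ∈ Sp4Z := x.2.choose_spec.1

lemma modTwo_rep (x : modTwo '' Sp4Z) : modTwo (rep x) = x := x.2.choose_spec.2

/-- The `i`-th coordinate of `F|γ` for `γ` in the residue class `x` modulo `2`, as a function of
`(τ, z, σ)`; it is zero for `i > j`. -/
def slashComponent {j : ℕ} (k : ℤ) (F : (Fin 2 → Fin 2 → ℂ) → Fin (j + 1) → ℂ)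
    (x : modTwo '' Sp4Z) (i : ℕ) (p : ℂ × ℂ × ℂ) : ℂ :=
  if h : i < j + 1 then slashS j k (rep x) F (siegelPoint p) ⟨i, h⟩ else 0

section SlashComponent

variable {j : ℕ} {k : ℤ} {F : (Fin 2 → Fin 2 → ℂ) → Fin (j + 1) → ℂ}

lemma slashComponent_val (x : modTwo '' Sp4Z) (i : Fin (j + 1)) (p : ℂ × ℂ × ℂ) :
    slashComponent k F x i p = slashS j k (rep x) F (siegelPoint p) i :=
  dif_pos i.isLt

lemma slashComponent_of_lt (x : modTwo '' Sp4Z) {i : ℕ} (hi : j < i) (p : ℂ × ℂ × ℂ) :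
    slashComponent k F x i p = 0 :=
  dif_neg (by omega)

lemma differentiableOn_slashComponent (hF : DifferentiableOn ℂ F H2) (x : modTwo '' Sp4Z)
    (i : ℕ) : DifferentiableOn ℂ (slashComponent k F x i) siegelDomain := by
  rcases lt_or_ge j i with hi | hi
  · exact (differentiableOn_const 0).congr fun p _ => slashComponent_of_lt x hi p
  · lift i to Fin (j + 1) using Nat.lt_succ_of_le hi
    have hslash := (differentiableOn_slashS hF k (rep_mem x)).comp
      differentiable_siegelPoint.differentiableOn fun p hp => siegelPoint_mem_H2_iff.2 hp
    exact (differentiableOn_pi.1 hslash i).congr fun p _ => slashComponent_val x i p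

lemma tendsto_slashComponent_of_isSiegelCuspForm {Γ : Set (Matrix (Fin 4) (Fin 4) ℤ)}
    {χ : Matrix (Fin 4) (Fin 4) ℤ → ℂ} (hF : IsSiegelCuspForm j k Γ χ F) (x : modTwo '' Sp4Z)
    (i : ℕ) {τ : ℂ} (hτ : 0 < τ.im) :
    Tendsto (fun t : ℝ => slashComponent k F x i (τ, 0, t * I)) atTop (𝓝 0) := by
  rcases lt_or_ge j i with hi | hi
  · simp only [slashComponent_of_lt x hi, tendsto_const_nhds]
  · lift i to Fin (j + 1) using Nat.lt_succ_of_le hi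
    have hdiag (t : ℝ) : siegelPoint (τ, 0, t * I) = diagH τ (t * I) := by
      ext r s
      fin_cases r <;> fin_cases s <;> simp [diagH, siegelPoint]
    simpa only [slashComponent_val, hdiag, Pi.zero_apply] using
      tendsto_pi_nhds.1 (hF.2.2.1 (rep x) (rep_mem x) τ hτ) i

section Modular

variable (hF : ∀ γ ∈ Sp4Z2, ∀ τ ∈ H2, F (moeb γ τ) = wt j k (den γ τ) (F τ))

include hF

lemma slashComponent_one {x : modTwo '' Sp4Z} (hx : x.1 = 1) {τ : Fin 2 → Fin 2 → ℂ}
    (hτ : τ ∈ H2) (i : Fin (j + 1)) : slashComponent k F x i (τ 0 0, τ 0 1, τ 1 1) = F τ i := by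
  rw [slashComponent_val, siegelPoint_eq_of_mem_H2 hτ, slashS_eq_self hF _ hτ]
  exact mem_Sp4Z2_iff.2 ⟨rep_mem x, (modTwo_rep x).trans hx⟩

lemma exists_slashS_rep_moeb (x : modTwo '' Sp4Z) {δ : Matrix (Fin 4) (Fin 4) ℤ} (hδ : δ ∈ Sp4Z) :
    ∃ y : modTwo '' Sp4Z, y.1 = x.1 * modTwo δ ∧
      ∀ p ∈ siegelDomain, slashS j k (rep x) F (moeb δ (siegelPoint p)) =
        wt j k (den δ (siegelPoint p)) (slashS j k (rep y) F (siegelPoint p)) := by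
  have hmem := Sp4Z.mul_mem (rep_mem x) hδ
  have hmod : modTwo (rep x * δ) = x.1 * modTwo δ := by rw [modTwo_mul, modTwo_rep]
  refine ⟨⟨_, Set.mem_image_of_mem modTwo hmem⟩, hmod, fun p hp => ?_⟩
  have hp' := siegelPoint_mem_H2_iff.2 hp
  rw [slashS_moeb hδ hp', slashS_eq_of_modTwo_eq hF hmem (rep_mem _) _ hp']
  exact (modTwo_rep ⟨_, Set.mem_image_of_mem modTwo hmem⟩).symm

lemma exists_slashComponent_translate (x : modTwo '' Sp4Z) (a b c : ℤ) :
    ∃ y : modTwo '' Sp4Z, y.1 = x.1 * modTwo (translation a b c) ∧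
      ∀ i τ z σ, (τ, z, σ) ∈ siegelDomain →
        slashComponent k F y i (τ, z, σ) = slashComponent k F x i (τ + a, z + b, σ + c) := by
  obtain ⟨y, hyx, hy⟩ := exists_slashS_rep_moeb hF x (translation_mem a b c)
  refine ⟨y, hyx, fun i τ z σ hp => ?_⟩
  rcases lt_or_ge j i with hi | hi
  · rw [slashComponent_of_lt _ hi, slashComponent_of_lt _ hi]
  · lift i to Fin (j + 1) using Nat.lt_succ_of_le hi
    rw [slashComponent_val, slashComponent_val, ← moeb_translation, hy _ hp, den_translation,
      wt_one]

lemma slashComponent_periodic (x : modTwo '' Sp4Z) (i : ℕ) {τ z σ : ℂ}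
    (hp : (τ, z, σ) ∈ siegelDomain) (a b c : ℤ) :
    slashComponent k F x i (τ + 2 * a, z + 2 * b, σ + 2 * c) =
      slashComponent k F x i (τ, z, σ) := by
  obtain ⟨y, hyx, hy⟩ := exists_slashComponent_translate hF x (2 * a) (2 * b) (2 * c)
  obtain rfl : y = x := Subtype.ext (by rw [hyx, modTwo_translation_two_mul, mul_one])
  simpa using (hy i τ z σ hp).symm

lemma exists_slashComponent_shift (x : modTwo '' Sp4Z) (s : ℤ) :
    ∃ y : modTwo '' Sp4Z, ∀ i τ z σ, (τ, z, σ) ∈ siegelDomain →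
      slashComponent k F y i (τ, z, σ) = ∑ l ∈ Finset.range (j + 1),
        (l.choose i : ℂ) * (s : ℂ) ^ (l - i) *
          slashComponent k F x l (τ, z + s * τ, σ + 2 * s * z + s ^ 2 * τ) := by
  obtain ⟨y, -, hy⟩ := exists_slashS_rep_moeb hF x (shear_mem s)
  refine ⟨y, fun i τ z σ hp => ?_⟩
  rcases lt_or_ge j i with hi | hi
  · rw [slashComponent_of_lt _ hi, Finset.sum_eq_zero fun l hl => ?_]
    rw [Nat.choose_eq_zero_of_lt ((Finset.mem_range_succ_iff.1 hl).trans_lt hi), Nat.cast_zero,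
      zero_mul, zero_mul]
  · lift i to Fin (j + 1) using Nat.lt_succ_of_le hi
    have hunipotent : !![1, (s : ℂ); 0, 1] * !![1, -(s : ℂ); 0, 1] = 1 := by
      ext r c
      fin_cases r <;> fin_cases c <;> simp
    have hshear := congrArg (symAct j !![1, (s : ℂ); 0, 1]) (hy _ hp)
    rw [moeb_shear, den_shear, wt, det_fin_two_of, mul_one, mul_zero, sub_zero, _root_.one_zpow,
      one_smul, ← symAct_mul, hunipotent, symAct_one] at hshear
    rw [slashComponent_val, ← hshear, symAct_upper_unipotent, Finset.sum_range]
    simp only [slashComponent_val]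

lemma exists_slashComponent_swap (hk : Even k) (x : modTwo '' Sp4Z) :
    ∃ y : modTwo '' Sp4Z, ∀ i ≤ j, ∀ τ z σ, (τ, z, σ) ∈ siegelDomain →
      slashComponent k F x i (τ, z, σ) = slashComponent k F y (j - i) (σ, z, τ) := by
  obtain ⟨y, -, hy⟩ := exists_slashS_rep_moeb hF x coordinateSwap_mem
  refine ⟨y, fun i hi τ z σ hp => ?_⟩
  lift i to Fin (j + 1) using Nat.lt_succ_of_le hi
  have hrev : j - (i : ℕ) = Fin.rev i := by
    rw [Fin.val_rev]
    omega
  rw [hrev, slashComponent_val, slashComponent_val, ← moeb_coordinateSwap,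
    hy _ (swap_mem_siegelDomain hp), den_coordinateSwap, wt, Pi.smul_apply, symAct_swap,
    det_fin_two_of]
  simp [hk.neg_one_zpow]

lemma exists_slashComponent_invert {w : ℕ} (hk : k = w) (x : modTwo '' Sp4Z) :
    ∃ y : modTwo '' Sp4Z, ∀ i ≤ j, ∀ τ z σ, (τ, z, σ) ∈ siegelDomain →
      slashComponent k F x i (τ - z ^ 2 / σ, z / σ, -1 / σ) =
        σ ^ w * ∑ l ∈ Finset.range (i + 1),
          ((j - l).choose (i - l) : ℂ) * z ^ (i - l) * σ ^ l *
            slashComponent k F y l (τ, z, σ) := by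
  obtain ⟨y, -, hy⟩ := exists_slashS_rep_moeb hF x partialInversion_mem
  refine ⟨y, fun i hi τ z σ hp => ?_⟩
  have hσ : σ ≠ 0 := by
    rintro rfl
    simpa using im_snd_snd_pos hp
  have hrange : Finset.range (i + 1) = {l ∈ Finset.range (j + 1) | l ≤ i} := by
    ext l
    simp only [Finset.mem_range, Finset.mem_filter]
    omega
  lift i to Fin (j + 1) using Nat.lt_succ_of_le hi
  rw [slashComponent_val, ← moeb_partialInversion _ _ hσ, hy _ hp, den_partialInversion, wt,
    Pi.smul_apply, symAct_lower_triangular, det_fin_two_of, one_mul, zero_mul, sub_zero, hk,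
    zpow_natCast, smul_eq_mul, hrange, Finset.sum_filter, Finset.sum_range]
  simp only [slashComponent_val]

end Modular

end SlashComponent

section Vanishing

variable {j : ℕ} {k : ℤ} {F : (Fin 2 → Fin 2 → ℂ) → Fin (j + 1) → ℂ}

lemma IsSiegelCuspForm.moeb_eq (hF : IsSiegelCuspForm j k Sp4Z2 (fun _ => 1) F) :
    ∀ γ ∈ Sp4Z2, ∀ τ ∈ H2, F (moeb γ τ) = wt j k (den γ τ) (F τ) :=
  fun γ hγ τ hτ => (hF.2.1 γ hγ τ hτ).trans (one_smul _ _)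

theorem isCuspidalFamily_slashComponent {w : ℕ} (hw : Even w)
    (hF : IsSiegelCuspForm j w Sp4Z2 (fun _ => 1) F) :
    IsCuspidalFamily w j (slashComponent w F) where
  zero x _ p hi := slashComponent_of_lt x hi p
  differentiableOn := differentiableOn_slashComponent hF.1
  periodic x i _ _ _ hp := slashComponent_periodic hF.moeb_eq x i hp
  translate x a b c := (exists_slashComponent_translate hF.moeb_eq x a b c).imp fun _ h => h.2
  shift := exists_slashComponent_shift hF.moeb_eq
  swap := exists_slashComponent_swap hF.moeb_eq (mod_cast hw)
  invert := exists_slashComponent_invert hF.moeb_eq rfl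
  cusp x i _ := tendsto_slashComponent_of_isSiegelCuspForm hF x i

theorem siegelCusp_eq_bot_of_forall {Γ : Set (Matrix (Fin 4) (Fin 4) ℤ)}
    {χ : Matrix (Fin 4) (Fin 4) ℤ → ℂ}
    (h : ∀ F, IsSiegelCuspForm j k Γ χ F → ∀ τ ∈ H2, F τ = 0) : SiegelCusp j k Γ χ = ⊥ := by
  refine (Submodule.eq_bot_iff _).2 fun F hF => funext fun τ => ?_
  by_cases hτ : τ ∈ H2
  exacts [h F hF τ hτ, hF.2.2.2 τ hτ]

theorem siegelCusp_Sp4Z2_eq_bot_of_odd (hj : Odd j) : SiegelCusp j k Sp4Z2 (fun _ => 1) = ⊥ := by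
  refine siegelCusp_eq_bot_of_forall fun F hF τ hτ => ?_
  have hmem : -1 ∈ Sp4Z2 := mem_Sp4Z2_iff.2 ⟨by simp [Sp4Z], by decide⟩
  have hdet : (-1 : Matrix (Fin 2) (Fin 2) ℂ).det = 1 := by simp [det_fin_two]
  have hneg := hF.moeb_eq (-1) hmem τ hτ
  rw [moeb_neg_one, den_neg_one, wt, hdet, _root_.one_zpow, one_smul, symAct_neg_one,
    hj.neg_one_pow, neg_one_smul] at hneg
  exact self_eq_neg.1 hneg

theorem siegelCusp_two_Sp4Z2_eq_bot_of_le_ten (hj : j ≤ 10) :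
    SiegelCusp j 2 Sp4Z2 (fun _ => 1) = ⊥ := by
  refine siegelCusp_eq_bot_of_forall fun F hF τ hτ => funext fun i => ?_
  rw [← slashComponent_one hF.moeb_eq (x := ⟨1, 1, Sp4Z.one_mem, modTwo_one⟩) rfl hτ i]
  exact (isCuspidalFamily_slashComponent (w := 2) even_two hF).eq_zero_of_le_ten hj _ i
    (mem_H2_iff_mem_siegelDomain.1 hτ).2

end Vanishing

/-- For every integer `j` with `0 ≤ j < 12`, the space `S_{j,2}(Γ₂[2])` of Siegel cusp forms
of degree 2 and weight `(j,2)` on the principal congruence subgroup of level 2 is zero. -/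
theorem vanishing_Sj2_level_two (j : ℕ) (hj : j < 12) :
    SiegelCusp j 2 Sp4Z2 (fun _ => 1) = ⊥ := by
  obtain rfl | hj : j = 11 ∨ j ≤ 10 := by omega
  · exact siegelCusp_Sp4Z2_eq_bot_of_odd (by decide)
  · exact siegelCusp_two_Sp4Z2_eq_bot_of_le_ten hj
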